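/- Suppose μ is a T-ergodic Borel probability measure on Ω that has a local product structure and full support (supp μ = Ω), and suppose T has a fixed point in Ω. Then {k ∈ (0,π) : k ≠ π/2 and L(A^{(k)}, μ) = 0} = ⋂_{p ∈ Per(T)} {k ∈ (0,π) : k ≠ π/2 and cos k ∈ σ(H̃_p)}, where Per(T) denotes the set of all T-periodic points of Ω. -/

import Mathlib

open Real MeasureTheory Filter Topology Matrix Set

noncomputable section

/-- The left shift on bi-infinite sequences: `(Tω)_n = ω_{n+1}`. -/
def shift (ω : ℤ → ℕ) : ℤ → ℕ := fun n => ω (n + 1)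

/-- The subshift of finite type: sequences with letters in `{1,…,ℓ}` and all
transitions `(ω_n, ω_{n+1})` in the allowed set `W`. -/
def SFT (ℓ : ℕ) (W : Set (ℕ × ℕ)) : Set (ℤ → ℕ) :=
  {ω | (∀ n, 1 ≤ ω n ∧ ω n ≤ ℓ) ∧ ∀ n, (ω n, ω (n + 1)) ∈ W}

/-- The cocycle matrix
`A^{(k)}(ω) = √(ω₀/ω₋₁)·[[((ω₀+ω₋₁)/ω₀)·cos k, −ω₋₁/ω₀],[1, 0]]`. -/
def Acoc (k : ℝ) (ω : ℤ → ℕ) : Matrix (Fin 2) (Fin 2) ℝ :=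
  Real.sqrt ((ω 0 : ℝ) / (ω (-1) : ℝ)) •
    !![((ω 0 : ℝ) + (ω (-1) : ℝ)) / (ω 0 : ℝ) * Real.cos k, -((ω (-1) : ℝ) / (ω 0 : ℝ));
       (1 : ℝ), 0]

/-- The iterated cocycle `A_n(ω) = A^{(k)}(T^{n−1}ω)⋯A^{(k)}(ω)` for `n ≥ 0`,
with `A_0(ω) = Id`. -/
def AIter (k : ℝ) (ω : ℤ → ℕ) : ℕ → Matrix (Fin 2) (Fin 2) ℝ
  | 0 => 1
  | n + 1 => Acoc k (shift^[n] ω) * AIter k ω n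

end

/-- We endow 2×2 real matrices with the `L²` operator norm. -/
noncomputable instance : NormedAddCommGroup (Matrix (Fin 2) (Fin 2) ℝ) :=
  Matrix.instL2OpNormedAddCommGroup

/-- Projection onto nonnegative coordinates: `π₊ω = (ω_n)_{n≥0}`. -/
def projPlus (ω : ℤ → ℕ) : ℕ → ℕ := fun n => ω (n : ℤ)

/-- Projection onto nonpositive coordinates: `π₋ω = (ω_{−n})_{n≥0}`. -/
def projMinus (ω : ℤ → ℕ) : ℕ → ℕ := fun n => ω (-(n : ℤ))

/-- The map `P(ω) = (π₋ω, π₊ω)`; on each cylinder `[0;j]` this is the map `P_j`. -/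
def pairProj (ω : ℤ → ℕ) : (ℕ → ℕ) × (ℕ → ℕ) := (projMinus ω, projPlus ω)

/-- `μ` has a local product structure: there is a positive function `ψ` on `Ω`
(written as `ψ ∘ P` for a function on `Ω₋ × Ω₊`) such that for each letter `j`,
`ψ∘P_j⁻¹` is integrable with respect to `μ_j^− × μ_j^+` and
`(P_j)_* μ_j = (ψ∘P_j⁻¹) d(μ_j^− × μ_j^+)`. -/
def LocalProductStructure (ℓ : ℕ) (W : Set (ℕ × ℕ)) (μ : Measure (ℤ → ℕ)) : Prop :=
  ∃ ψ : (ℕ → ℕ) × (ℕ → ℕ) → ℝ,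
    (∀ ω ∈ SFT ℓ W, 0 < ψ (pairProj ω)) ∧
    ∀ j : ℕ, 1 ≤ j → j ≤ ℓ →
      MeasureTheory.Integrable ψ
        (((Measure.map projMinus μ).restrict {a | a 0 = j}).prod
          ((Measure.map projPlus μ).restrict {a | a 0 = j})) ∧
      Measure.map pairProj (μ.restrict {ω | ω 0 = j}) =
        (((Measure.map projMinus μ).restrict {a | a 0 = j}).prod
          ((Measure.map projPlus μ).restrict {a | a 0 = j})).withDensity
          (fun x => ENNReal.ofReal (ψ x))

/-- `supp μ = Ω`: every open set meeting `Ω` has positive measure. -/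
def FullSupport (ℓ : ℕ) (W : Set (ℕ × ℕ)) (μ : Measure (ℤ → ℕ)) : Prop :=
  ∀ U : Set (ℤ → ℕ), IsOpen U → (U ∩ SFT ℓ W).Nonempty → 0 < μ U

/-- `ℓ²(ℤ)` over `ℝ`. -/
abbrev L2Z : Type := lp (fun _ : ℤ => ℝ) 2

/-- `H` is the periodic Jacobi-type operator `H̃_p` on `ℓ²(ℤ)`:
`(H̃_p u)(n) = (p_n/(p_n+p_{n−1}))·u(n+1) + (p_{n−1}/(p_n+p_{n−1}))·u(n−1)`. -/
def IsJacobiOp (p : ℤ → ℕ) (H : L2Z →L[ℝ] L2Z) : Prop :=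
  ∀ u : L2Z, ∀ n : ℤ,
    (H u : ∀ _ : ℤ, ℝ) n =
      ((p n : ℝ) / ((p n : ℝ) + (p (n - 1) : ℝ))) * (u : ∀ _ : ℤ, ℝ) (n + 1) +
      ((p (n - 1) : ℝ) / ((p n : ℝ) + (p (n - 1) : ℝ))) * (u : ∀ _ : ℤ, ℝ) (n - 1)

section EntropyMonotonicity

open scoped ENNReal

variable {X : Type*} {𝒢 m0 : MeasurableSpace X} {M : Measure X}

/-- A conditional density of a function `0 ≤ g ≤ 1` with respect to a sub-σ-algebra. -/
lemma exists_conditional_density (hle : 𝒢 ≤ m0) [SigmaFinite (M.trim hle)] {g : X → ℝ}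
    (hg : Measurable g) (hg1 : ∀ x, g x ≤ 1) :
    ∃ r : X → ℝ, Measurable[𝒢] r ∧ (∀ x, 0 ≤ r x) ∧ (∀ x, r x ≤ 1) ∧
      ∀ h : X → ℝ≥0∞, Measurable[𝒢] h →
        ∫⁻ x, ENNReal.ofReal (r x) * h x ∂M = ∫⁻ x, ENNReal.ofReal (g x) * h x ∂M := by
  set G : X → ℝ≥0∞ := fun x => ENNReal.ofReal (g x) with hG
  have hGm : Measurable G := hg.ennreal_ofReal
  set R := M⁻[G|𝒢] with hR
  have hRm : Measurable[𝒢] R := measurable_condLExp 𝒢 M G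
  have hR1 : ∀ᵐ x ∂M, R x ≤ 1 := by
    have h1 : G ≤ᵐ[M] (1 : X → ℝ≥0∞) := by
      refine Eventually.of_forall fun x => ?_
      simpa [hG] using hg1 x
    have h2 := condLExp_mono (mΩ := 𝒢) h1
    rw [condLExp_one (hm := hle)] at h2
    exact h2
  refine ⟨fun x => (min (R x) 1).toReal, ?_, fun x => ENNReal.toReal_nonneg, fun x => ?_, ?_⟩
  · exact (hRm.min measurable_const).ennreal_toReal
  · exact ENNReal.toReal_le_of_le_ofReal zero_le_one (by simp)
  · intro h hh
    have e1 : ∫⁻ x, ENNReal.ofReal (min (R x) 1).toReal * h x ∂M = ∫⁻ x, R x * h x ∂M := by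
      refine lintegral_congr_ae ?_
      filter_upwards [hR1] with x hx
      rw [min_eq_left hx, ENNReal.ofReal_toReal (ne_top_of_le_ne_top ENNReal.one_ne_top hx)]
    have e2 : (M.trim hle).withDensity R = (M.withDensity G).trim hle := by
      refine @Measure.ext _ 𝒢 _ _ fun s hs => ?_
      rw [withDensity_apply _ hs, trim_measurableSet_eq hle hs, withDensity_apply _ (hle s hs),
        setLIntegral_condLExp_trim (hm := hle) M G hs]
    have e0 : ∫⁻ x, R x * h x ∂(M.trim hle) = ∫⁻ x, R x * h x ∂M :=
      lintegral_trim hle (hRm.mul hh)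
    rw [e1, ← e0]
    have e3 := @lintegral_withDensity_eq_lintegral_mul _ 𝒢 (M.trim hle) R hRm h hh
    have e4 : ∫⁻ x, h x ∂(M.withDensity G) = ∫⁻ x, G x * h x ∂M :=
      lintegral_withDensity_eq_lintegral_mul M hGm (hh.mono hle le_rfl)
    rw [← e4, ← lintegral_trim hle hh, ← e2, e3]
    rfl

/-- The pointwise inequality behind the comparison of relative entropy and Hellinger distance. -/
lemma negMulLog_add_hellinger_le {s r : ℝ} (hs : 0 ≤ s) (hr : 0 < r) :
    Real.negMulLog s + s + (√s - √r) ^ 2 ≤ s * (-Real.log r) + r := by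
  have h1 : (√s - √r) ^ 2 = s + r - 2 * (√s * √r) := by
    have := Real.sq_sqrt hs
    have := Real.sq_sqrt hr.le
    nlinarith
  rcases hs.eq_or_lt with rfl | hs
  · simp [hr.le, Real.sq_sqrt]
  · have h2 : Real.log (√r / √s) ≤ √r / √s - 1 :=
      Real.log_le_sub_one_of_pos (div_pos (Real.sqrt_pos.2 hr) (Real.sqrt_pos.2 hs))
    rw [Real.log_div (Real.sqrt_pos.2 hr).ne' (Real.sqrt_pos.2 hs).ne', Real.log_sqrt hr.le,
      Real.log_sqrt hs.le] at h2
    have h3 : s * (√r / √s) = √s * √r := by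
      rw [← mul_div_assoc, mul_comm s, mul_div_assoc, Real.div_sqrt, mul_comm]
    have h4 := mul_le_mul_of_nonneg_left h2 (by linarith : (0:ℝ) ≤ 2 * s)
    have h5 : 2 * s * (√r / √s - 1) = 2 * (√s * √r) - 2 * s := by rw [← h3]; ring
    rw [h1, Real.negMulLog]
    nlinarith

lemma negMulLog_add_le {s r : ℝ} (hs : 0 ≤ s) (hr : 0 < r) :
    Real.negMulLog s ≤ s * (-Real.log r) + r := by
  nlinarith [negMulLog_add_hellinger_le hs hr, sq_nonneg (√s - √r)]

/-- Conditioning increases entropy, with a gain controlling the Hellinger distance. -/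
lemma lintegral_negMulLog_add_hellinger_le (hle : 𝒢 ≤ m0) {s r : X → ℝ} (hs : Measurable s)
    (hr : Measurable[𝒢] r) (hs0 : ∀ x, 0 ≤ s x) (hs1 : ∀ x, s x ≤ 1) (hr0 : ∀ x, 0 ≤ r x)
    (hr1 : ∀ x, r x ≤ 1) (hfin : ∫⁻ x, ENNReal.ofReal (s x) ∂M ≠ ∞)
    (hsr : ∀ h : X → ℝ≥0∞, Measurable[𝒢] h →
        ∫⁻ x, ENNReal.ofReal (s x) * h x ∂M = ∫⁻ x, ENNReal.ofReal (r x) * h x ∂M) :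
    ∫⁻ x, ENNReal.ofReal (Real.negMulLog (s x)) ∂M
        + ∫⁻ x, ENNReal.ofReal ((√(s x) - √(r x)) ^ 2) ∂M
      ≤ ∫⁻ x, ENNReal.ofReal (Real.negMulLog (r x)) ∂M := by
  have hr' : Measurable r := hr.mono hle le_rfl
  have hmass : ∫⁻ x, ENNReal.ofReal (s x) ∂M = ∫⁻ x, ENNReal.ofReal (r x) ∂M := by
    simpa using hsr (fun _ => 1) (@measurable_const _ _ _ 𝒢 _)
  have hzero : ∀ᵐ x ∂M, r x = 0 → s x = 0 := by
    have hset : MeasurableSet[𝒢] {x | r x = 0} := hr (measurableSet_singleton 0)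
    have h1 := hsr ({x | r x = 0}.indicator 1)
      ((@measurable_one _ _ _ 𝒢 _).indicator hset)
    have h2 : ∀ x, ENNReal.ofReal (r x) * ({x | r x = 0}.indicator 1 : X → ℝ≥0∞) x = 0 := by
      intro x
      by_cases hx : r x = 0 <;> simp [hx]
    simp only [h2, lintegral_zero] at h1
    have hm : Measurable fun x => ENNReal.ofReal (s x) *
        ({x | r x = 0}.indicator 1 : X → ℝ≥0∞) x :=
      hs.ennreal_ofReal.mul (measurable_one.indicator (hle _ hset))
    rw [lintegral_eq_zero_iff hm] at h1
    filter_upwards [h1] with x hx hrx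
    have : s x ≤ 0 := by simpa [hrx] using hx
    exact le_antisymm this (hs0 x)
  have hlog : Measurable[𝒢] fun x => ENNReal.ofReal (-Real.log (r x)) :=
    @Measurable.ennreal_ofReal _ 𝒢 _
      (@Measurable.neg _ _ _ _ _ 𝒢 _ (@Measurable.log _ 𝒢 _ hr))
  have key := hsr _ hlog
  have e1 : ∫⁻ x, ENNReal.ofReal (r x) * ENNReal.ofReal (-Real.log (r x)) ∂M
      = ∫⁻ x, ENNReal.ofReal (Real.negMulLog (r x)) ∂M := by
    refine lintegral_congr fun x => ?_
    rw [← ENNReal.ofReal_mul (hr0 x), Real.negMulLog]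
    congr 1; ring
  rw [e1] at key
  have e2 : ∫⁻ x, (ENNReal.ofReal (Real.negMulLog (s x)) + ENNReal.ofReal ((√(s x) - √(r x)) ^ 2)
        + ENNReal.ofReal (s x)) ∂M
      ≤ ∫⁻ x, (ENNReal.ofReal (s x) * ENNReal.ofReal (-Real.log (r x)) + ENNReal.ofReal (r x)) ∂M := by
    refine lintegral_mono_ae ?_
    filter_upwards [hzero] with x hx
    have hn : 0 ≤ Real.negMulLog (s x) := Real.negMulLog_nonneg (hs0 x) (hs1 x)
    rw [← ENNReal.ofReal_mul (hs0 x), ← ENNReal.ofReal_add hn (sq_nonneg _),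
      ← ENNReal.ofReal_add (by positivity) (hs0 x), ← ENNReal.ofReal_add _ (hr0 x)]
    · refine ENNReal.ofReal_le_ofReal ?_
      rcases (hr0 x).eq_or_lt with h0 | h0
      · simp [hx h0.symm, ← h0]
      · linarith [negMulLog_add_hellinger_le (hs0 x) h0]
    · exact mul_nonneg (hs0 x) (neg_nonneg.2 (Real.log_nonpos (hr0 x) (hr1 x)))
  have hm1 : Measurable fun x => ENNReal.ofReal (Real.negMulLog (s x)) :=
    (Real.continuous_negMulLog.measurable.comp hs).ennreal_ofReal
  have hm2 : Measurable fun x => ENNReal.ofReal ((√(s x) - √(r x)) ^ 2) :=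
    ((hs.sqrt.sub hr'.sqrt).pow_const 2).ennreal_ofReal
  rw [lintegral_add_right _ hs.ennreal_ofReal, lintegral_add_left hm1,
    lintegral_add_right _ hr'.ennreal_ofReal, key, hmass] at e2
  exact (ENNReal.add_le_add_iff_right (hmass ▸ hfin)).1 e2

/-- The entropy of a conditional density is bounded by its cross entropy. -/
lemma lintegral_negMulLog_le (hle : 𝒢 ≤ m0) {g r q : X → ℝ}
    (hr0 : ∀ x, 0 ≤ r x) (hq : Measurable[𝒢] q)
    (hq0 : ∀ x, 0 < q x) (hq1 : ∀ x, q x ≤ 1)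
    (hgr : ∀ h : X → ℝ≥0∞, Measurable[𝒢] h →
        ∫⁻ x, ENNReal.ofReal (r x) * h x ∂M = ∫⁻ x, ENNReal.ofReal (g x) * h x ∂M) :
    ∫⁻ x, ENNReal.ofReal (Real.negMulLog (r x)) ∂M
      ≤ ∫⁻ x, ENNReal.ofReal (g x) * ENNReal.ofReal (-Real.log (q x)) ∂M
        + ∫⁻ x, ENNReal.ofReal (q x) ∂M := by
  have hlog : Measurable[𝒢] fun x => ENNReal.ofReal (-Real.log (q x)) :=
    @Measurable.ennreal_ofReal _ 𝒢 _
      (@Measurable.neg _ _ _ _ _ 𝒢 _ (@Measurable.log _ 𝒢 _ hq))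
  rw [← hgr _ hlog, ← lintegral_add_right _ (hq.mono hle le_rfl).ennreal_ofReal]
  refine lintegral_mono fun x => ?_
  rw [← ENNReal.ofReal_mul (hr0 x), ← ENNReal.ofReal_add _ (hq0 x).le]
  · exact ENNReal.ofReal_le_ofReal (negMulLog_add_le (hr0 x) (hq0 x))
  · exact mul_nonneg (hr0 x) (neg_nonneg.2 (Real.log_nonpos (hq0 x).le (hq1 x)))

/-- Hellinger distance controls the `L¹` distance of densities of mass one. -/
lemma integral_abs_sub_le_of_hellinger {s r : X → ℝ} (hs : Measurable s) (hr : Measurable r)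
    (hs0 : ∀ x, 0 ≤ s x) (hr0 : ∀ x, 0 ≤ r x)
    (hsm : ∫⁻ x, ENNReal.ofReal (s x) ∂M = 1) (hrm : ∫⁻ x, ENNReal.ofReal (r x) ∂M = 1)
    {d : ℝ} (hd : 0 ≤ d)
    (hh : ∫⁻ x, ENNReal.ofReal ((√(s x) - √(r x)) ^ 2) ∂M ≤ ENNReal.ofReal (d ^ 2)) :
    ∫⁻ x, ENNReal.ofReal |s x - r x| ∂M ≤ ENNReal.ofReal (2 * d) := by
  set u : X → ℝ≥0∞ := fun x => ENNReal.ofReal |√(s x) - √(r x)|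
  set v : X → ℝ≥0∞ := fun x => ENNReal.ofReal (√(s x) + √(r x))
  have hu : Measurable u := ((hs.sqrt.sub hr.sqrt).abs).ennreal_ofReal
  have hv : Measurable v := (hs.sqrt.add hr.sqrt).ennreal_ofReal
  have huv : ∀ x, ENNReal.ofReal |s x - r x| = (u * v) x := by
    intro x
    simp only [u, v, Pi.mul_apply]
    have h1 := Real.sq_sqrt (hs0 x)
    have h2 := Real.sq_sqrt (hr0 x)
    have h3 : |√(s x) + √(r x)| = √(s x) + √(r x) := abs_of_nonneg (by positivity)
    rw [← ENNReal.ofReal_mul (abs_nonneg _), ← h3, ← abs_mul]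
    congr 2
    nlinarith
  have hold := ENNReal.lintegral_mul_le_Lp_mul_Lq M (Real.HolderConjugate.two_two)
    hu.aemeasurable hv.aemeasurable
  have hu2 : ∫⁻ x, u x ^ (2:ℝ) ∂M ≤ ENNReal.ofReal (d ^ 2) := by
    refine le_trans (le_of_eq (lintegral_congr fun x => ?_)) hh
    simp only [u]
    rw [ENNReal.ofReal_rpow_of_nonneg (abs_nonneg _) (by norm_num)]
    norm_num
  have hv2 : ∫⁻ x, v x ^ (2:ℝ) ∂M ≤ 4 := by
    have : ∫⁻ x, v x ^ (2:ℝ) ∂M ≤ ∫⁻ x, (2 * ENNReal.ofReal (s x) + 2 * ENNReal.ofReal (r x)) ∂M := by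
      refine lintegral_mono fun x => ?_
      have h2' : (2:ℝ≥0∞) = ENNReal.ofReal 2 := by simp
      simp only [v]
      rw [ENNReal.ofReal_rpow_of_nonneg (by positivity) (by norm_num), h2',
        ← ENNReal.ofReal_mul (by norm_num), ← ENNReal.ofReal_mul (by norm_num),
        ← ENNReal.ofReal_add (by linarith [hs0 x]) (by linarith [hr0 x])]
      refine ENNReal.ofReal_le_ofReal ?_
      have h1 := Real.sq_sqrt (hs0 x)
      have h2 := Real.sq_sqrt (hr0 x)
      norm_num
      nlinarith [sq_nonneg (√(s x) - √(r x))]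
    refine this.trans (le_of_eq ?_)
    rw [lintegral_add_left (hs.ennreal_ofReal.const_mul 2), lintegral_const_mul _ hs.ennreal_ofReal,
      lintegral_const_mul _ hr.ennreal_ofReal, hsm, hrm]
    norm_num
  rw [lintegral_congr huv]
  refine hold.trans ?_
  have hd' : ENNReal.ofReal (2 * d) = (ENNReal.ofReal (d ^ 2)) ^ (1/2:ℝ) * 4 ^ (1/2:ℝ) := by
    have h4 : (4:ℝ≥0∞) = ENNReal.ofReal 4 := by simp
    rw [h4, ENNReal.ofReal_rpow_of_nonneg (by positivity) (by norm_num),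
      ENNReal.ofReal_rpow_of_nonneg (by positivity) (by norm_num),
      ← ENNReal.ofReal_mul (by positivity), ← Real.sqrt_eq_rpow, ← Real.sqrt_eq_rpow,
      Real.sqrt_sq hd, show (4:ℝ) = 2 ^ 2 by norm_num, Real.sqrt_sq (by norm_num), mul_comm]
  rw [hd']
  gcongr

/-- Along the orbit of a density under a measure-preserving map, if the entropy stays bounded by
`n * D ^ 2` up to time `n`, then at some time the conditional density is `L¹`-almost invariant. -/
lemma exists_almost_invariant_density (hle : 𝒢 ≤ m0) [SigmaFinite (M.trim hle)] {F F' : X → X}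
    (hF : MeasurePreserving F M M) (hF' : Measurable F')
    (hFinv : ∀ x, F' (F x) = x) (hFG : Measurable[𝒢, 𝒢] F) {g q : X → ℝ} (hg : Measurable g)
    (hg1 : ∀ x, g x ≤ 1) (hgm : ∫⁻ x, ENNReal.ofReal (g x) ∂M = 1)
    (hq : Measurable[𝒢] q) (hq0 : ∀ x, 0 < q x) (hq1 : ∀ x, q x ≤ 1) {n : ℕ} (hn : 0 < n)
    {D : ℝ} (hD0 : 0 ≤ D)
    (hD : ∫⁻ x, ENNReal.ofReal (g x) * ENNReal.ofReal (-Real.log (q (F^[n] x))) ∂M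
        + ∫⁻ x, ENNReal.ofReal (q x) ∂M ≤ ENNReal.ofReal (n * D ^ 2)) :
    ∃ i < n, ∃ s r : X → ℝ, Measurable s ∧ Measurable[𝒢] r ∧ (∀ x, 0 ≤ s x) ∧ (∀ x, 0 ≤ r x) ∧
      ∫⁻ x, ENNReal.ofReal (s x) ∂M = 1 ∧ ∫⁻ x, ENNReal.ofReal (r x) ∂M = 1 ∧
      (∀ h : X → ℝ≥0∞, Measurable h → Measurable[𝒢] (h ∘ F) →
        ∫⁻ x, ENNReal.ofReal (s x) * h x ∂M
          = ∫⁻ x, ENNReal.ofReal (g x) * h (F^[i + 1] x) ∂M) ∧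
      (∀ h : X → ℝ≥0∞, Measurable[𝒢] h →
        ∫⁻ x, ENNReal.ofReal (r x) * h x ∂M
          = ∫⁻ x, ENNReal.ofReal (g x) * h (F^[i + 1] x) ∂M) ∧
      ∫⁻ x, ENNReal.ofReal |s x - r x| ∂M ≤ ENNReal.ofReal (2 * D) := by
  have hinv : ∀ (i : ℕ) x, F'^[i] (F^[i] x) = x := fun i =>
    Function.LeftInverse.iterate hFinv i
  have hex : ∀ i : ℕ, ∃ r : X → ℝ, Measurable[𝒢] r ∧ (∀ x, 0 ≤ r x) ∧ (∀ x, r x ≤ 1) ∧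
      ∀ h : X → ℝ≥0∞, Measurable[𝒢] h →
        ∫⁻ x, ENNReal.ofReal (r x) * h x ∂M
          = ∫⁻ x, ENNReal.ofReal (g (F'^[i] x)) * h x ∂M := fun i =>
    exists_conditional_density hle (hg.comp (hF'.iterate i)) fun x => hg1 _
  choose r hrm hr0 hr1 hr using hex
  have hr' : ∀ (i : ℕ) (h : X → ℝ≥0∞), Measurable[𝒢] h →
      ∫⁻ x, ENNReal.ofReal (r i x) * h x ∂M
        = ∫⁻ x, ENNReal.ofReal (g x) * h (F^[i] x) ∂M := by
    intro i h hh
    have hm : Measurable fun x => ENNReal.ofReal (g (F'^[i] x)) * h x :=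
      (hg.comp (hF'.iterate i)).ennreal_ofReal.mul (hh.mono hle le_rfl)
    rw [hr i h hh, ← (hF.iterate i).lintegral_comp hm]
    simp [hinv]
  have hrm' : ∀ i, Measurable (r i) := fun i => (hrm i).mono hle le_rfl
  have hs : ∀ (i : ℕ) (h : X → ℝ≥0∞), Measurable h → Measurable[𝒢] (h ∘ F) →
      ∫⁻ x, ENNReal.ofReal (r i (F' x)) * h x ∂M
        = ∫⁻ x, ENNReal.ofReal (g x) * h (F^[i + 1] x) ∂M := by
    intro i h hh hhF
    have hm : Measurable fun x => ENNReal.ofReal (r i (F' x)) * h x :=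
      ((hrm' i).comp hF').ennreal_ofReal.mul hh
    rw [← hF.lintegral_comp hm]
    simp only [hFinv]
    rw [show (fun x => ENNReal.ofReal (r i x) * h (F x))
      = fun x => ENNReal.ofReal (r i x) * (h ∘ F) x from rfl, hr' i _ hhF]
    simp [Function.iterate_succ_apply']
  have hmass : ∀ i, ∫⁻ x, ENNReal.ofReal (r i x) ∂M = 1 := by
    intro i
    simpa [hgm] using hr' i (fun _ => 1) measurable_const
  have hsmass : ∀ i, ∫⁻ x, ENNReal.ofReal (r i (F' x)) ∂M = 1 := by
    intro i
    simpa [hgm] using hs i (fun _ => 1) measurable_const measurable_const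
  set Φ : ℕ → ℝ≥0∞ := fun i => ∫⁻ x, ENNReal.ofReal (Real.negMulLog (r i x)) ∂M with hΦ
  set H : ℕ → ℝ≥0∞ := fun i => ∫⁻ x, ENNReal.ofReal ((√(r i (F' x)) - √(r (i + 1) x)) ^ 2) ∂M
    with hH
  have hstep : ∀ i, Φ i + H i ≤ Φ (i + 1) := by
    intro i
    have h1 := lintegral_negMulLog_add_hellinger_le (M := M) hle ((hrm' i).comp hF') (hrm (i + 1))
      (fun x => hr0 i _) (fun x => hr1 i _) (hr0 (i + 1)) (hr1 (i + 1))
      (by rw [Function.comp_def, hsmass i]; exact ENNReal.one_ne_top) (fun h hh => by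
        rw [hr' (i + 1) h hh]
        exact hs i h (hh.mono hle le_rfl) (hh.comp hFG))
    have h2 : ∫⁻ x, ENNReal.ofReal (Real.negMulLog (r i (F' x))) ∂M = Φ i := by
      have hm : Measurable fun x => ENNReal.ofReal (Real.negMulLog (r i (F' x))) :=
        (Real.continuous_negMulLog.measurable.comp ((hrm' i).comp hF')).ennreal_ofReal
      rw [← hF.lintegral_comp hm]
      simp [hFinv, hΦ]
    simp only [Function.comp_def] at h1
    rw [h2] at h1
    exact h1
  have hsum : ∀ k, ∑ i ∈ Finset.range k, H i ≤ Φ k := by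
    intro k
    induction k with
    | zero => simp
    | succ k ih =>
      rw [Finset.sum_range_succ]
      exact (add_le_add_left ih _).trans (hstep k)
  have htot : ∑ i ∈ Finset.range n, H i ≤ ∑ i ∈ Finset.range n, ENNReal.ofReal (D ^ 2) := by
    rw [Finset.sum_const, Finset.card_range, nsmul_eq_mul, ← ENNReal.ofReal_natCast,
      ← ENNReal.ofReal_mul (Nat.cast_nonneg n)]
    refine (hsum n).trans (le_trans ?_ hD)
    refine (lintegral_negMulLog_le hle (hr0 n) hq hq0 hq1 (hr n)).trans (le_of_eq ?_)
    congr 1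
    rw [← hr n, hr' n]
    all_goals exact (Real.measurable_log.comp hq).neg.ennreal_ofReal
  obtain ⟨i, hi, hiH⟩ : ∃ i ∈ Finset.range n, H i ≤ ENNReal.ofReal (D ^ 2) := by
    by_contra! hcon
    exact absurd htot (not_le.2 (ENNReal.sum_lt_sum_of_nonempty
      (Finset.nonempty_range_iff.2 hn.ne') hcon))
  refine ⟨i, Finset.mem_range.1 hi, fun x => r i (F' x), r (i + 1), (hrm' i).comp hF', hrm (i + 1),
    fun x => hr0 i _, hr0 (i + 1), hsmass i, hmass (i + 1), hs i, hr' (i + 1), ?_⟩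
  exact integral_abs_sub_le_of_hellinger ((hrm' i).comp hF') (hrm' (i + 1)) (fun x => hr0 i _)
    (hr0 (i + 1)) (hsmass i) (hmass (i + 1)) hD0 hiH

end EntropyMonotonicity

section ProjectiveAction

open scoped ENNReal

/-- The Euclidean plane. -/
abbrev Plane : Type := EuclideanSpace ℝ (Fin 2)

/-- The unit circle. -/
abbrev UnitCircle : Type := Metric.sphere (0 : Plane) 1

/-- The group `SL(2,ℝ)`. -/
abbrev SL2 : Type := Matrix.SpecialLinearGroup (Fin 2) ℝ

/-- The linear action of `SL(2,ℝ)` on the plane. -/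
noncomputable def act (g : SL2) : Plane →L[ℝ] Plane := toEuclideanCLM (𝕜 := ℝ) (n := Fin 2) g.1

lemma act_apply (g : SL2) (v : Plane) (i : Fin 2) : act g v i = g.1 i 0 * v 0 + g.1 i 1 * v 1 := by
  have : act g v i = (g.1 *ᵥ v.ofLp) i := by
    rw [act, ← ofLp_toEuclideanCLM]
  rw [this, mulVec, dotProduct, Fin.sum_univ_two]

lemma act_mul (g h : SL2) (v : Plane) : act (g * h) v = act g (act h v) := by
  simp [act, map_mul]

@[simp] lemma act_one (v : Plane) : act 1 v = v := by simp [act]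

@[simp] lemma act_inv_act (g : SL2) (v : Plane) : act g⁻¹ (act g v) = v := by
  rw [← act_mul, inv_mul_cancel, act_one]

lemma act_ne_zero (g : SL2) {v : Plane} (hv : v ≠ 0) : act g v ≠ 0 := fun h =>
  hv (by rw [← act_inv_act g v, h, map_zero])

lemma norm_act (g : SL2) : ‖act g‖ = ‖g.1‖ := Matrix.l2_opNorm_toEuclideanCLM g.1

lemma norm_act_inv_le (g : SL2) : ‖act g⁻¹‖ ≤ ‖act g‖ := by
  refine ContinuousLinearMap.opNorm_le_bound _ (norm_nonneg _) fun v => ?_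
  set w : Plane := WithLp.toLp 2 ![v 1, -v 0] with hw
  have hwv : ‖w‖ = ‖v‖ := by
    simp [EuclideanSpace.norm_eq, hw, Fin.sum_univ_two, add_comm]
  have h1 : ‖act g⁻¹ v‖ = ‖toEuclideanCLM (𝕜 := ℝ) (n := Fin 2) g.1ᴴ w‖ := by
    have h2 : ∀ i, toEuclideanCLM (𝕜 := ℝ) (n := Fin 2) g.1ᴴ w i = (g.1ᴴ *ᵥ w.ofLp) i := by
      intro i; rw [← ofLp_toEuclideanCLM]
    rw [EuclideanSpace.norm_eq, EuclideanSpace.norm_eq]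
    congr 1
    simp only [Fin.sum_univ_two, h2, act_apply]
    simp [mulVec, dotProduct, Fin.sum_univ_two, hw, adjugate_fin_two]
    ring
  rw [h1, norm_act, ← hwv]
  refine (ContinuousLinearMap.le_opNorm _ _).trans ?_
  rw [Matrix.l2_opNorm_toEuclideanCLM, Matrix.l2_opNorm_conjTranspose]

lemma norm_act_inv (g : SL2) : ‖act g⁻¹‖ = ‖act g‖ :=
  le_antisymm (norm_act_inv_le g) (by simpa using norm_act_inv_le g⁻¹)

lemma norm_le_norm_act_mul (g : SL2) (v : Plane) : ‖v‖ ≤ ‖act g‖ * ‖act g v‖ := by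
  rw [← norm_act_inv g]
  simpa using (act g⁻¹).le_opNorm (act g v)

lemma one_le_norm_act (g : SL2) : 1 ≤ ‖act g‖ := by
  set v : Plane := EuclideanSpace.single 0 1
  have hv : ‖v‖ = 1 := by simp [v]
  have h1 := norm_le_norm_act_mul g v
  have h2 := (act g).le_opNorm v
  rw [hv] at h1 h2
  nlinarith [norm_nonneg (act g)]

lemma norm_act_mul_le (g h : SL2) : ‖act (g * h)‖ ≤ ‖act g‖ * ‖act h‖ := by
  have : act (g * h) = (act g).comp (act h) := by ext1 v; exact act_mul g h v
  rw [this]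
  exact ContinuousLinearMap.opNorm_comp_le _ _

lemma measurePreserving_act (g : SL2) : MeasurePreserving (act g) volume volume := by
  refine ⟨(act g).continuous.measurable, ?_⟩
  have hdet : LinearMap.det (act g : Plane →ₗ[ℝ] Plane) = 1 := by
    have h1 : (act g : Plane →ₗ[ℝ] Plane)
        = Matrix.toLin (EuclideanSpace.basisFun (Fin 2) ℝ).toBasis
          (EuclideanSpace.basisFun (Fin 2) ℝ).toBasis g.1 := by
      rw [act, coe_toEuclideanCLM_eq_toEuclideanLin, toEuclideanLin_eq_toLin_orthonormal]
    rw [h1, LinearMap.det_toLin, g.2]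
  have := Measure.map_linearMap_addHaar_eq_smul_addHaar (volume : Measure Plane)
    (f := (act g : Plane →ₗ[ℝ] Plane)) (by rw [hdet]; exact one_ne_zero)
  rw [hdet] at this
  simpa using this

section Measurability

variable {Ω : Type*} {mΩ : MeasurableSpace Ω}

lemma measurable_act {B : Ω → SL2} (hB : ∀ i j, Measurable fun ω => (B ω).1 i j) {V : Ω → Plane}
    (hV : Measurable V) : Measurable fun ω => act (B ω) (V ω) := by
  have h1 : Measurable fun ω => (fun i => act (B ω) (V ω) i : Fin 2 → ℝ) := by
    refine measurable_pi_lambda _ fun i => ?_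
    simp only [act_apply]
    have hc : ∀ j, Measurable fun ω => V ω j := fun j =>
      (EuclideanSpace.proj (𝕜 := ℝ) j).continuous.measurable.comp hV
    exact ((hB i 0).mul (hc 0)).add ((hB i 1).mul (hc 1))
  exact (MeasurableEquiv.toLp 2 (Fin 2 → ℝ)).measurable.comp h1

lemma measurable_norm_act {B : Ω → SL2} (hB : ∀ i j, Measurable fun ω => (B ω).1 i j) :
    Measurable fun ω => ‖act (B ω)‖ := by
  let L : (Fin 2 → Fin 2 → ℝ) →ₗ[ℝ] (Plane →L[ℝ] Plane) :=
    { toFun := fun m => toEuclideanCLM (𝕜 := ℝ) (n := Fin 2) (Matrix.of m)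
      map_add' := fun a b => by rw [← map_add]; rfl
      map_smul' := fun c a => by rw [RingHom.id_apply, ← map_smul]; rfl }
  have hL : Continuous L := L.continuous_of_finiteDimensional
  have h1 : Measurable fun ω => (fun i j => (B ω).1 i j : Fin 2 → Fin 2 → ℝ) :=
    measurable_pi_lambda _ fun i => measurable_pi_lambda _ fun j => hB i j
  exact (hL.norm.measurable.comp h1)

lemma coe_inv_eq (g : SL2) : (g⁻¹).1 = !![g.1 1 1, -g.1 0 1; -g.1 1 0, g.1 0 0] :=
  (Matrix.SpecialLinearGroup.coe_inv g).trans (adjugate_fin_two _)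

lemma coe_mul_apply (g h : SL2) (i j : Fin 2) :
    (g * h).1 i j = g.1 i 0 * h.1 0 j + g.1 i 1 * h.1 1 j := by
  change (g.1 * h.1) i j = _
  rw [mul_apply, Fin.sum_univ_two]

lemma measurable_inv_apply {B : Ω → SL2} (hB : ∀ i j, Measurable fun ω => (B ω).1 i j)
    (i j : Fin 2) : Measurable fun ω => (B ω)⁻¹.1 i j := by
  have h1 := hB 0 0
  have h2 := hB 0 1
  have h3 := hB 1 0
  have h4 := hB 1 1
  simp only [coe_inv_eq]
  fin_cases i <;> fin_cases j <;> simp <;> fun_prop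

end Measurability

/-- Radial projection of the plane to the unit circle (with an arbitrary value at `0`). -/
noncomputable def radial (v : Plane) : UnitCircle :=
  if h : v = 0 then ⟨EuclideanSpace.single 0 1, by simp⟩
  else ⟨‖v‖⁻¹ • v, by simp [norm_smul, inv_mul_cancel₀ (norm_ne_zero_iff.2 h)]⟩

lemma coe_radial {v : Plane} (h : v ≠ 0) : (radial v : Plane) = ‖v‖⁻¹ • v := by
  simp [radial, h]

lemma radial_smul {c : ℝ} (hc : 0 < c) (v : Plane) : radial (c • v) = radial v := by
  by_cases h : v = 0
  · simp [h]
  · have h' : c • v ≠ 0 := smul_ne_zero hc.ne' h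
    ext1
    rw [coe_radial h, coe_radial h', norm_smul, smul_smul, Real.norm_of_nonneg hc.le, mul_inv]
    congr 1
    field_simp

lemma radial_coe (ξ : UnitCircle) : radial ξ = ξ := by
  have h1 : ‖(ξ : Plane)‖ = 1 := by simp
  have h : (ξ : Plane) ≠ 0 := norm_ne_zero_iff.1 (by rw [h1]; exact one_ne_zero)
  ext1
  rw [coe_radial h, h1]; simp

lemma measurable_radial : Measurable radial := by
  refine Measurable.subtype_mk (f := fun v => (radial v : Plane)) ?_
  have : (fun v => (radial v : Plane)) = fun v : Plane =>
      if v = 0 then EuclideanSpace.single 0 1 else ‖v‖⁻¹ • v := by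
    ext1 v
    by_cases h : v = 0 <;> simp [radial, h]
  rw [this]
  exact Measurable.ite (measurableSet_singleton 0) measurable_const
    (measurable_norm.inv.smul measurable_id)

/-- The action of `SL(2,ℝ)` on the unit circle. -/
noncomputable def circleAct (g : SL2) (ξ : UnitCircle) : UnitCircle := radial (act g ξ)

lemma coe_ne_zero (ξ : UnitCircle) : (ξ : Plane) ≠ 0 := by
  have h1 : ‖(ξ : Plane)‖ = 1 := by simp
  exact norm_ne_zero_iff.1 (by rw [h1]; exact one_ne_zero)

lemma coe_circleAct (g : SL2) (ξ : UnitCircle) :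
    (circleAct g ξ : Plane) = ‖act g ξ‖⁻¹ • act g ξ :=
  coe_radial (act_ne_zero g (coe_ne_zero ξ))

lemma circleAct_radial (g : SL2) (v : Plane) (hv : v ≠ 0) :
    circleAct g (radial v) = radial (act g v) := by
  rw [circleAct, coe_radial hv, map_smul, radial_smul (inv_pos.2 (norm_pos_iff.2 hv))]

lemma circleAct_mul (g h : SL2) (ξ : UnitCircle) :
    circleAct (g * h) ξ = circleAct g (circleAct h ξ) := by
  conv_rhs => rw [circleAct.eq_def h]
  rw [circleAct_radial _ _ (act_ne_zero h (coe_ne_zero ξ)), circleAct, act_mul]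

@[simp] lemma circleAct_one (ξ : UnitCircle) : circleAct 1 ξ = ξ := by
  rw [circleAct, act_one, radial_coe]

lemma continuous_circleAct (g : SL2) : Continuous (circleAct g) := by
  rw [Topology.IsInducing.subtypeVal.continuous_iff]
  have h1 : Continuous fun ξ : UnitCircle => act g ξ := (act g).continuous.comp continuous_subtype_val
  have : (Subtype.val ∘ circleAct g) = fun ξ : UnitCircle => ‖act g ξ‖⁻¹ • act g ξ :=
    funext fun ξ => coe_circleAct g ξ
  rw [this]
  exact (h1.norm.inv₀ fun ξ => norm_ne_zero_iff.2 (act_ne_zero g (coe_ne_zero ξ))).smul h1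

/-- Radial projection is Lipschitz at scale given by the norm. -/
lemma dist_radial_le {v w : Plane} (hv : v ≠ 0) (hw : w ≠ 0) :
    dist (radial v) (radial w) ≤ 2 * ‖w - v‖ / ‖v‖ := by
  have hv' : 0 < ‖v‖ := norm_pos_iff.2 hv
  have hw' : 0 < ‖w‖ := norm_pos_iff.2 hw
  rw [Subtype.dist_eq, coe_radial hv, coe_radial hw, dist_eq_norm]
  have e : ‖v‖⁻¹ • v - ‖w‖⁻¹ • w = ‖v‖⁻¹ • (v - w) + (‖v‖⁻¹ - ‖w‖⁻¹) • w := by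
    rw [smul_sub, sub_smul]; abel
  rw [e]
  refine (norm_add_le _ _).trans ?_
  rw [norm_smul, norm_smul, norm_inv, norm_norm, norm_sub_rev]
  have h2 : ‖‖v‖⁻¹ - ‖w‖⁻¹‖ * ‖w‖ = |‖w‖ - ‖v‖| / ‖v‖ := by
    rw [Real.norm_eq_abs, inv_sub_inv hv'.ne' hw'.ne', abs_div, abs_of_pos (mul_pos hv' hw')]
    field_simp
  rw [h2]
  have h3 := abs_norm_sub_norm_le w v
  rw [inv_mul_eq_div, ← add_div]
  gcongr
  linarith

/-- A small perturbation of a unit vector has a controlled effect on its image direction. -/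
lemma dist_radial_act_le (g : SL2) (ξ : UnitCircle) {u : Plane} {ε : ℝ} (hu : ‖u‖ ≤ ε)
    (hε : ε * ‖act g‖ ^ 2 < 1) :
    dist (radial (act g ((ξ : Plane) + u))) (circleAct g ξ) ≤ 2 * (ε * ‖act g‖ ^ 2) := by
  have h1 : ‖(ξ : Plane)‖ = 1 := by simp
  have hg := one_le_norm_act g
  have h2 := norm_le_norm_act_mul g (ξ : Plane)
  rw [h1] at h2
  have h3 : ‖act g u‖ ≤ ‖act g‖ * ε := (act g).le_opNorm_of_le hu
  have hne : act g ((ξ : Plane) + u) ≠ 0 := by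
    refine act_ne_zero g fun h => ?_
    have : ‖(ξ : Plane)‖ = ‖u‖ := by rw [eq_neg_of_add_eq_zero_left h, norm_neg]
    have h5 : (1:ℝ) ≤ ε := by rw [← h1, this]; exact hu
    nlinarith
  have hpos : 0 < ‖act g ξ‖ := norm_pos_iff.2 (act_ne_zero g (coe_ne_zero ξ))
  rw [dist_comm]
  refine (dist_radial_le (act_ne_zero g (coe_ne_zero ξ)) hne).trans ?_
  rw [map_add, add_sub_cancel_left, div_le_iff₀ hpos]
  have hε0 : 0 ≤ ε := (norm_nonneg u).trans hu
  nlinarith [mul_le_mul_of_nonneg_left h2 (mul_nonneg hε0 (norm_nonneg (act g)))]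

section Cocycle

variable {Ω : Type*}

/-- The iterates `B(T^{n-1}ω) ⋯ B(ω)` of a cocycle over `T`. -/
def cocycle (T : Ω → Ω) (B : Ω → SL2) : ℕ → Ω → SL2
  | 0, _ => 1
  | n + 1, ω => B (T^[n] ω) * cocycle T B n ω

lemma cocycle_add (T : Ω → Ω) (B : Ω → SL2) (m n : ℕ) (ω : Ω) :
    cocycle T B (m + n) ω = cocycle T B m (T^[n] ω) * cocycle T B n ω := by
  induction m with
  | zero => simp [cocycle]
  | succ m ih =>
    rw [Nat.succ_add, cocycle, ih, cocycle, ← mul_assoc, Function.iterate_add_apply]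

lemma cocycle_iterate (T : Ω → Ω) (B : Ω → SL2) (k n : ℕ) (ω : Ω) :
    cocycle T^[k] (cocycle T B k) n ω = cocycle T B (k * n) ω := by
  induction n with
  | zero => rfl
  | succ n ih =>
    rw [cocycle, ih, Nat.mul_succ, add_comm (k * n), cocycle_add, ← Function.iterate_mul]

lemma cocycle_inverse {T T' : Ω → Ω} (B : Ω → SL2) (hTT' : ∀ ω, T (T' ω) = ω) (n : ℕ) (ω : Ω) :
    cocycle T' (fun ω => (B (T' ω))⁻¹) n ω = (cocycle T B n (T'^[n] ω))⁻¹ := by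
  induction n with
  | zero => simp [cocycle]
  | succ n ih =>
    rw [cocycle, ih, cocycle_add T B n 1, _root_.mul_inv_rev]
    simp only [Function.iterate_succ_apply']
    simp [cocycle, hTT']

lemma skew_iterate (T : Ω → Ω) (B : Ω → SL2) (n : ℕ) (x : Ω × Plane) :
    (fun x : Ω × Plane => (T x.1, act (B x.1) x.2))^[n] x
      = (T^[n] x.1, act (cocycle T B n x.1) x.2) := by
  induction n with
  | zero => simp [cocycle]
  | succ n ih => simp only [Function.iterate_succ_apply', ih, cocycle, act_mul]

lemma norm_cocycle_le {T : Ω → Ω} {B : Ω → SL2} {K : ℝ} (hK : ∀ ω, ‖act (B ω)‖ ≤ K) (n : ℕ)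
    (ω : Ω) : ‖act (cocycle T B n ω)‖ ≤ K ^ n := by
  induction n with
  | zero =>
    simp only [cocycle, pow_zero]
    exact ContinuousLinearMap.opNorm_le_bound _ zero_le_one fun v => by simp
  | succ n ih =>
    rw [cocycle, pow_succ']
    exact (norm_act_mul_le _ _).trans (mul_le_mul (hK _) ih (norm_nonneg _)
      ((norm_nonneg _).trans (hK ω)))

variable {mΩ : MeasurableSpace Ω}

lemma measurable_cocycle_apply {T : Ω → Ω} {B : Ω → SL2} (hT : Measurable T)
    (hB : ∀ i j, Measurable fun ω => (B ω).1 i j) (n : ℕ) (i j : Fin 2) :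
    Measurable fun ω => (cocycle T B n ω).1 i j := by
  induction n generalizing i j with
  | zero => simp only [cocycle]; exact measurable_const
  | succ n ih =>
    simp only [cocycle, coe_mul_apply]
    exact (((hB i 0).comp (hT.iterate n)).mul (ih 0 j)).add
      (((hB i 1).comp (hT.iterate n)).mul (ih 1 j))

end Cocycle

end ProjectiveAction

section Smoothing

open scoped ENNReal
open ProbabilityTheory

/-- Two nonnegative functions with the same integral over all sets of a sub-σ-algebra have the same
integral against every function measurable with respect to it. -/
lemma lintegral_mul_ofReal_eq_of_setIntegral_eq {Ω : Type*} {ℱ mΩ : MeasurableSpace Ω}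
    {μ : Measure Ω} (hℱ : ℱ ≤ mΩ) {y z : Ω → ℝ} (hym : Measurable y) (hzm : Measurable z)
    (hy : Integrable y μ) (hz : Integrable z μ) (hy0 : ∀ ω, 0 ≤ y ω) (hz0 : ∀ ω, 0 ≤ z ω)
    (h : ∀ s, MeasurableSet[ℱ] s → ∫ ω in s, y ω ∂μ = ∫ ω in s, z ω ∂μ)
    {R : Ω → ℝ≥0∞} (hR : Measurable[ℱ] R) :
    ∫⁻ ω, R ω * ENNReal.ofReal (y ω) ∂μ = ∫⁻ ω, R ω * ENNReal.ofReal (z ω) ∂μ := by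
  have key : ∀ w : Ω → ℝ, Measurable w → ∫⁻ ω, R ω * ENNReal.ofReal (w ω) ∂μ
      = ∫⁻ ω, R ω ∂((μ.withDensity fun ω => ENNReal.ofReal (w ω)).trim hℱ) := by
    intro w hw
    rw [lintegral_trim hℱ hR, lintegral_withDensity_eq_lintegral_mul μ hw.ennreal_ofReal
      (hR.mono hℱ le_rfl)]
    simp only [Pi.mul_apply, mul_comm]
  rw [key y hym, key z hzm]
  congr 1
  refine @Measure.ext _ ℱ _ _ fun s hs => ?_
  rw [trim_measurableSet_eq hℱ hs, trim_measurableSet_eq hℱ hs, withDensity_apply _ (hℱ s hs),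
    withDensity_apply _ (hℱ s hs),
    ← ofReal_integral_eq_lintegral_ofReal hy.integrableOn (Eventually.of_forall hy0),
    ← ofReal_integral_eq_lintegral_ofReal hz.integrableOn (Eventually.of_forall hz0), h s hs]

variable {Ω : Type*} {mΩ : MeasurableSpace Ω} {μ : Measure Ω}

lemma measurable_kernel_ball (ν : Kernel Ω UnitCircle) [IsMarkovKernel ν] (ε : ℝ) :
    Measurable fun x : Ω × Plane => ν x.1 {ξ | dist (ξ : Plane) x.2 < ε} := by
  have ht : MeasurableSet {z : (Ω × Plane) × UnitCircle | dist (z.2 : Plane) z.1.2 < ε} := by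
    refine measurableSet_lt ?_ measurable_const
    exact (measurable_subtype_coe.comp measurable_snd).dist measurable_fst.snd
  exact Kernel.measurable_kernel_prodMk_left (κ := ν.comap Prod.fst measurable_fst) ht

/-- Convolving the fibre measures with the uniform distribution on a ball of radius `ε` yields an
absolutely continuous measure with an explicit density. -/
lemma lintegral_kernel_ball_mul [SFinite μ] (ν : Kernel Ω UnitCircle) [IsMarkovKernel ν] (ε : ℝ)
    {h : Ω × Plane → ℝ≥0∞} (hh : Measurable h) :
    ∫⁻ x, ν x.1 {ξ | dist (ξ : Plane) x.2 < ε} * h x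
        ∂(μ.prod ((volume (Metric.ball (0 : Plane) ε))⁻¹ • volume))
      = ∫⁻ z, h (z.1.1, (z.1.2 : Plane) + z.2)
        ∂((μ ⊗ₘ ν).prod (cond volume (Metric.ball (0 : Plane) ε))) := by
  set c := (volume (Metric.ball (0 : Plane) ε))⁻¹ with hc
  have hm2 : Measurable fun z : (Ω × UnitCircle) × Plane => h (z.1.1, (z.1.2 : Plane) + z.2) :=
    hh.comp (measurable_fst.fst.prodMk
      ((measurable_subtype_coe.comp measurable_fst.snd).add measurable_snd))
  have hm1 : Measurable fun x : Ω × Plane => ν x.1 {ξ | dist (ξ : Plane) x.2 < ε} * h x :=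
    (measurable_kernel_ball ν ε).mul hh
  rw [lintegral_prod _ hm1.aemeasurable,
    lintegral_prod _ hm2.aemeasurable, Measure.lintegral_compProd hm2.lintegral_prod_right']
  refine lintegral_congr fun ω => ?_
  have hhω : Measurable fun v => h (ω, v) := hh.comp measurable_prodMk_left
  have h1 : ∀ ξ : UnitCircle, ∫⁻ u, h (ω, (ξ : Plane) + u) ∂(cond volume (Metric.ball (0 : Plane) ε))
      = ∫⁻ v, {p : UnitCircle × Plane | dist (p.1 : Plane) p.2 < ε}.indicator 1 (ξ, v) * h (ω, v)
        ∂(c • volume) := by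
    intro ξ
    rw [ProbabilityTheory.cond, lintegral_smul_measure, lintegral_smul_measure, ← lintegral_indicator
      Metric.isOpen_ball.measurableSet, ← lintegral_add_left_eq_self (fun v =>
        {p : UnitCircle × Plane | dist (p.1 : Plane) p.2 < ε}.indicator 1 (ξ, v) * h (ω, v))
        (ξ : Plane)]
    congr 1
    refine lintegral_congr fun u => ?_
    by_cases hu : ‖u‖ < ε <;> simp [indicator, hu]
  have hS : MeasurableSet {p : UnitCircle × Plane | dist (p.1 : Plane) p.2 < ε} :=
    measurableSet_lt ((measurable_subtype_coe.comp measurable_fst).dist measurable_snd)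
      measurable_const
  simp only [h1]
  rw [lintegral_lintegral_swap]
  · refine lintegral_congr fun v => ?_
    have hSv : MeasurableSet {ξ : UnitCircle | dist (ξ : Plane) v < ε} :=
      measurableSet_lt (measurable_subtype_coe.dist measurable_const) measurable_const
    rw [lintegral_mul_const]
    · congr 1
      rw [← lintegral_indicator_one hSv]
      rfl
    · exact (measurable_one.indicator hS).comp measurable_prodMk_right
  · exact ((measurable_one.indicator hS).mul (hhω.comp measurable_snd)).aemeasurable

/-- A sequence with `x n / n → 0` is eventually dominated by `ε n` up to time `n`. -/
lemma eventually_forall_le_of_tendsto {x : ℕ → ℝ}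
    (hx : Tendsto (fun n : ℕ => 1 / (n : ℝ) * x n) atTop (𝓝 0)) {ε : ℝ} (hε : 0 < ε) :
    ∀ᶠ n : ℕ in atTop, ∀ j ≤ n, x j ≤ n * ε := by
  obtain ⟨J, hJ⟩ := eventually_atTop.1 ((hx.eventually_lt_const hε).and (eventually_gt_atTop 0))
  obtain ⟨C, hC⟩ : ∃ C, ∀ j < J, x j ≤ C :=
    ⟨∑ j ∈ Finset.range J, |x j|, fun j hj => (le_abs_self _).trans
      (Finset.single_le_sum (f := fun j => |x j|) (fun i _ => abs_nonneg _)
        (Finset.mem_range.2 hj))⟩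
  have h1 : ∀ᶠ n : ℕ in atTop, C ≤ n * ε :=
    (tendsto_natCast_atTop_atTop.atTop_mul_const hε).eventually_ge_atTop C
  filter_upwards [h1] with n hn j hj
  by_cases h : j < J
  · exact (hC j h).trans hn
  · obtain ⟨h2, h3⟩ := hJ j (not_lt.1 h)
    have h4 : (0:ℝ) < j := by exact_mod_cast h3
    have h5 : (j:ℝ) ≤ n := by exact_mod_cast hj
    rw [one_div, inv_mul_eq_div, div_lt_iff₀ h4] at h2
    nlinarith

end Smoothing

section EntropyEstimate

open scoped ENNReal
open ProbabilityTheory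

lemma measurable_skew {Ω : Type*} {mΩ : MeasurableSpace Ω} {T : Ω → Ω} {B : Ω → SL2}
    (hT : Measurable T) (hB : ∀ i j, Measurable fun ω => (B ω).1 i j) :
    Measurable fun x : Ω × Plane => (T x.1, act (B x.1) x.2) :=
  (hT.comp measurable_fst).prodMk (measurable_act (B := fun x : Ω × Plane => B x.1)
    (fun i j => (hB i j).comp measurable_fst) measurable_snd)

lemma measurable_mul_radial {X : Type*} {mX : MeasurableSpace X} {β : X → ℝ} (hβ : Measurable β)
    {V : X → Plane} (hV : Measurable V) (f : C(UnitCircle, ℝ)) :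
    Measurable fun x => β x * f (radial (V x)) :=
  hβ.mul (f.continuous.measurable.comp (measurable_radial.comp hV))

lemma lintegral_mul_le_add_of_lintegral_abs_sub_le {X : Type*} {mX : MeasurableSpace X}
    {M : Measure X} {s r : X → ℝ} (hs : Measurable s) (hr : Measurable r) {h : X → ℝ≥0∞}
    (hh : Measurable h) (h2 : ∀ x, h x ≤ 2) {D : ℝ≥0∞}
    (hD : ∫⁻ x, ENNReal.ofReal |s x - r x| ∂M ≤ D) :
    ∫⁻ x, ENNReal.ofReal (s x) * h x ∂M ≤ ∫⁻ x, ENNReal.ofReal (r x) * h x ∂M + D * 2 := by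
  have hm : Measurable fun x => ENNReal.ofReal (r x) * h x := hr.ennreal_ofReal.mul hh
  have hm2 : Measurable fun x => ENNReal.ofReal |s x - r x| :=
    (continuous_abs.measurable.comp (hs.sub hr)).ennreal_ofReal
  calc ∫⁻ x, ENNReal.ofReal (s x) * h x ∂M
      ≤ ∫⁻ x, (ENNReal.ofReal (r x) * h x + ENNReal.ofReal |s x - r x| * 2) ∂M := by
        refine lintegral_mono fun x => ?_
        calc ENNReal.ofReal (s x) * h x
            ≤ (ENNReal.ofReal (r x) + ENNReal.ofReal |s x - r x|) * h x := by
              gcongr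
              refine le_trans (ENNReal.ofReal_le_ofReal ?_) ENNReal.ofReal_add_le
              linarith [le_abs_self (s x - r x)]
          _ ≤ _ := by
              rw [add_mul]
              gcongr
              exact h2 x
    _ = ∫⁻ x, ENNReal.ofReal (r x) * h x ∂M + (∫⁻ x, ENNReal.ofReal |s x - r x| ∂M) * 2 := by
        rw [lintegral_add_left hm, lintegral_mul_const _ hm2]
    _ ≤ _ := by gcongr

variable {Ω : Type*} {ℱ mΩ : MeasurableSpace Ω} {μ : Measure Ω}

/-- Replacing a function by a version of its conditional expectation does not change its integral
against densities measurable over the sub-σ-algebra. -/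
lemma lintegral_prod_mul_ofReal_eq [IsProbabilityMeasure μ] (hℱ : ℱ ≤ mΩ) (M : Measure Plane)
    [SFinite M] {b b' : Ω → ℝ} (hb : Measurable b) (hb' : Measurable[ℱ] b')
    (hb1 : ∀ ω, |b ω| ≤ 1) (hb1' : ∀ ω, |b' ω| ≤ 1)
    (hbb' : ∀ s, MeasurableSet[ℱ] s → ∫ ω in s, b ω ∂μ = ∫ ω in s, b' ω ∂μ)
    {f : C(UnitCircle, ℝ)} (hf : ∀ ξ, |f ξ| ≤ 1) {r : Ω × Plane → ℝ}
    (hr : Measurable[@Prod.instMeasurableSpace Ω Plane ℱ _] r) :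
    ∫⁻ x, ENNReal.ofReal (r x) * ENNReal.ofReal (b x.1 * f (radial x.2) + 1) ∂(μ.prod M)
      = ∫⁻ x, ENNReal.ofReal (r x) * ENNReal.ofReal (b' x.1 * f (radial x.2) + 1)
        ∂(μ.prod M) := by
  have hle : @Prod.instMeasurableSpace Ω Plane ℱ _ ≤ Prod.instMeasurableSpace :=
    sup_le_sup (MeasurableSpace.comap_mono hℱ) le_rfl
  have hbm' : Measurable b' := hb'.mono hℱ le_rfl
  have hrm : Measurable r := hr.mono hle le_rfl
  have hm : ∀ β : Ω → ℝ, Measurable β → Measurable fun x : Ω × Plane =>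
      ENNReal.ofReal (r x) * ENNReal.ofReal (β x.1 * f (radial x.2) + 1) := fun β hβ =>
    hrm.ennreal_ofReal.mul
      ((measurable_mul_radial (hβ.comp measurable_fst) measurable_snd f).add_const 1).ennreal_ofReal
  have h_integrable : ∀ β : Ω → ℝ, Measurable β → (∀ ω, |β ω| ≤ 1) → Integrable β μ := fun β hβ h1 =>
    Integrable.of_bound hβ.aestronglyMeasurable 1 (Eventually.of_forall h1)
  have hmul : ∀ x y : ℝ, |x| ≤ 1 → |y| ≤ 1 → 0 ≤ x * y + 1 := fun x y hx hy => by
    have : |x * y| ≤ 1 := by rw [abs_mul]; exact mul_le_one₀ hx (abs_nonneg _) hy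
    linarith [neg_abs_le (x * y)]
  rw [lintegral_prod_symm _ (hm b hb).aemeasurable, lintegral_prod_symm _ (hm b' hbm').aemeasurable]
  refine lintegral_congr fun v => ?_
  have hrv : Measurable[ℱ] fun ω => ENNReal.ofReal (r (ω, v)) :=
    (hr.comp (@measurable_prodMk_right Ω Plane ℱ _ v)).ennreal_ofReal
  refine lintegral_mul_ofReal_eq_of_setIntegral_eq (y := fun ω => b ω * f (radial v) + 1)
    (z := fun ω => b' ω * f (radial v) + 1) hℱ ((hb.mul_const _).add_const 1)
    ((hbm'.mul_const _).add_const 1) (((h_integrable b hb hb1).mul_const _).add (integrable_const 1))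
    (((h_integrable b' hbm' hb1').mul_const _).add (integrable_const 1)) (fun ω => hmul _ _ (hb1 ω) (hf _))
    (fun ω => hmul _ _ (hb1' ω) (hf _)) (fun s hs => ?_)
    hrv
  rw [integral_add ((h_integrable b hb hb1).mul_const _).integrableOn (integrable_const 1),
    integral_add ((h_integrable b' hbm' hb1').mul_const _).integrableOn (integrable_const 1),
    integral_mul_const, integral_mul_const, hbb' s hs]

/-- The density used as a reference in the entropy estimate. -/
noncomputable def refDensity (ε : ℝ) (v : Plane) : ℝ := ε ^ 2 * (1 + ‖v‖) ^ (-3 : ℝ)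

lemma refDensity_pos {ε : ℝ} (hε : 0 < ε) (v : Plane) : 0 < refDensity ε v := by
  unfold refDensity; positivity

lemma refDensity_le_one {ε : ℝ} (hε : 0 < ε) (hε1 : ε ≤ 1) (v : Plane) : refDensity ε v ≤ 1 :=
  mul_le_one₀ (pow_le_one₀ hε.le hε1) (by positivity)
    (rpow_le_one_of_one_le_of_nonpos (by linarith [norm_nonneg v]) (by norm_num))

lemma measurable_refDensity (ε : ℝ) : Measurable (refDensity ε) :=
  ((measurable_norm.const_add 1).pow_const _).const_mul _

lemma neg_log_refDensity {ε : ℝ} (hε : 0 < ε) (v : Plane) :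
    -log (refDensity ε v) = -(2 * log ε) + 3 * log (1 + ‖v‖) := by
  have h1 : 0 < 1 + ‖v‖ := by positivity
  rw [refDensity, log_mul (by positivity) (by positivity), log_pow, log_rpow h1]
  push_cast; ring

lemma neg_log_refDensity_act_le {ε : ℝ} (hε : 0 < ε) (hε1 : ε ≤ 1) (g : SL2) (ξ : UnitCircle)
    {u : Plane} (hu : ‖u‖ ≤ ε) :
    -log (refDensity ε (act g ((ξ : Plane) + u)))
      ≤ -(2 * log ε) + 3 * log 3 + 3 * log ‖act g‖ := by
  have h1 : ‖(ξ : Plane)‖ = 1 := by simp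
  have hg := one_le_norm_act g
  have h2 : ‖act g ((ξ : Plane) + u)‖ ≤ ‖act g‖ * 2 :=
    (act g).le_opNorm_of_le ((norm_add_le _ _).trans (by linarith))
  have h3 : log (1 + ‖act g ((ξ : Plane) + u)‖) ≤ log (3 * ‖act g‖) :=
    log_le_log (by positivity) (by linarith)
  rw [log_mul (by norm_num) (by positivity)] at h3
  rw [neg_log_refDensity hε]
  linarith

/-- The total mass of the reference density, normalised by the unit ball. -/
noncomputable def refMass : ℝ≥0∞ :=
  (volume (Metric.ball (0 : Plane) 1))⁻¹ * ∫⁻ v : Plane, ENNReal.ofReal ((1 + ‖v‖) ^ (-3 : ℝ))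

lemma refMass_ne_top : refMass ≠ ∞ := by
  refine ENNReal.mul_ne_top (ENNReal.inv_ne_top.2 (Metric.measure_ball_pos _ _ one_pos).ne') ?_
  exact (finite_integral_one_add_norm (by simp; norm_num)).ne

lemma lintegral_refDensity [IsProbabilityMeasure μ] {ε : ℝ} (hε : 0 < ε) :
    ∫⁻ x, ENNReal.ofReal (refDensity ε x.2)
        ∂(μ.prod ((volume (Metric.ball (0 : Plane) ε))⁻¹ • volume)) = refMass := by
  have hm : Measurable fun x : Ω × Plane => ENNReal.ofReal (refDensity ε x.2) :=
    ((measurable_refDensity ε).comp measurable_snd).ennreal_ofReal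
  rw [lintegral_prod _ hm.aemeasurable]
  have h1 : ∀ v, ENNReal.ofReal (refDensity ε v)
      = ENNReal.ofReal (ε ^ 2) * ENNReal.ofReal ((1 + ‖v‖) ^ (-3 : ℝ)) := fun v =>
    ENNReal.ofReal_mul (by positivity)
  simp only [h1, lintegral_const, measure_univ, mul_one, lintegral_smul_measure, smul_eq_mul]
  rw [lintegral_const_mul _ ((measurable_norm.const_add 1).pow_const _).ennreal_ofReal,
    Measure.addHaar_ball_of_pos _ _ hε, refMass]
  simp only [finrank_euclideanSpace, Fintype.card_fin]
  have h3 : ENNReal.ofReal (ε ^ 2) ≠ 0 := by simpa using by positivity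
  rw [ENNReal.mul_inv (Or.inl h3) (Or.inl ENNReal.ofReal_ne_top), mul_mul_mul_comm,
    ENNReal.inv_mul_cancel h3 ENNReal.ofReal_ne_top, one_mul]

end EntropyEstimate

section EntropyEstimate

open scoped ENNReal
open ProbabilityTheory

variable {Ω : Type*} {ℱ mΩ : MeasurableSpace Ω} {μ : Measure Ω}

lemma sigmaFinite_trim_of_map {X Y : Type*} {𝒢 m0 : MeasurableSpace X} {mY : MeasurableSpace Y}
    (hle : 𝒢 ≤ m0) {φ : X → Y} (hφ : Measurable[𝒢] φ) (M : Measure X) (h : SigmaFinite (M.map φ)) :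
    SigmaFinite (M.trim hle) := by
  refine @SigmaFinite.of_map X Y 𝒢 _ (M.trim hle) φ (@Measurable.aemeasurable X Y 𝒢 _ _ _ hφ) ?_
  have : @Measure.map X Y 𝒢 _ φ (M.trim hle) = M.map φ := by
    ext s hs
    rw [@Measure.map_apply X Y 𝒢 _ _ φ hφ s hs, trim_measurableSet_eq hle (hφ hs),
      Measure.map_apply (hφ.mono hle le_rfl) hs]
  rw [this]; exact h

lemma integrable_log_norm_cocycle [IsFiniteMeasure μ] {T : Ω → Ω} {B : Ω → SL2} (hT : Measurable T)
    (hB : ∀ i j, Measurable fun ω => (B ω).1 i j) {K : ℝ} (hK : ∀ ω, ‖act (B ω)‖ ≤ K) (n : ℕ) :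
    Integrable (fun ω => log ‖act (cocycle T B n ω)‖) μ := by
  refine Integrable.of_bound (measurable_log.comp (measurable_norm_act
    (measurable_cocycle_apply hT hB n))).aestronglyMeasurable (log (K ^ n))
    (Eventually.of_forall fun ω => ?_)
  have h1 := one_le_norm_act (cocycle T B n ω)
  rw [Real.norm_of_nonneg (log_nonneg h1)]
  exact log_le_log (by linarith) (norm_cocycle_le hK n ω)

/-- If the cocycle grows slowly, then at some time the smoothed fibre measures are almost
uncorrelated with the innovation `b - b'`. -/
lemma exists_time_abs_integral_le [IsProbabilityMeasure μ] (hℱ : ℱ ≤ mΩ) {T T' : Ω → Ω}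
    (hT : MeasurePreserving T μ μ) (hT' : Measurable T') (hTinv : ∀ ω, T' (T ω) = ω)
    (hTF : Measurable[ℱ, ℱ] T) {B : Ω → SL2} (hB : ∀ i j, Measurable[ℱ] fun ω => (B ω).1 i j)
    {K : ℝ} (hK : ∀ ω, ‖act (B ω)‖ ≤ K) (ν : Kernel Ω UnitCircle) [IsMarkovKernel ν]
    {f : C(UnitCircle, ℝ)} (hf : ∀ ξ, |f ξ| ≤ 1) {b b' : Ω → ℝ} (hb : Measurable[ℱ] b)
    (hb' : Measurable[ℱ] b') (hb1 : ∀ ω, |b ω| ≤ 1) (hb1' : ∀ ω, |b' ω| ≤ 1)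
    (hbb' : ∀ s, MeasurableSet[ℱ] s → ∫ ω in s, b (T' ω) ∂μ = ∫ ω in s, b' ω ∂μ)
    {ε : ℝ} (hε : 0 < ε) (hε1 : ε ≤ 1) {n : ℕ} (hn : 0 < n) {D : ℝ} (hD0 : 0 ≤ D)
    (hD : -(2 * log ε) + 3 * log 3 + 3 * ∫ ω, log ‖act (cocycle T B n ω)‖ ∂μ + refMass.toReal
      ≤ n * D ^ 2) :
    ∃ j ≤ n, |∫ z, (b (T' (T^[j] z.1.1)) - b' (T^[j] z.1.1)) *
      f (radial (act (cocycle T B j z.1.1) ((z.1.2 : Plane) + z.2)))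
        ∂((μ ⊗ₘ ν).prod (cond volume (Metric.ball (0 : Plane) ε)))| ≤ 4 * D := by
  have hBm : ∀ i j, Measurable fun ω => (B ω).1 i j := fun i j => (hB i j).mono hℱ le_rfl
  have hV0 : volume (Metric.ball (0 : Plane) ε) ≠ 0 := (Metric.measure_ball_pos _ _ hε).ne'
  have hVt : volume (Metric.ball (0 : Plane) ε) ≠ ∞ := measure_ball_lt_top.ne
  have : IsProbabilityMeasure (cond (volume : Measure Plane) (Metric.ball (0 : Plane) ε)) :=
    cond_isProbabilityMeasure_of_finite hV0 hVt
  set P := cond (volume : Measure Plane) (Metric.ball (0 : Plane) ε) with hP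
  set Q := (μ ⊗ₘ ν).prod P with hQ
  set c := (volume (Metric.ball (0 : Plane) ε))⁻¹ with hc
  have : (c • (volume : Measure Plane)).IsAddHaarMeasure :=
    Measure.IsAddHaarMeasure.smul _ (ENNReal.inv_ne_zero.2 hVt) (ENNReal.inv_ne_top.2 hV0)
  set M := μ.prod (c • (volume : Measure Plane)) with hM
  have hle : @Prod.instMeasurableSpace Ω Plane ℱ _ ≤ Prod.instMeasurableSpace :=
    sup_le_sup (MeasurableSpace.comap_mono hℱ) le_rfl
  have : SigmaFinite (M.trim hle) := by
    refine sigmaFinite_trim_of_map hle (@measurable_snd Ω Plane ℱ _) M ?_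
    rw [hM, Measure.map_snd_prod, measure_univ, one_smul]
    infer_instance
  set F : Ω × Plane → Ω × Plane := fun x => (T x.1, act (B x.1) x.2) with hFdef
  set F' : Ω × Plane → Ω × Plane := fun x => (T' x.1, act (B (T' x.1))⁻¹ x.2) with hFdef'
  have hF : MeasurePreserving F M M := by
    refine hT.skew_product (g := fun ω v => act (B ω) v) ?_ (Eventually.of_forall fun ω => ?_)
    · exact measurable_act (B := fun x : Ω × Plane => B x.1)
        (fun i j => (hBm i j).comp measurable_fst) measurable_snd
    · rw [Measure.map_smul, (measurePreserving_act (B ω)).map_eq]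
  have hF' : Measurable F' := measurable_skew (B := fun ω => (B (T' ω))⁻¹) hT'
    (measurable_inv_apply fun i j => (hBm i j).comp hT')
  have hFinv : ∀ x, F' (F x) = x := fun x => by simp [hFdef, hFdef', hTinv]
  have hFG : Measurable[@Prod.instMeasurableSpace Ω Plane ℱ _, @Prod.instMeasurableSpace Ω Plane ℱ _]
      F := measurable_skew hTF hB
  set g : Ω × Plane → ℝ := fun x => (ν x.1 {ξ | dist (ξ : Plane) x.2 < ε}).toReal with hg
  have hgo : ∀ x, ENNReal.ofReal (g x) = ν x.1 {ξ | dist (ξ : Plane) x.2 < ε} := fun x =>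
    ENNReal.ofReal_toReal (measure_ne_top _ _)
  have hgQ : ∀ h : Ω × Plane → ℝ≥0∞, Measurable h → ∫⁻ x, ENNReal.ofReal (g x) * h x ∂M
      = ∫⁻ z, h (z.1.1, (z.1.2 : Plane) + z.2) ∂Q := fun h hh => by
    simp only [hgo]
    exact lintegral_kernel_ball_mul ν ε hh
  have hq : Measurable[@Prod.instMeasurableSpace Ω Plane ℱ _]
      fun x : Ω × Plane => refDensity ε x.2 :=
    (measurable_refDensity ε).comp (@measurable_snd Ω Plane ℱ _)
  have hIC := integrable_log_norm_cocycle (μ := μ) hT.measurable hBm hK n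
  have hent : ∫⁻ x, ENNReal.ofReal (g x) * ENNReal.ofReal (-log (refDensity ε (F^[n] x).2)) ∂M
      + ∫⁻ x, ENNReal.ofReal (refDensity ε x.2) ∂M ≤ ENNReal.ofReal (n * D ^ 2) := by
    have hl3 : 0 ≤ log (3 : ℝ) := log_nonneg (by norm_num)
    have hle' : 0 ≤ -(2 * log ε) := by linarith [log_nonpos hε.le hε1]
    have hm : Measurable fun x : Ω × Plane => ENNReal.ofReal (-log (refDensity ε (F^[n] x).2)) :=
      (measurable_log.comp ((hq.mono hle le_rfl).comp
        (hF.measurable.iterate n))).neg.ennreal_ofReal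
    have hm1 : Measurable fun ω => ENNReal.ofReal
        (-(2 * log ε) + 3 * log 3 + 3 * log ‖act (cocycle T B n ω)‖) :=
      ((measurable_log.comp (measurable_norm_act (measurable_cocycle_apply hT.measurable hBm
        n))).const_mul 3 |>.const_add _).ennreal_ofReal
    have hPae : ∀ᵐ z ∂Q, ‖z.2‖ ≤ ε := by
      have h1 : ∀ᵐ u ∂P, ‖u‖ ≤ ε := by
        filter_upwards [ae_cond_mem (μ := (volume : Measure Plane))
          (measurableSet_ball (x := (0 : Plane)) (ε := ε))] with u hu
        exact (mem_ball_zero_iff.1 hu).le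
      exact Measure.quasiMeasurePreserving_snd.ae h1
    rw [hgQ _ hm, lintegral_refDensity hε, ← ENNReal.ofReal_toReal refMass_ne_top]
    have hstep : ∫⁻ z, ENNReal.ofReal (-log (refDensity ε
        (F^[n] (z.1.1, (z.1.2 : Plane) + z.2)).2)) ∂Q
        ≤ ENNReal.ofReal (∫ ω, (-(2 * log ε) + 3 * log 3
          + 3 * log ‖act (cocycle T B n ω)‖) ∂μ) := by
      rw [ofReal_integral_eq_lintegral_ofReal]
      · calc
          _ ≤ ∫⁻ z, ENNReal.ofReal (-(2 * log ε) + 3 * log 3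
              + 3 * log ‖act (cocycle T B n z.1.1)‖) ∂Q := by
            refine lintegral_mono_ae ?_
            filter_upwards [hPae] with z hz
            refine ENNReal.ofReal_le_ofReal ?_
            rw [hFdef, skew_iterate]
            exact neg_log_refDensity_act_le hε hε1 _ _ hz
          _ = _ := by
            have hm2 : Measurable fun z : (Ω × UnitCircle) × Plane => ENNReal.ofReal
              (-(2 * log ε) + 3 * log 3 + 3 * log ‖act (cocycle T B n z.1.1)‖) :=
              hm1.comp measurable_fst.fst
            have hm3 : Measurable fun z : Ω × UnitCircle => ENNReal.ofReal
              (-(2 * log ε) + 3 * log 3 + 3 * log ‖act (cocycle T B n z.1)‖) :=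
              hm1.comp measurable_fst
            rw [hQ, lintegral_prod _ hm2.aemeasurable]
            simp only [lintegral_const, measure_univ, mul_one]
            rw [Measure.lintegral_compProd hm3]
            simp
      · exact (integrable_const _).add (hIC.const_mul 3)
      · refine Eventually.of_forall fun ω => ?_
        have := log_nonneg (one_le_norm_act (cocycle T B n ω))
        simp only [Pi.zero_apply]
        linarith
    refine (add_le_add_left hstep _).trans ?_
    have h0 : 0 ≤ ∫ ω, log ‖act (cocycle T B n ω)‖ ∂μ :=
      integral_nonneg fun ω => log_nonneg (one_le_norm_act _)
    have h5 : ∫ ω, (-(2 * log ε) + 3 * log 3 + 3 * log ‖act (cocycle T B n ω)‖) ∂μ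
        = -(2 * log ε) + 3 * log 3 + 3 * ∫ ω, log ‖act (cocycle T B n ω)‖ ∂μ := by
      rw [integral_add (integrable_const _) (hIC.const_mul 3), integral_const_mul]
      simp
    rw [h5, ← ENNReal.ofReal_add (by linarith) ENNReal.toReal_nonneg]
    exact ENNReal.ofReal_le_ofReal hD
  obtain ⟨i, hi, s, r, hs, hr, hs0, hr0, hs1, hr1, hsh, hrh, hsr⟩ :=
    exists_almost_invariant_density hle hF hF' hFinv hFG
      (g := g) (measurable_kernel_ball ν ε).ennreal_toReal (fun x => ENNReal.toReal_le_of_le_ofReal zero_le_one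
        (by simpa using prob_le_one))
      (by simpa only [mul_one, lintegral_const, measure_univ] using
        hgQ (fun _ => 1) measurable_const) hq
      (fun x => refDensity_pos hε _) (fun x => refDensity_le_one hε hε1 _) hn hD0 hent
  refine ⟨i + 1, hi, ?_⟩
  have hmul : ∀ x y : ℝ, |x| ≤ 1 → |y| ≤ 1 → |x * y| ≤ 1 := fun x y hx hy => by
    rw [abs_mul]; exact mul_le_one₀ hx (abs_nonneg _) hy
  set a1 : Ω × Plane → ℝ := fun x => b (T' x.1) * f (radial x.2) with ha1
  set a2 : Ω × Plane → ℝ := fun x => b' x.1 * f (radial x.2) with ha2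
  have ha1b : ∀ x, |a1 x| ≤ 1 := fun x => hmul _ _ (hb1 _) (hf _)
  have ha2b : ∀ x, |a2 x| ≤ 1 := fun x => hmul _ _ (hb1' _) (hf _)
  have hbm : Measurable b := hb.mono hℱ le_rfl
  have hbm' : Measurable b' := hb'.mono hℱ le_rfl
  have ha1m : Measurable a1 :=
    measurable_mul_radial ((hbm.comp hT').comp measurable_fst) measurable_snd f
  have ha2G : Measurable[@Prod.instMeasurableSpace Ω Plane ℱ _] a2 :=
    measurable_mul_radial (hb'.comp (@measurable_fst Ω Plane ℱ _)) (@measurable_snd Ω Plane ℱ _) f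
  have ha2m : Measurable a2 := ha2G.mono hle le_rfl
  have ha1F : Measurable[@Prod.instMeasurableSpace Ω Plane ℱ _] (a1 ∘ F) := by
    have : a1 ∘ F = fun x : Ω × Plane => b x.1 * f (radial (F x).2) := by
      ext x; simp [ha1, hFdef, hTinv]
    rw [this]
    exact measurable_mul_radial (hb.comp (@measurable_fst Ω Plane ℱ _))
      ((@measurable_snd Ω Plane ℱ _).comp hFG) f
  have E1 := hsh (fun x => ENNReal.ofReal (a1 x + 1)) (ha1m.add_const 1).ennreal_ofReal
    (ha1F.add_const 1).ennreal_ofReal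
  have E2 := hrh (fun x => ENNReal.ofReal (a2 x + 1)) (ha2G.add_const 1).ennreal_ofReal
  have hFm := hF.measurable.iterate (i + 1)
  replace E1 := E1.trans (hgQ _ ((ha1m.comp hFm).add_const 1).ennreal_ofReal)
  replace E2 := E2.trans (hgQ _ ((ha2m.comp hFm).add_const 1).ennreal_ofReal)
  have E3 := lintegral_prod_mul_ofReal_eq hℱ (c • volume) (hbm.comp hT') hb' (fun ω => hb1 _) hb1' hbb'
    hf hr
  have hh2 : ∀ x, ENNReal.ofReal (a1 x + 1) ≤ 2 := fun x => by
    rw [← ENNReal.ofReal_ofNat]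
    exact ENNReal.ofReal_le_ofReal (by linarith [le_abs_self (a1 x), ha1b x])
  have hrm : Measurable r := hr.mono hle le_rfl
  have E4 := lintegral_mul_le_add_of_lintegral_abs_sub_le hs hrm (ha1m.add_const 1).ennreal_ofReal
    hh2 hsr
  have E5 := lintegral_mul_le_add_of_lintegral_abs_sub_le hrm hs (ha1m.add_const 1).ennreal_ofReal
    hh2 (D := ENNReal.ofReal (2 * D)) (by simpa only [abs_sub_comm] using hsr)
  rw [show (∫⁻ x, ENNReal.ofReal (r x) * ENNReal.ofReal (a1 x + 1) ∂M)
    = ∫⁻ x, ENNReal.ofReal (r x) * ENNReal.ofReal (a2 x + 1) ∂M from E3, E1, E2] at E4 E5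
  have hΦ : Measurable fun z : (Ω × UnitCircle) × Plane => (z.1.1, (z.1.2 : Plane) + z.2) :=
    measurable_fst.fst.prodMk
      ((measurable_subtype_coe.comp measurable_fst.snd).add measurable_snd)
  have hreal : ∀ a : Ω × Plane → ℝ, Measurable a → (∀ x, |a x| ≤ 1) →
      Integrable (fun z : (Ω × UnitCircle) × Plane =>
        a (F^[i + 1] (z.1.1, (z.1.2 : Plane) + z.2))) Q ∧
      ∫⁻ z, ENNReal.ofReal (a (F^[i + 1] (z.1.1, (z.1.2 : Plane) + z.2)) + 1) ∂Q
      = ENNReal.ofReal (∫ z, a (F^[i + 1] (z.1.1, (z.1.2 : Plane) + z.2)) ∂Q + 1) ∧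
      0 ≤ ∫ z, a (F^[i + 1] (z.1.1, (z.1.2 : Plane) + z.2)) ∂Q + 1 := by
    intro a ha hab
    have hi : Integrable (fun z : (Ω × UnitCircle) × Plane =>
        a (F^[i + 1] (z.1.1, (z.1.2 : Plane) + z.2))) Q :=
      Integrable.of_bound (ha.comp (hFm.comp hΦ)).aestronglyMeasurable 1
        (Eventually.of_forall fun z => hab _)
    have h0 : ∀ x, 0 ≤ a x + 1 := fun x => by linarith [neg_abs_le (a x), hab x]
    have h1 : ∫ z, a (F^[i + 1] (z.1.1, (z.1.2 : Plane) + z.2)) ∂Q + 1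
        = ∫ z, (a (F^[i + 1] (z.1.1, (z.1.2 : Plane) + z.2)) + 1) ∂Q := by
      rw [integral_add hi (integrable_const 1)]; simp
    refine ⟨hi, ?_, ?_⟩
    · rw [h1]
      exact (ofReal_integral_eq_lintegral_ofReal (hi.add (integrable_const 1))
        (Eventually.of_forall fun z => h0 _)).symm
    · rw [h1]; exact integral_nonneg fun z => h0 _
  obtain ⟨I1, R1, N1⟩ := hreal a1 ha1m ha1b
  obtain ⟨I2, R2, N2⟩ := hreal a2 ha2m ha2b
  have hD2 : ENNReal.ofReal (2 * D) * 2 = ENNReal.ofReal (4 * D) := by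
    rw [← ENNReal.ofReal_ofNat 2, ← ENNReal.ofReal_mul (by linarith)]; congr 1; ring
  rw [R1, R2, hD2, ← ENNReal.ofReal_add (by linarith) (by linarith),
    ENNReal.ofReal_le_ofReal_iff (by linarith)] at E4 E5
  have hfin : ∫ z, (b (T' (T^[i + 1] z.1.1)) - b' (T^[i + 1] z.1.1)) *
      f (radial (act (cocycle T B (i + 1) z.1.1) ((z.1.2 : Plane) + z.2))) ∂Q
      = ∫ z, a1 (F^[i + 1] (z.1.1, (z.1.2 : Plane) + z.2)) ∂Q
        - ∫ z, a2 (F^[i + 1] (z.1.1, (z.1.2 : Plane) + z.2)) ∂Q := by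
    rw [← integral_sub I1 I2]
    refine integral_congr_ae (Eventually.of_forall fun z => ?_)
    simp only [hFdef, skew_iterate, ha1, ha2]
    ring
  rw [hfin, abs_le]
  constructor <;> linarith

end EntropyEstimate

section InvariancePrinciple

open scoped ENNReal
open ProbabilityTheory

variable {Ω : Type*} {ℱ mΩ : MeasurableSpace Ω} {μ : Measure Ω}

lemma measurable_circleAct {X : Type*} {mX : MeasurableSpace X} {B : X → SL2}
    (hB : ∀ i j, Measurable fun x => (B x).1 i j) {V : X → UnitCircle} (hV : Measurable V) :
    Measurable fun x => circleAct (B x) (V x) :=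
  measurable_radial.comp (measurable_act hB (measurable_subtype_coe.comp hV))

lemma ae_map_cocycle_eq {T : Ω → Ω} (hT : MeasurePreserving T μ μ) {B : Ω → SL2}
    {ν : Kernel Ω UnitCircle} (hν : ∀ᵐ ω ∂μ, (ν ω).map (circleAct (B ω)) = ν (T ω)) (j : ℕ) :
    ∀ᵐ ω ∂μ, (ν ω).map (circleAct (cocycle T B j ω)) = ν (T^[j] ω) := by
  induction j with
  | zero =>
    refine Eventually.of_forall fun ω => ?_
    have : circleAct 1 = id := funext circleAct_one
    simp [cocycle, this]
  | succ j ih =>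
    filter_upwards [ih, (hT.iterate j).quasiMeasurePreserving.ae hν] with ω h1 h2
    have : circleAct (cocycle T B (j + 1) ω)
        = circleAct (B (T^[j] ω)) ∘ circleAct (cocycle T B j ω) := by
      ext1 ξ
      rw [cocycle, circleAct_mul]; rfl
    rw [this, ← Measure.map_map (continuous_circleAct _).measurable
      (continuous_circleAct _).measurable, h1, h2, Function.iterate_succ_apply']

lemma abs_integral_le_one {ρ : Measure UnitCircle} [IsProbabilityMeasure ρ] {f : C(UnitCircle, ℝ)}
    (hf : ∀ ξ, |f ξ| ≤ 1) : |∫ ξ, f ξ ∂ρ| ≤ 1 := by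
  simpa using norm_integral_le_of_norm_le_const (μ := ρ) (f := f) (C := 1)
    (Eventually.of_forall hf)

lemma measurable_integral_kernel (ν : Kernel Ω UnitCircle) (f : C(UnitCircle, ℝ)) :
    Measurable fun ω => ∫ ξ, f ξ ∂ν ω :=
  (f.continuous.stronglyMeasurable.integral_kernel (κ := ν)).measurable

/-- Fibre averages of an invariant family of measures are uncorrelated with innovations, provided
the cocycle has zero growth rate. -/
lemma integral_innovation_mul_eq_zero [IsProbabilityMeasure μ] (hℱ : ℱ ≤ mΩ) {T T' : Ω → Ω}
    (hT : MeasurePreserving T μ μ) (hT' : Measurable T') (hTinv : ∀ ω, T' (T ω) = ω)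
    (hTF : Measurable[ℱ, ℱ] T) {B : Ω → SL2} (hB : ∀ i j, Measurable[ℱ] fun ω => (B ω).1 i j)
    {K : ℝ} (hK : ∀ ω, ‖act (B ω)‖ ≤ K)
    (hgrow : Tendsto (fun n : ℕ => 1 / (n : ℝ) * ∫ ω, log ‖act (cocycle T B n ω)‖ ∂μ) atTop (𝓝 0))
    (ν : Kernel Ω UnitCircle) [IsMarkovKernel ν]
    (hν : ∀ᵐ ω ∂μ, (ν ω).map (circleAct (B ω)) = ν (T ω))
    {f : C(UnitCircle, ℝ)} (hf : ∀ ξ, |f ξ| ≤ 1) {b b' : Ω → ℝ} (hb : Measurable[ℱ] b)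
    (hb' : Measurable[ℱ] b') (hb1 : ∀ ω, |b ω| ≤ 1) (hb1' : ∀ ω, |b' ω| ≤ 1)
    (hbb' : ∀ s, MeasurableSet[ℱ] s → ∫ ω in s, b (T' ω) ∂μ = ∫ ω in s, b' ω ∂μ) :
    ∫ ω, (b (T' ω) - b' ω) * ∫ ξ, f ξ ∂ν ω ∂μ = 0 := by
  have hBm : ∀ i j, Measurable fun ω => (B ω).1 i j := fun i j => (hB i j).mono hℱ le_rfl
  set d : Ω → ℝ := fun ω => b (T' ω) - b' ω with hd
  have hdm : Measurable d := ((hb.mono hℱ le_rfl).comp hT').sub (hb'.mono hℱ le_rfl)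
  have hd2 : ∀ ω, |d ω| ≤ 2 := fun ω =>
    (abs_sub _ _).trans (by linarith [hb1 (T' ω), hb1' ω])
  set I := ∫ ω, d ω * ∫ ξ, f ξ ∂ν ω ∂μ with hI
  set x : ℕ → ℝ := fun n => ∫ ω, log ‖act (cocycle T B n ω)‖ ∂μ with hx
  have key : ∀ δ : ℝ, 0 < δ → |I| ≤ 4 * √(7 * δ) + 6 * δ := by
    intro δ hδ
    obtain ⟨ρ, hρ, hfρ⟩ := Metric.uniformContinuous_iff.1
      (CompactSpace.uniformContinuous_of_continuous f.continuous) δ hδ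
    have hexp : Tendsto (fun n : ℕ => rexp (-(n * δ))) atTop (𝓝 0) :=
      tendsto_exp_neg_atTop_nhds_zero.comp (tendsto_natCast_atTop_atTop.atTop_mul_const hδ)
    have hlin : ∀ᶠ n : ℕ in atTop, 3 * log 3 + refMass.toReal ≤ n * (δ / 2) :=
      (tendsto_natCast_atTop_atTop.atTop_mul_const (half_pos hδ)).eventually_ge_atTop _
    obtain ⟨n, hn0, hn1, hn2, hn3, hn4, hn5⟩ := ((eventually_gt_atTop 0).and
      ((hexp.eventually_lt_const (half_pos hρ)).and ((hexp.eventually_lt_const one_pos).and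
      (hlin.and ((eventually_forall_le_of_tendsto hgrow (by positivity : 0 < δ ^ 2)).and
      (eventually_forall_le_of_tendsto hgrow (by positivity : 0 < δ / 6))))))).exists
    have hnpos : (0 : ℝ) < n := by exact_mod_cast hn0
    set ε := rexp (-(3 * n * δ)) with hε
    have hε0 : 0 < ε := exp_pos _
    have hε1 : ε ≤ 1 := by rw [hε]; exact exp_le_one_iff.2 (by have := mul_pos hnpos hδ; linarith)
    have hV0 : volume (Metric.ball (0 : Plane) ε) ≠ 0 := (Metric.measure_ball_pos _ _ hε0).ne'
    have hVt : volume (Metric.ball (0 : Plane) ε) ≠ ∞ := measure_ball_lt_top.ne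
    obtain ⟨j, hj, hjI⟩ := exists_time_abs_integral_le hℱ hT hT' hTinv hTF hB hK ν hf hb hb' hb1 hb1'
      hbb' hε0 hε1 hn0 (sqrt_nonneg (7 * δ)) (by
        rw [sq_sqrt (by positivity), hε, log_exp]
        have h5 := hn5 n le_rfl
        nlinarith)
    have : IsProbabilityMeasure (cond (volume : Measure Plane) (Metric.ball (0 : Plane) ε)) :=
      cond_isProbabilityMeasure_of_finite hV0 hVt
    set P := cond (volume : Measure Plane) (Metric.ball (0 : Plane) ε) with hP
    set Q := (μ ⊗ₘ ν).prod P with hQ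
    have hπ : Q.map (fun z => z.1.1) = μ := by
      rw [show (fun z : (Ω × UnitCircle) × Plane => z.1.1) = Prod.fst ∘ Prod.fst from rfl,
        ← Measure.map_map measurable_fst measurable_fst, Measure.map_fst_prod, measure_univ,
        one_smul, ← Measure.fst, Measure.fst_compProd]
    have hCj := measurable_cocycle_apply hT.measurable hBm j
    have hTj := hT.measurable.iterate j
    set Ψ : Ω × UnitCircle → ℝ := fun z => d (T^[j] z.1) * f (circleAct (cocycle T B j z.1) z.2)
      with hΨ
    have hΨm : Measurable Ψ := (hdm.comp (hTj.comp measurable_fst)).mul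
      (f.continuous.measurable.comp (measurable_circleAct (B := fun z : Ω × UnitCircle =>
        cocycle T B j z.1) (fun i k => (hCj i k).comp measurable_fst) measurable_snd))
    have hdf : ∀ ω ξ, |d ω * f ξ| ≤ 2 := fun ω ξ => by
      rw [abs_mul]; nlinarith [hd2 ω, hf ξ, abs_nonneg (d ω), abs_nonneg (f ξ)]
    have hΨi : Integrable Ψ (μ ⊗ₘ ν) := Integrable.of_bound hΨm.aestronglyMeasurable 2
      (Eventually.of_forall fun z => hdf _ _)
    have hIj : I = ∫ z, Ψ z.1 ∂Q := by
      rw [hQ, integral_fun_fst, probReal_univ, one_smul, Measure.integral_compProd hΨi, hI]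
      have hmm : Measurable fun ω => d ω * ∫ ξ, f ξ ∂ν ω :=
        hdm.mul (measurable_integral_kernel ν f)
      conv_lhs => rw [← (hT.iterate j).map_eq]
      rw [integral_map hTj.aemeasurable hmm.aestronglyMeasurable]
      refine integral_congr_ae ?_
      filter_upwards [ae_map_cocycle_eq hT hν j] with ω hω
      simp only [hΨ]
      rw [integral_const_mul, ← hω, integral_map (continuous_circleAct _).measurable.aemeasurable
        f.continuous.aestronglyMeasurable]
    set Θ : (Ω × UnitCircle) × Plane → ℝ := fun z => d (T^[j] z.1.1) *
      f (radial (act (cocycle T B j z.1.1) ((z.1.2 : Plane) + z.2))) with hΘ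
    have hΘm : Measurable Θ := measurable_mul_radial (hdm.comp (hTj.comp measurable_fst.fst))
      (measurable_act (B := fun z : (Ω × UnitCircle) × Plane => cocycle T B j z.1.1)
        (fun i k => (hCj i k).comp measurable_fst.fst)
        ((measurable_subtype_coe.comp measurable_fst.snd).add measurable_snd)) f
    have hΘi : Integrable Θ Q := Integrable.of_bound hΘm.aestronglyMeasurable 2
      (Eventually.of_forall fun z => hdf _ _)
    have hΨQ : Integrable (fun z => Ψ z.1) Q := Integrable.of_bound
      (hΨm.comp measurable_fst).aestronglyMeasurable 2 (Eventually.of_forall fun z => hdf _ _)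
    set bad : Set Ω := {ω | n * δ ≤ log ‖act (cocycle T B j ω)‖} with hbad
    have hbadm : MeasurableSet bad :=
      measurableSet_le measurable_const (measurable_log.comp (measurable_norm_act hCj))
    have hbadμ : μ.real bad ≤ δ := by
      have h1 := mul_meas_ge_le_integral_of_nonneg (μ := μ)
        (Eventually.of_forall fun ω => log_nonneg (one_le_norm_act (cocycle T B j ω)))
        (integrable_log_norm_cocycle hT.measurable hBm hK j) (n * δ)
      have h2 : n * δ * μ.real bad ≤ n * δ * δ := by
        have h3 := hn4 j hj
        calc _ ≤ _ := h1
          _ ≤ _ := h3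
          _ = _ := by ring
      exact le_of_mul_le_mul_left h2 (by positivity)
    have hPae : ∀ᵐ z ∂Q, ‖z.2‖ ≤ ε := by
      have h1 : ∀ᵐ u ∂P, ‖u‖ ≤ ε := by
        filter_upwards [ae_cond_mem (μ := (volume : Measure Plane))
          (measurableSet_ball (x := (0 : Plane)) (ε := ε))] with u hu
        exact (mem_ball_zero_iff.1 hu).le
      exact Measure.quasiMeasurePreserving_snd.ae h1
    have hdiff : |∫ z, Ψ z.1 ∂Q - ∫ z, Θ z ∂Q| ≤ 6 * δ := by
      rw [← integral_sub hΨQ hΘi]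
      set G : Ω → ℝ := fun ω => 2 * δ + 4 * bad.indicator 1 ω with hG
      have hGm : Measurable G := ((measurable_one.indicator hbadm).const_mul 4).const_add _
      have hGi : Integrable (fun ω => 4 * bad.indicator (1 : Ω → ℝ) ω) μ :=
        ((integrable_indicator_iff hbadm).2 (integrable_const (1 : ℝ)).integrableOn).const_mul 4
      have hGint : ∫ z, G z.1.1 ∂Q = 2 * δ + 4 * μ.real bad := by
        have h1 : ∫ ω, G ω ∂(Q.map fun z => z.1.1) = ∫ z, G z.1.1 ∂Q :=
          integral_map measurable_fst.fst.aemeasurable hGm.aestronglyMeasurable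
        rw [← h1, hπ, hG, integral_add (integrable_const _) hGi,
          integral_const_mul (4 : ℝ) (bad.indicator 1), integral_indicator_one hbadm]
        simp
      have hGQ : Integrable (fun z : (Ω × UnitCircle) × Plane => G z.1.1) Q := by
        refine Integrable.of_bound (hGm.comp measurable_fst.fst).aestronglyMeasurable (2 * δ + 4)
          (Eventually.of_forall fun z => ?_)
        by_cases h : z.1.1 ∈ bad
        · simp [hG, h, abs_of_pos (by positivity : 0 < 2 * δ + 4)]
        · simp [hG, h, abs_of_pos hδ]
      have h1 : ‖∫ z, (Ψ z.1 - Θ z) ∂Q‖ ≤ ∫ z, G z.1.1 ∂Q := by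
        refine norm_integral_le_of_norm_le hGQ ?_
        filter_upwards [hPae] with z hz
        have e : Ψ z.1 - Θ z = d (T^[j] z.1.1) * (f (circleAct (cocycle T B j z.1.1) z.1.2) -
          f (radial (act (cocycle T B j z.1.1) ((z.1.2 : Plane) + z.2)))) := by
          simp only [hΨ, hΘ]; ring
        rw [e, norm_mul, Real.norm_eq_abs, Real.norm_eq_abs]
        set p := circleAct (cocycle T B j z.1.1) z.1.2
        set q := radial (act (cocycle T B j z.1.1) ((z.1.2 : Plane) + z.2)) with hq
        have hd2' := hd2 (T^[j] z.1.1)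
        by_cases h : z.1.1 ∈ bad
        · have h3 : |f p - f q| ≤ 2 := (abs_sub _ _).trans (by linarith [hf p, hf q])
          simp only [hG, indicator_of_mem h, Pi.one_apply]
          nlinarith [abs_nonneg (d (T^[j] z.1.1)), abs_nonneg (f p - f q)]
        · have hlog : log ‖act (cocycle T B j z.1.1)‖ < n * δ := not_le.1 h
          have hg1 := one_le_norm_act (cocycle T B j z.1.1)
          have hgn : ‖act (cocycle T B j z.1.1)‖ ≤ rexp (n * δ) :=
            ((log_lt_iff_lt_exp (by linarith)).1 hlog).le
          have h4 : ε * ‖act (cocycle T B j z.1.1)‖ ^ 2 ≤ rexp (-(n * δ)) := by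
            calc _ ≤ ε * rexp (n * δ) ^ 2 := by gcongr
              _ = _ := by rw [hε, ← exp_nat_mul, ← exp_add]; congr 1; push_cast; ring
          have h5 := dist_radial_act_le (cocycle T B j z.1.1) z.1.2 hz (by linarith)
          have h6 : |f p - f q| < δ := by
            rw [abs_sub_comm, ← Real.dist_eq]
            exact hfρ (h5.trans_lt (by linarith))
          simp only [hG, indicator_of_notMem h]
          nlinarith [abs_nonneg (d (T^[j] z.1.1)), abs_nonneg (f p - f q)]
      rw [Real.norm_eq_abs] at h1
      linarith
    rw [hIj]
    have h7 : ∫ z, Ψ z.1 ∂Q = (∫ z, Ψ z.1 ∂Q - ∫ z, Θ z ∂Q) + ∫ z, Θ z ∂Q := by ring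
    rw [h7]
    refine (abs_add_le _ _).trans ?_
    have h8 : |∫ z, Θ z ∂Q| ≤ 4 * √(7 * δ) := hjI
    linarith
  have hlim : Tendsto (fun δ : ℝ => 4 * √(7 * δ) + 6 * δ) (𝓝[>] 0) (𝓝 (4 * √(7 * 0) + 6 * 0)) :=
    Continuous.tendsto' (by fun_prop) _ _ rfl |>.mono_left nhdsWithin_le_nhds
  have hle0 := ge_of_tendsto hlim (eventually_nhdsWithin_of_forall fun δ hδ => key δ hδ)
  simp only [mul_zero, sqrt_zero, add_zero] at hle0
  exact abs_eq_zero.1 (le_antisymm hle0 (abs_nonneg _))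

end InvariancePrinciple

section FibreAverages

open scoped ENNReal
open ProbabilityTheory

variable {Ω : Type*} {ℱ mΩ : MeasurableSpace Ω} {μ : Measure Ω}

lemma measurable_indicator_one {X : Type*} {mX : MeasurableSpace X} {t : Set X}
    (ht : MeasurableSet t) : Measurable (t.indicator fun _ => (1 : ℝ)) :=
  measurable_const.indicator ht

lemma integral_mul_condExp [IsProbabilityMeasure μ] (hℱ : ℱ ≤ mΩ) {g h : Ω → ℝ}
    (hg : Integrable g μ) (hh : Measurable[ℱ] h) (h1 : ∀ ω, |h ω| ≤ 1) :
    ∫ ω, h ω * (μ[g|ℱ]) ω ∂μ = ∫ ω, h ω * g ω ∂μ := by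
  have hi : Integrable (h * g) μ :=
    hg.bdd_mul (hh.mono hℱ le_rfl).aestronglyMeasurable (c := 1) (Eventually.of_forall h1)
  have := condExp_mul_of_stronglyMeasurable_left hh.stronglyMeasurable hi hg
  rw [← integral_condExp hℱ (f := fun ω => h ω * g ω)]
  exact integral_congr_ae this.symm

lemma exists_bounded_condExp_version [IsProbabilityMeasure μ] {g : Ω → ℝ}
    (h1 : ∀ ω, |g ω| ≤ 1) :
    ∃ g' : Ω → ℝ, Measurable[ℱ] g' ∧ (∀ ω, |g' ω| ≤ 1) ∧ g' =ᵐ[μ] μ[g|ℱ] := by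
  refine ⟨fun ω => max (-1) (min 1 ((μ[g|ℱ]) ω)), ?_, fun ω => ?_, ?_⟩
  · exact measurable_const.max (measurable_const.min stronglyMeasurable_condExp.measurable)
  · exact abs_le.2 ⟨le_max_left _ _, max_le (by norm_num) (min_le_left _ _)⟩
  · have := ae_bdd_abs_condExp_of_ae_bdd_abs (μ := μ) (m := ℱ) (Eventually.of_forall h1)
    filter_upwards [this] with ω hω
    have := abs_le.1 hω
    rw [min_eq_right this.2, max_eq_right this.1]

/-- Zero growth rate forces the fibre averages of an invariant family of measures to be measurable
with respect to any generating sub-σ-algebra that determines the cocycle. -/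
lemma condExp_fibre_average_ae_eq [IsProbabilityMeasure μ] (hℱ : ℱ ≤ mΩ) {T T' : Ω → Ω}
    (hT : MeasurePreserving T μ μ) (hT' : Measurable T') (hTinv : ∀ ω, T' (T ω) = ω)
    (hTF : Measurable[ℱ, ℱ] T)
    (hmono : Monotone fun n : ℕ => ℱ.comap T'^[n]) (hgen : mΩ ≤ ⨆ n : ℕ, ℱ.comap T'^[n])
    {B : Ω → SL2} (hB : ∀ i j, Measurable[ℱ] fun ω => (B ω).1 i j)
    {K : ℝ} (hK : ∀ ω, ‖act (B ω)‖ ≤ K)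
    (hgrow : Tendsto (fun n : ℕ => 1 / (n : ℝ) * ∫ ω, log ‖act (cocycle T B n ω)‖ ∂μ) atTop (𝓝 0))
    (ν : Kernel Ω UnitCircle) [IsMarkovKernel ν]
    (hν : ∀ᵐ ω ∂μ, (ν ω).map (circleAct (B ω)) = ν (T ω))
    {f : C(UnitCircle, ℝ)} (hf : ∀ ξ, |f ξ| ≤ 1) :
    μ[fun ω => ∫ ξ, f ξ ∂ν ω|ℱ] =ᵐ[μ] fun ω => ∫ ξ, f ξ ∂ν ω := by
  set g : Ω → ℝ := fun ω => ∫ ξ, f ξ ∂ν ω with hg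
  have hgm : Measurable g := measurable_integral_kernel ν f
  have hg1 : ∀ ω, |g ω| ≤ 1 := fun ω => abs_integral_le_one hf
  have hgi : Integrable g μ :=
    Integrable.of_bound hgm.aestronglyMeasurable 1 (Eventually.of_forall hg1)
  have hT'k : ∀ k, Measurable T'^[k] := fun k => hT'.iterate k
  have hle : ∀ k : ℕ, ℱ.comap T'^[k] ≤ mΩ := fun k =>
    (MeasurableSpace.comap_mono hℱ).trans (hT'k k).comap_le
  let 𝒢 : Filtration ℕ mΩ := ⟨fun n : ℕ => ℱ.comap T'^[n], hmono, hle⟩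
  have key : ∀ k : ℕ, μ[g|ℱ] =ᵐ[μ] μ[g|𝒢 k] := by
    intro k
    have h0 : ℱ ≤ 𝒢 k := by
      have := hmono (Nat.zero_le k)
      simpa using this
    refine ae_eq_condExp_of_forall_setIntegral_eq (hle k) hgi
      (fun s _ _ => integrable_condExp.integrableOn) ?_
      (stronglyMeasurable_condExp.mono h0).aestronglyMeasurable
    rintro s ⟨t, ht, rfl⟩ -
    set b : Ω → ℝ := t.indicator (fun _ => 1) with hb
    have hbm : Measurable[ℱ] b :=
      @measurable_indicator_one Ω ℱ t ht
    have hb1 : ∀ ω, |b ω| ≤ 1 := fun ω => by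
      by_cases h : ω ∈ t <;> simp [hb, h]
    have hbT : Measurable fun ω => b (T'^[k] ω) := (hbm.mono hℱ le_rfl).comp (hT'k k)
    have hbTi : Integrable (fun ω => b (T'^[k] ω)) μ :=
      Integrable.of_bound hbT.aestronglyMeasurable 1 (Eventually.of_forall fun ω => hb1 _)
    obtain ⟨b', hbm', hb1', hb'⟩ := exists_bounded_condExp_version (μ := μ) (ℱ := ℱ)
      (fun ω => hb1 (T'^[k] ω))
    have hinv : ∀ ω, T'^[k] (T^[k] ω) = ω := (show Function.LeftInverse T' T from hTinv).iterate k
    have hgrow' : Tendsto (fun n : ℕ => 1 / (n : ℝ) *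
        ∫ ω, log ‖act (cocycle T^[k] (cocycle T B k) n ω)‖ ∂μ) atTop (𝓝 0) := by
      simp only [cocycle_iterate]
      rcases Nat.eq_zero_or_pos k with rfl | hk
      · have : ∀ ω, ‖act (cocycle T B 0 ω)‖ = 1 := fun ω => le_antisymm
          (by simpa using norm_cocycle_le hK 0 ω) (one_le_norm_act _)
        simp [this]
      · have h := (hgrow.comp ((tendsto_id (α := ℕ)).const_mul_atTop' hk)).const_mul (k : ℝ)
        rw [mul_zero] at h
        refine h.congr fun n => ?_
        simp only [Function.comp_apply, id, Nat.cast_mul]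
        have : (k : ℝ) ≠ 0 := by positivity
        rcases eq_or_ne (n : ℝ) 0 with h0 | h0
        · simp [h0]
        · field_simp
    have h := integral_innovation_mul_eq_zero hℱ (hT.iterate k) (hT'k k) hinv (hTF.iterate k)
      (@measurable_cocycle_apply Ω ℱ T B hTF hB k) (norm_cocycle_le hK k) hgrow' ν
      (ae_map_cocycle_eq hT hν k) hf hbm hbm' hb1 hb1' (fun s hs => by
        rw [← setIntegral_condExp hℱ hbTi hs]
        exact integral_congr_ae (ae_restrict_of_ae hb'.symm))
    have hsplit : ∀ u : Ω → ℝ, Integrable u μ →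
        ∫ ω in T'^[k] ⁻¹' t, u ω ∂μ = ∫ ω, b (T'^[k] ω) * u ω ∂μ := by
      intro u _
      rw [← integral_indicator (hT'k k (hℱ _ ht))]
      refine integral_congr_ae (Eventually.of_forall fun ω => ?_)
      by_cases hω : T'^[k] ω ∈ t <;> simp [hb, hω]
    have hEg : Integrable (μ[g|ℱ]) μ := integrable_condExp
    rw [hsplit _ hgi, hsplit _ hEg]
    have e1 : ∫ ω, b (T'^[k] ω) * g ω ∂μ = ∫ ω, b' ω * g ω ∂μ := by
      rw [← sub_eq_zero, ← integral_sub]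
      · simpa only [← sub_mul] using h
      · exact hgi.bdd_mul hbT.aestronglyMeasurable (c := 1) (Eventually.of_forall fun ω => hb1 _)
      · exact hgi.bdd_mul (hbm'.mono hℱ le_rfl).aestronglyMeasurable (c := 1)
          (Eventually.of_forall hb1')
    obtain ⟨g', hg'm, hg'1, hg'⟩ := exists_bounded_condExp_version (μ := μ) (ℱ := ℱ) hg1
    rw [e1, ← integral_mul_condExp hℱ hgi hbm' hb1']
    calc _ = ∫ ω, g' ω * b (T'^[k] ω) ∂μ := integral_congr_ae (by
          filter_upwards [hg'] with ω hω; rw [hω, mul_comm])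
      _ = ∫ ω, g' ω * (μ[fun ω => b (T'^[k] ω)|ℱ]) ω ∂μ :=
          (integral_mul_condExp hℱ hbTi hg'm hg'1).symm
      _ = _ := integral_congr_ae (by
          filter_upwards [hg', hb'] with ω h1 h2; rw [h1, h2, mul_comm])
  have hlim := hgi.tendsto_ae_condExp (ℱ := 𝒢) (hgm.mono hgen le_rfl).stronglyMeasurable
  filter_upwards [hlim, ae_all_iff.2 key] with ω h1 h2
  exact tendsto_nhds_unique (tendsto_const_nhds.congr h2) h1

end FibreAverages

section InvariantLift

open scoped ENNReal BoundedContinuousFunction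
open ProbabilityTheory

variable {X : Type*} [TopologicalSpace X] [PolishSpace X] [MeasurableSpace X] [BorelSpace X]
  {μ : Measure X}

lemma isTightMeasureSet_singleton_of_polishSpace [IsProbabilityMeasure μ] :
    IsTightMeasureSet {μ} := by
  let _ := TopologicalSpace.upgradeIsCompletelyMetrizable X
  exact isTightMeasureSet_singleton

/-- The averages of the first `n + 1` push-forwards of a measure. -/
noncomputable def birkhoffMeasure {Z : Type*} [MeasurableSpace Z] (F : Z → Z) (m : Measure Z)
    (n : ℕ) : Measure Z :=
  ((n + 1 : ℕ) : ℝ≥0∞)⁻¹ • ∑ j ∈ Finset.range (n + 1), m.map F^[j]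

lemma isProbabilityMeasure_birkhoffMeasure {Z : Type*} [MeasurableSpace Z] {F : Z → Z}
    (hF : Measurable F) (m : Measure Z) [IsProbabilityMeasure m] (n : ℕ) :
    IsProbabilityMeasure (birkhoffMeasure F m n) := by
  constructor
  have : ∀ j, (m.map F^[j]) univ = 1 := fun j => by
    rw [Measure.map_apply (hF.iterate j) .univ, preimage_univ, measure_univ]
  simp only [birkhoffMeasure, Measure.smul_apply, Measure.finsetSum_apply, this, smul_eq_mul,
    Finset.sum_const, Finset.card_range, nsmul_eq_mul, mul_one]
  exact ENNReal.inv_mul_cancel (by simp) (by simp)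

lemma integral_birkhoffMeasure {Z : Type*} [TopologicalSpace Z] [MeasurableSpace Z] [BorelSpace Z]
    {F : Z → Z} (hF : Measurable F) (m : Measure Z) [IsProbabilityMeasure m] (n : ℕ)
    (g : Z →ᵇ ℝ) :
    ∫ z, g z ∂birkhoffMeasure F m n
      = ((n : ℝ) + 1)⁻¹ * ∑ j ∈ Finset.range (n + 1), ∫ z, g (F^[j] z) ∂m := by
  have hp : ∀ j, IsProbabilityMeasure (m.map F^[j]) := fun j =>
    Measure.isProbabilityMeasure_map (hF.iterate j).aemeasurable
  rw [birkhoffMeasure, integral_smul_measure, integral_finsetSum_measure fun j _ => g.integrable _]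
  simp only [ENNReal.toReal_inv, smul_eq_mul, Nat.cast_add, Nat.cast_one]
  congr 1
  refine Finset.sum_congr rfl fun j _ => ?_
  rw [integral_map (hF.iterate j).aemeasurable g.continuous.measurable.aestronglyMeasurable]

/-- An invariant measure lifts to an invariant measure of a continuous skew product with compact
fibre. -/
lemma exists_invariant_lift [IsProbabilityMeasure μ] {T : X → X} (hT : MeasurePreserving T μ μ)
    {F : X × UnitCircle → X × UnitCircle} (hF : Continuous F) (hFT : ∀ z, (F z).1 = T z.1) :
    ∃ m : Measure (X × UnitCircle), IsProbabilityMeasure m ∧ m.fst = μ ∧ m.map F = m := by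
  set m₀ : Measure (X × UnitCircle) := μ.prod (Measure.dirac (radial 0)) with hm₀
  have hFm : Measurable F := hF.measurable
  have hp := isProbabilityMeasure_birkhoffMeasure hFm m₀
  let u : ℕ → ProbabilityMeasure (X × UnitCircle) := fun n => ⟨birkhoffMeasure F m₀ n, hp n⟩
  have hit : ∀ j z, (F^[j] z).1 = T^[j] z.1 := by
    intro j
    induction j with
    | zero => intro z; rfl
    | succ j ih => intro z; rw [Function.iterate_succ_apply', Function.iterate_succ_apply', hFT, ih]
  have hfst : ∀ n, (birkhoffMeasure F m₀ n).fst = μ := by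
    intro n
    have h1 : ∀ j, (m₀.map F^[j]).map Prod.fst = μ := by
      intro j
      rw [Measure.map_map measurable_fst (hFm.iterate j)]
      have : Prod.fst ∘ F^[j] = T^[j] ∘ Prod.fst := funext fun z => hit j z
      rw [this, ← Measure.map_map (hT.measurable.iterate j) measurable_fst, hm₀,
        Measure.map_fst_prod, measure_univ, one_smul, (hT.iterate j).map_eq]
    ext s hs
    rw [Measure.fst_apply hs, birkhoffMeasure, Measure.smul_apply, Measure.finsetSum_apply]
    have h2 : ∀ j, (m₀.map F^[j]) (Prod.fst ⁻¹' s) = μ s := fun j => by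
      rw [← Measure.map_apply measurable_fst hs, h1]
    simp only [h2, Finset.sum_const, Finset.card_range, nsmul_eq_mul, smul_eq_mul]
    rw [← mul_assoc, ENNReal.inv_mul_cancel (by simp) (by simp), one_mul]
  have htight : IsTightMeasureSet {((ρ : ProbabilityMeasure (X × UnitCircle)) :
      Measure (X × UnitCircle)) | ρ ∈ range u} := by
    refine IsTightMeasureSet.prodMk ?_ IsTightMeasureSet.of_compactSpace
    refine (isTightMeasureSet_singleton_of_polishSpace (μ := μ)).subset ?_
    rintro _ ⟨_, ⟨_, ⟨n, rfl⟩, rfl⟩, rfl⟩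
    exact hfst n
  obtain ⟨m, -, hm⟩ := (isCompact_closure_of_isTightMeasureSet htight).exists_mapClusterPt
    (f := atTop) (u := u)
    (tendsto_principal.2 (Eventually.of_forall fun n => subset_closure (mem_range_self n)))
  have hval : ∀ (φ : ProbabilityMeasure (X × UnitCircle) → ℝ), Continuous φ → ∀ c : ℝ,
      Tendsto (fun n => φ (u n)) atTop (𝓝 c) → φ m = c := fun φ hφ c hc => by
    have h1 := hm.continuousAt_comp hφ.continuousAt
    have h2 : Filter.map (φ ∘ u) atTop ≤ 𝓝 c := hc
    have : (𝓝 (φ m) ⊓ 𝓝 c).NeBot := NeBot.mono h1 (inf_le_inf_left _ h2)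
    exact eq_of_nhds_neBot this
  refine ⟨m, inferInstance, ?_, ?_⟩
  · refine ext_of_forall_integral_eq_of_IsFiniteMeasure fun g => ?_
    rw [Measure.fst, integral_map measurable_fst.aemeasurable
      g.continuous.measurable.aestronglyMeasurable]
    refine hval (fun ρ => ∫ z, g z.1 ∂(ρ : Measure (X × UnitCircle)))
      (ProbabilityMeasure.continuous_integral_boundedContinuousFunction
        (g.compContinuous ⟨Prod.fst, continuous_fst⟩)) _ (tendsto_const_nhds.congr fun n => ?_)
    change _ = ∫ z, g z.1 ∂birkhoffMeasure F m₀ n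
    rw [← integral_map (f := g) measurable_fst.aemeasurable
      g.continuous.measurable.aestronglyMeasurable, ← Measure.fst, hfst]
  · have : IsProbabilityMeasure ((m : Measure (X × UnitCircle)).map F) :=
      Measure.isProbabilityMeasure_map hFm.aemeasurable
    refine ext_of_forall_integral_eq_of_IsFiniteMeasure fun g => ?_
    rw [integral_map hFm.aemeasurable g.continuous.measurable.aestronglyMeasurable, ← sub_eq_zero]
    let gF : X × UnitCircle →ᵇ ℝ := g.compContinuous ⟨F, hF⟩
    refine hval (fun ρ => ∫ z, g (F z) ∂(ρ : Measure (X × UnitCircle)) -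
      ∫ z, g z ∂(ρ : Measure (X × UnitCircle)))
      ((ProbabilityMeasure.continuous_integral_boundedContinuousFunction gF).sub
        (ProbabilityMeasure.continuous_integral_boundedContinuousFunction g)) 0 ?_
    have hb : ∀ j, |∫ z, g (F^[j] z) ∂m₀| ≤ ‖g‖ := fun j => by
      simpa using norm_integral_le_of_norm_le_const (μ := m₀) (f := fun z => g (F^[j] z)) (C := ‖g‖)
        (Eventually.of_forall fun z => g.norm_coe_le_norm _)
    have hle : ∀ n : ℕ, |∫ z, g (F z) ∂birkhoffMeasure F m₀ n - ∫ z, g z ∂birkhoffMeasure F m₀ n|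
        ≤ 2 * ‖g‖ * (1 / ((n : ℝ) + 1)) := by
      intro n
      have e1 := integral_birkhoffMeasure hFm m₀ n gF
      have e2 := integral_birkhoffMeasure hFm m₀ n g
      have e3 : ∀ j, ∫ z, gF (F^[j] z) ∂m₀ = ∫ z, g (F^[j + 1] z) ∂m₀ := fun j => by
        simp only [Function.iterate_succ_apply']; rfl
      change ∫ z, g (F z) ∂birkhoffMeasure F m₀ n = _ at e1
      rw [e1, e2, ← mul_sub, ← Finset.sum_sub_distrib]
      simp only [e3]
      rw [Finset.sum_range_sub (fun j => ∫ z, g (F^[j] z) ∂m₀), abs_mul,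
        abs_of_pos (by positivity : (0 : ℝ) < ((n : ℝ) + 1)⁻¹), one_div, mul_comm]
      gcongr
      exact (abs_sub _ _).trans (by linarith [hb (n + 1), hb 0])
    have hlim : Tendsto (fun n : ℕ => 2 * ‖g‖ * (1 / ((n : ℝ) + 1))) atTop (𝓝 0) := by
      simpa using tendsto_one_div_add_atTop_nhds_zero_nat.const_mul (2 * ‖g‖)
    exact squeeze_zero_norm hle hlim

/-- A continuous projective cocycle over an invertible system admits an invariant measurable family
of fibre measures. -/
lemma exists_invariant_kernel [IsProbabilityMeasure μ] {T T' : X → X}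
    (hT : MeasurePreserving T μ μ) (hT' : Measurable T') (hTinv : ∀ ω, T' (T ω) = ω)
    {B : X → SL2} (hB : ∀ i j, Measurable fun ω => (B ω).1 i j)
    (hF : Continuous fun z : X × UnitCircle => (T z.1, circleAct (B z.1) z.2)) :
    ∃ ν : Kernel X UnitCircle, IsMarkovKernel ν ∧
      ∀ᵐ ω ∂μ, (ν ω).map (circleAct (B ω)) = ν (T ω) := by
  obtain ⟨m, hm, hfst, hinv⟩ := exists_invariant_lift hT hF fun _ => rfl
  have : Nonempty UnitCircle := ⟨radial 0⟩
  have hact : Measurable fun z : X × UnitCircle => circleAct (B z.1) z.2 :=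
    measurable_circleAct (B := fun z : X × UnitCircle => B z.1)
      (fun i j => (hB i j).comp measurable_fst) measurable_snd
  set ν := m.condKernel with hν
  have hm' : m = μ ⊗ₘ ν := by rw [← hfst]; exact m.disintegrate ν |>.symm
  let κ₀ : Kernel X UnitCircle := (Kernel.id ×ₖ ν).map fun z => circleAct (B z.1) z.2
  have hκ₀m : IsMarkovKernel κ₀ := Kernel.IsMarkovKernel.map _ hact
  have hκ₀ : ∀ ω, κ₀ ω = (ν ω).map (circleAct (B ω)) := by
    intro ω
    refine Measure.ext_of_lintegral _ fun g hg => ?_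
    have hga : Measurable fun z : X × UnitCircle => g (circleAct (B z.1) z.2) := hg.comp hact
    rw [Kernel.lintegral_map _ hact _ hg, Kernel.lintegral_id_prod hga,
      lintegral_map hg (continuous_circleAct _).measurable]
  let κ : Kernel X UnitCircle := κ₀.comap T' hT'
  have hκ : m = m.fst ⊗ₘ κ := by
    rw [hfst]
    refine Measure.ext_of_lintegral _ fun g hg => ?_
    have hgm' : Measurable fun ω => ∫⁻ ξ, g (ω, ξ) ∂κ ω := hg.lintegral_kernel_prod_right'
    have hgF : Measurable fun z : X × UnitCircle => g (T z.1, circleAct (B z.1) z.2) :=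
      hg.comp hF.measurable
    rw [Measure.lintegral_compProd hg]
    conv_rhs => rw [← hT.map_eq, lintegral_map hgm' hT.measurable]
    conv_lhs => rw [← hinv, lintegral_map hg hF.measurable, hm',
      Measure.lintegral_compProd hgF]
    refine lintegral_congr fun ω => ?_
    have hgω : Measurable fun ξ => g (T ω, ξ) := hg.comp measurable_prodMk_left
    rw [Kernel.comap_apply, hTinv, hκ₀, lintegral_map hgω (continuous_circleAct _).measurable]
  have hae := eq_condKernel_of_measure_eq_compProd κ hκ
  rw [hfst] at hae
  refine ⟨ν, inferInstance, ?_⟩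
  filter_upwards [hT.quasiMeasurePreserving.ae hae] with ω hω
  rw [← hκ₀, hν, ← hω, Kernel.comap_apply, hTinv]

end InvariantLift

section ProjectiveRigidity

/-- The area form of the plane. -/
def wedge (v w : Plane) : ℝ := v 0 * w 1 - v 1 * w 0

lemma det_eq_one (g : SL2) : g.1 0 0 * g.1 1 1 - g.1 0 1 * g.1 1 0 = 1 := by
  rw [← Matrix.det_fin_two]; exact g.2

lemma trace_eq (g : SL2) : g.1.trace = g.1 0 0 + g.1 1 1 := Matrix.trace_fin_two _

lemma wedge_act_act (g : SL2) (v w : Plane) : wedge (act g v) (act g w) = wedge v w := by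
  simp only [wedge, act_apply]
  linear_combination (v 0 * w 1 - v 1 * w 0) * det_eq_one g

lemma wedge_smul_smul (c : ℝ) (v w : Plane) : wedge (c • v) (c • w) = c ^ 2 * wedge v w := by
  simp only [wedge, PiLp.smul_apply, smul_eq_mul]; ring

lemma act_act_eq (g : SL2) (v : Plane) : act g (act g v) = g.1.trace • act g v - v := by
  ext i
  simp only [act_apply, PiLp.sub_apply, PiLp.smul_apply, smul_eq_mul, trace_eq]
  fin_cases i
  · simp only [Fin.zero_eta]
    linear_combination (-(v 0)) * det_eq_one g
  · simp only [Fin.mk_one]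
    linear_combination (-(v 1)) * det_eq_one g

lemma tendsto_norm_act_iterate {g : SL2} (hg : 2 < |g.1.trace|) {v : Plane} {c : ℝ} (hc : 0 < c)
    (hv : ∀ n, c ≤ ‖(act g)^[n] v‖) : Tendsto (fun n => ‖(act g)^[n] v‖) atTop atTop := by
  set a : ℕ → ℝ := fun n => ‖(act g)^[n] v‖ with ha
  set s := (|g.1.trace| - 2) * c with hs
  have hs0 : 0 < s := mul_pos (by linarith) hc
  have h1 : ∀ n, a (n + 1) - a n + s ≤ a (n + 2) - a (n + 1) := by
    intro n
    have e : g.1.trace • (act g)^[n + 1] v = (act g)^[n + 2] v + (act g)^[n] v := by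
      rw [Function.iterate_succ_apply', Function.iterate_succ_apply', Function.iterate_succ_apply',
        act_act_eq]
      abel
    have h2 : |g.1.trace| * a (n + 1) ≤ a (n + 2) + a n := by
      rw [← Real.norm_eq_abs, ha]
      simp only
      rw [← norm_smul, e]
      exact norm_add_le _ _
    have h3 := hv (n + 1)
    have h4 : (|g.1.trace| - 2) * c ≤ (|g.1.trace| - 2) * a (n + 1) :=
      mul_le_mul_of_nonneg_left h3 (by linarith)
    linarith
  have h2 : ∀ n : ℕ, a 1 - a 0 + n * s ≤ a (n + 1) - a n := by
    intro n
    induction n with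
    | zero => simp
    | succ n ih => push_cast; linarith [h1 n]
  obtain ⟨N, hN⟩ := exists_nat_gt ((1 - (a 1 - a 0)) / s)
  rw [div_lt_iff₀ hs0] at hN
  have h3 : ∀ n : ℕ, (n : ℝ) ≤ a (n + N) := by
    intro n
    induction n with
    | zero => simp [ha]
    | succ n ih =>
      have h4 := h2 (n + N)
      have h5 : (0 : ℝ) ≤ n * s := by positivity
      have : n + 1 + N = n + N + 1 := by ring
      rw [this]
      push_cast at h4 ⊢
      nlinarith
  rw [← tendsto_add_atTop_iff_nat N]
  exact tendsto_atTop_mono h3 tendsto_natCast_atTop_atTop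

lemma coe_iterate_circleAct (g : SL2) (ξ : UnitCircle) (n : ℕ) :
    ((circleAct g)^[n] ξ : Plane) = ‖(act g)^[n] (ξ : Plane)‖⁻¹ • (act g)^[n] (ξ : Plane) := by
  have h0 : ∀ n, (act g)^[n] (ξ : Plane) ≠ 0 := by
    intro n
    induction n with
    | zero => exact coe_ne_zero ξ
    | succ n ih => rw [Function.iterate_succ_apply']; exact act_ne_zero g ih
  rw [← coe_radial (h0 n)]
  congr 1
  induction n with
  | zero => exact (radial_coe ξ).symm
  | succ n ih =>
    rw [Function.iterate_succ_apply', Function.iterate_succ_apply', ih, circleAct_radial _ _ (h0 n)]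

lemma wedge_act_iterate (g : SL2) (v : Plane) (n : ℕ) :
    wedge ((act g)^[n] v) (act g ((act g)^[n] v)) = wedge v (act g v) := by
  induction n with
  | zero => rfl
  | succ n ih => rw [Function.iterate_succ_apply', wedge_act_act, ih]

lemma continuous_wedge_act (g : SL2) : Continuous fun ξ : UnitCircle => wedge ξ (act g ξ) := by
  simp only [wedge, act_apply]
  fun_prop

/-- A measure invariant under a hyperbolic projective map is carried by its eigendirections. -/
lemma ae_wedge_act_eq_zero {g : SL2} (hg : 2 < |g.1.trace|) {ρ : Measure UnitCircle}
    [IsProbabilityMeasure ρ] (hρ : ρ.map (circleAct g) = ρ) :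
    ∀ᵐ ξ : UnitCircle ∂ρ, wedge (ξ : Plane) (act g (ξ : Plane)) = 0 := by
  set q : UnitCircle → ℝ := fun ξ => wedge ξ (act g ξ) with hq
  have hqc : Continuous q := continuous_wedge_act g
  obtain ⟨C, hC⟩ := isCompact_univ.exists_bound_of_continuousOn (f := q) hqc.continuousOn
  have hC' : ∀ ξ, |q ξ| ≤ C := fun ξ => hC ξ (mem_univ _)
  have hmp : MeasurePreserving (circleAct g) ρ ρ := ⟨(continuous_circleAct g).measurable, hρ⟩
  have hqn : ∀ n ξ, q ((circleAct g)^[n] ξ) = (‖(act g)^[n] (ξ : Plane)‖⁻¹) ^ 2 * q ξ := by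
    intro n ξ
    simp only [hq]
    rw [coe_iterate_circleAct, map_smul, wedge_smul_smul, wedge_act_iterate]
  have hlim : ∀ ξ, Tendsto (fun n => |q ((circleAct g)^[n] ξ)|) atTop (𝓝 0) := by
    intro ξ
    by_cases h0 : q ξ = 0
    · simp [hqn, h0]
    have hb : ∀ n, |q ξ| ≤ C * ‖(act g)^[n] (ξ : Plane)‖ ^ 2 := by
      intro n
      have h1 := hC' ((circleAct g)^[n] ξ)
      rw [hqn, abs_mul, abs_of_nonneg (sq_nonneg _), inv_pow, inv_mul_eq_div] at h1
      rcases eq_or_ne (‖(act g)^[n] (ξ : Plane)‖ ^ 2) 0 with h2 | h2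
      · exfalso
        have := hqn n ξ
        have h3 := wedge_act_iterate g ξ n
        have h4 : (act g)^[n] (ξ : Plane) = 0 := norm_eq_zero.1 (pow_eq_zero_iff two_ne_zero |>.1 h2)
        rw [h4] at h3
        exact h0 (by simp only [hq]; rw [← h3]; simp [wedge])
      · rwa [div_le_iff₀ (lt_of_le_of_ne (sq_nonneg _) h2.symm)] at h1
    have hC0 : 0 < C := by
      have := hb 0
      have h1 : ‖((act g)^[0] (ξ : Plane))‖ = 1 := by simp
      rw [h1] at this
      have := abs_pos.2 h0
      linarith
    have hgrow := tendsto_norm_act_iterate hg (v := ξ) (c := √(|q ξ| / C))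
      (sqrt_pos.2 (div_pos (abs_pos.2 h0) hC0)) fun n => by
        refine sqrt_le_iff.2 ⟨norm_nonneg _, ?_⟩
        rw [div_le_iff₀ hC0, mul_comm]; exact hb n
    have h2 := ((tendsto_inv_atTop_zero.comp hgrow).pow 2).mul_const (q ξ) |>.abs
    simp only [ne_eq, OfNat.ofNat_ne_zero, not_false_eq_true, zero_pow, zero_mul, abs_zero] at h2
    refine h2.congr fun n => ?_
    rw [hqn]; rfl
  have hconst : ∀ n, ∫ ξ, |q ((circleAct g)^[n] ξ)| ∂ρ = ∫ ξ, |q ξ| ∂ρ := by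
    intro n
    conv_rhs => rw [← (hmp.iterate n).map_eq]
    rw [integral_map (hmp.iterate n).measurable.aemeasurable
      hqc.abs.measurable.aestronglyMeasurable]
  have h_integrable : Tendsto (fun n => ∫ ξ, |q ((circleAct g)^[n] ξ)| ∂ρ) atTop
      (𝓝 (∫ _, (0 : ℝ) ∂ρ)) := by
    refine tendsto_integral_of_dominated_convergence (fun _ => C)
      (fun n => ((hqc.comp ((continuous_circleAct g).iterate n)).abs.measurable).aestronglyMeasurable)
      (integrable_const _) (fun n => Eventually.of_forall fun ξ => ?_) (Eventually.of_forall hlim)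
    rw [Real.norm_eq_abs, abs_abs]
    exact hC' _
  simp only [hconst, integral_zero] at h_integrable
  have h0 : ∫ ξ, |q ξ| ∂ρ = 0 := tendsto_nhds_unique tendsto_const_nhds h_integrable
  have hqi : Integrable (fun ξ => |q ξ|) ρ :=
    Integrable.of_bound hqc.abs.measurable.aestronglyMeasurable C
      (Eventually.of_forall fun ξ => by rw [Real.norm_eq_abs, abs_abs]; exact hC' _)
  filter_upwards [(integral_eq_zero_iff_of_nonneg (fun ξ => abs_nonneg _) hqi).1 h0] with ξ hξ
  simpa using hξ

lemma wedge_act_ne_zero {R : SL2} (hR : |R.1.trace| < 2) {v : Plane} (hv : v ≠ 0) :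
    wedge v (act R v) ≠ 0 := by
  intro h
  have hd := det_eq_one R
  rw [trace_eq] at hR
  have ht : (R.1 0 0 + R.1 1 1) ^ 2 < 4 := by
    have := abs_lt.1 hR
    nlinarith
  simp only [wedge, act_apply] at h
  set x := v 0
  set y := v 1
  set p := R.1 0 0
  set q := R.1 0 1
  set r := R.1 1 0
  set s := R.1 1 1
  have hy : y = 0 := by
    by_contra hy
    have h1 : 0 < y ^ 2 := by positivity
    have h2 : (2 * r * x + (s - p) * y) ^ 2 = ((p + s) ^ 2 - 4) * y ^ 2 := by
      linear_combination (4 * r) * h - 4 * y ^ 2 * hd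
    nlinarith [sq_nonneg (2 * r * x + (s - p) * y)]
  have hx : x = 0 := by
    by_contra hx
    have h1 : 0 < x ^ 2 := by positivity
    have h2 : (2 * q * y - (s - p) * x) ^ 2 = ((p + s) ^ 2 - 4) * x ^ 2 := by
      linear_combination (-4 * q) * h - 4 * x ^ 2 * hd
    nlinarith [sq_nonneg (2 * q * y - (s - p) * x)]
  apply hv
  ext i
  fin_cases i
  · exact hx
  · exact hy

/-- No probability measure on directions is invariant under both a hyperbolic map and an elliptic
map of order different from four. -/
lemma not_invariant_of_hyperbolic_of_elliptic {g R : SL2} (hg : 2 < |g.1.trace|)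
    (hR : |R.1.trace| < 2) (hR0 : R.1.trace ≠ 0) (ρ : Measure UnitCircle) [IsProbabilityMeasure ρ]
    (h1 : ρ.map (circleAct g) = ρ) : ρ.map (circleAct R) ≠ ρ := by
  intro h2
  have hz := ae_wedge_act_eq_zero hg h1
  have hmp : MeasurePreserving (circleAct R) ρ ρ := ⟨(continuous_circleAct R).measurable, h2⟩
  obtain ⟨ξ, hξ0, hξ1, hξ2⟩ := (hz.and ((hmp.quasiMeasurePreserving.ae hz).and
    ((hmp.iterate 2).quasiMeasurePreserving.ae hz))).exists
  set v : Plane := (ξ : Plane) with hv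
  have hv0 : v ≠ 0 := coe_ne_zero ξ
  have hscale : ∀ (c : ℝ) (w : Plane), c ≠ 0 → wedge (c • w) (act g (c • w)) = 0 →
      wedge w (act g w) = 0 := fun c w hc hw => by
    rw [map_smul, wedge_smul_smul] at hw
    exact (mul_eq_zero.1 hw).resolve_left (pow_ne_zero _ hc)
  have e1 : wedge (act R v) (act g (act R v)) = 0 := by
    rw [coe_circleAct] at hξ1
    exact hscale _ _ (inv_ne_zero (norm_ne_zero_iff.2 (act_ne_zero R hv0))) hξ1
  have e2 : wedge (act R (act R v)) (act g (act R (act R v))) = 0 := by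
    rw [coe_iterate_circleAct] at hξ2
    exact hscale _ _ (inv_ne_zero (norm_ne_zero_iff.2
      (act_ne_zero R (act_ne_zero R hv0)))) hξ2
  have hw := wedge_act_ne_zero hR hv0
  set w := act R v with hwdef
  rw [act_act_eq] at e2
  set t := R.1.trace
  have e3 : wedge v (act g w) + wedge w (act g v) = 0 := by
    have : t * (wedge v (act g w) + wedge w (act g v)) = 0 := by
      have h3 : wedge (t • w - v) (act g (t • w - v)) = t ^ 2 * wedge w (act g w)
          + wedge v (act g v) - t * (wedge v (act g w) + wedge w (act g v)) := by
        simp only [wedge, act_apply, PiLp.sub_apply, PiLp.smul_apply, smul_eq_mul]; ring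
      rw [h3, e1, hξ0] at e2
      linarith
    exact (mul_eq_zero.1 this).resolve_left hR0
  simp only [wedge, act_apply] at hξ0 e1 e3 hw
  have hd := det_eq_one g
  rw [trace_eq] at hg
  set p := g.1 0 0
  set q := g.1 0 1
  set r := g.1 1 0
  set s := g.1 1 1
  set x := v 0
  set y := v 1
  set x' := w 0
  set y' := w 1
  have hD : (x * y' - y * x') ^ 2 ≠ 0 := pow_ne_zero _ hw
  have hr : r = 0 := by
    refine (mul_eq_zero.1 (?_ : r * (x * y' - y * x') ^ 2 = 0)).resolve_right hD
    linear_combination y' ^ 2 * hξ0 - y * y' * e3 + y ^ 2 * e1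
  have hq : q = 0 := by
    refine (mul_eq_zero.1 (?_ : q * (x * y' - y * x') ^ 2 = 0)).resolve_right hD
    linear_combination -x' ^ 2 * hξ0 + x * x' * e3 - x ^ 2 * e1
  have hs : s - p = 0 := by
    refine (mul_eq_zero.1 (?_ : (s - p) * (x * y' - y * x') ^ 2 = 0)).resolve_right hD
    linear_combination (-2 * x' * y') * hξ0 + (x * y' + y * x') * e3 - 2 * x * y * e1
  have hp : (p + s) ^ 2 = 4 := by
    linear_combination 4 * hd + 4 * q * hr + (s - p) * hs
  have := sq_abs (p + s)
  nlinarith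

end ProjectiveRigidity

section SymbolicDynamics

/-- The right shift on bi-infinite sequences. -/
def unshift (ω : ℤ → ℕ) : ℤ → ℕ := fun n => ω (n - 1)

lemma unshift_shift (ω : ℤ → ℕ) : unshift (shift ω) = ω := by
  funext n; simp [unshift, shift]

lemma shift_unshift (ω : ℤ → ℕ) : shift (unshift ω) = ω := by
  funext n; simp [unshift, shift]

lemma measurable_shift : Measurable shift :=
  measurable_pi_lambda _ fun _ => measurable_pi_apply _

lemma measurable_unshift : Measurable unshift :=
  measurable_pi_lambda _ fun _ => measurable_pi_apply _

lemma continuous_shift : Continuous shift :=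
  continuous_pi fun _ => continuous_apply _

lemma measurable_projPlus : Measurable projPlus :=
  measurable_pi_lambda _ fun _ => measurable_pi_apply _

lemma measurable_projMinus : Measurable projMinus :=
  measurable_pi_lambda _ fun _ => measurable_pi_apply _

lemma shift_iterate_apply (n : ℕ) (ω : ℤ → ℕ) (m : ℤ) : shift^[n] ω m = ω (m + n) := by
  induction n generalizing ω with
  | zero => simp
  | succ n ih =>
    rw [Function.iterate_succ_apply, ih]
    simp only [shift]
    congr 1; push_cast; ring

lemma unshift_iterate_apply (n : ℕ) (ω : ℤ → ℕ) (m : ℤ) : unshift^[n] ω m = ω (m - n) := by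
  induction n generalizing ω with
  | zero => simp
  | succ n ih =>
    rw [Function.iterate_succ_apply, ih]
    simp only [unshift]
    congr 1; push_cast; ring

lemma shift_mem_SFT {ℓ : ℕ} {W : Set (ℕ × ℕ)} {ω : ℤ → ℕ} (h : ω ∈ SFT ℓ W) :
    shift ω ∈ SFT ℓ W :=
  ⟨fun _ => h.1 _, fun _ => h.2 _⟩

lemma unshift_mem_SFT {ℓ : ℕ} {W : Set (ℕ × ℕ)} {ω : ℤ → ℕ} (h : ω ∈ SFT ℓ W) :
    unshift ω ∈ SFT ℓ W :=
  ⟨fun n => h.1 _, fun n => by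
    have := h.2 (n - 1)
    rw [sub_add_cancel] at this
    simpa [unshift] using this⟩

lemma shift_iterate_mem_SFT {ℓ : ℕ} {W : Set (ℕ × ℕ)} {ω : ℤ → ℕ} (h : ω ∈ SFT ℓ W) (n : ℕ) :
    shift^[n] ω ∈ SFT ℓ W := by
  induction n with
  | zero => exact h
  | succ n ih => rw [Function.iterate_succ_apply']; exact shift_mem_SFT ih

/-- Sequence with prescribed past `x` and future `y`. -/
def glue (x y : ℕ → ℕ) : ℤ → ℕ := fun n => if 0 ≤ n then y n.toNat else x (-n).toNat

lemma projPlus_glue (x y : ℕ → ℕ) : projPlus (glue x y) = y := by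
  funext n; simp [projPlus, glue]

lemma projMinus_glue {x y : ℕ → ℕ} (h : x 0 = y 0) : projMinus (glue x y) = x := by
  funext n
  rcases Nat.eq_zero_or_pos n with rfl | hn
  · simp [projMinus, glue, h]
  · have : ¬ (0 : ℤ) ≤ -(n : ℤ) := by omega
    simp only [projMinus, glue, if_neg this, neg_neg, Int.toNat_natCast]

lemma glue_mem_SFT {ℓ : ℕ} {W : Set (ℕ × ℕ)} {x y : ℕ → ℕ} (h : x 0 = y 0)
    (hx : ∃ ω ∈ SFT ℓ W, projMinus ω = x) (hy : ∃ ω ∈ SFT ℓ W, projPlus ω = y) :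
    glue x y ∈ SFT ℓ W := by
  obtain ⟨u, hu, rfl⟩ := hx
  obtain ⟨v, hv, rfl⟩ := hy
  have hneg : ∀ n : ℤ, n ≤ 0 → glue (projMinus u) (projPlus v) n = u n := by
    intro n hn
    have := congrFun (projMinus_glue h) (-n).toNat
    simp only [projMinus] at this
    rwa [Int.toNat_of_nonneg (by omega), neg_neg] at this
  have hpos : ∀ n : ℤ, 0 ≤ n → glue (projMinus u) (projPlus v) n = v n := by
    intro n hn
    simp only [glue, if_pos hn, projPlus, Int.toNat_of_nonneg hn]
  constructor
  · intro n
    rcases le_total n 0 with hn | hn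
    · rw [hneg n hn]; exact hu.1 n
    · rw [hpos n hn]; exact hv.1 n
  · intro n
    rcases lt_or_ge n 0 with hn | hn
    · rw [hneg n hn.le, hneg _ (by omega)]; exact hu.2 n
    · rw [hpos n hn, hpos _ (by omega)]; exact hv.2 n

lemma isClosed_SFT (ℓ : ℕ) (W : Set (ℕ × ℕ)) : IsClosed (SFT ℓ W) := by
  have e : SFT ℓ W = (⋂ n : ℤ, (fun ω : ℤ → ℕ => ω n) ⁻¹' {a | 1 ≤ a ∧ a ≤ ℓ}) ∩
      ⋂ n : ℤ, (fun ω : ℤ → ℕ => (ω n, ω (n + 1))) ⁻¹' W := by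
    ext ω; simp [SFT]
  rw [e]
  refine (isClosed_iInter fun n => (isClosed_discrete _).preimage (continuous_apply _)).inter
    (isClosed_iInter fun n => (isClosed_discrete _).preimage ?_)
  exact (continuous_apply _).prodMk (continuous_apply _)

lemma measurable_pairProj : Measurable pairProj :=
  measurable_projMinus.prodMk measurable_projPlus

/-- A function of the past agreeing almost surely with a function of the future is constant on
each one-letter cylinder. -/
lemma exists_ae_eq_const_of_localProductStructure {ℓ : ℕ} {W : Set (ℕ × ℕ)}
    {μ : Measure (ℤ → ℕ)} [IsProbabilityMeasure μ] (hconc : μ (SFT ℓ W)ᶜ = 0)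
    (hlps : LocalProductStructure ℓ W μ) {g : (ℤ → ℕ) → ℝ}
    {hpl hmi : (ℕ → ℕ) → ℝ} (hmeas_pl : Measurable hpl) (hmeas_mi : Measurable hmi)
    (hgpl : g =ᵐ[μ] hpl ∘ projPlus) (hgmi : g =ᵐ[μ] hmi ∘ projMinus) {j : ℕ} (hj : 1 ≤ j)
    (hjℓ : j ≤ ℓ) : ∃ c : ℝ, ∀ᵐ ω ∂μ, ω 0 = j → g ω = c := by
  obtain ⟨ψ, hψ, hall⟩ := hlps
  obtain ⟨hψi, hmap⟩ := hall j hj hjℓ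
  set μm := (Measure.map projMinus μ).restrict {a | a 0 = j} with hμm
  set μp := (Measure.map projPlus μ).restrict {a | a 0 = j} with hμp
  have hmset : MeasurableSet {a : ℕ → ℕ | a 0 = j} :=
    measurableSet_eq_fun (measurable_pi_apply 0) measurable_const
  have : IsProbabilityMeasure (Measure.map projMinus μ) :=
    Measure.isProbabilityMeasure_map measurable_projMinus.aemeasurable
  have : IsProbabilityMeasure (Measure.map projPlus μ) :=
    Measure.isProbabilityMeasure_map measurable_projPlus.aemeasurable
  have hSFT : ∀ᵐ ω ∂μ, ω ∈ SFT ℓ W := hconc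
  have hcpt : IsCompact (SFT ℓ W) := by
    refine IsCompact.of_isClosed_subset (isCompact_univ_pi (s := fun _ : ℤ => Set.Icc 1 ℓ)
      fun _ => (Set.finite_Icc 1 ℓ).isCompact) (isClosed_SFT ℓ W) fun ω hω n _ => hω.1 n
  have hcm : Continuous projMinus := continuous_pi fun _ => continuous_apply _
  have hcp : Continuous projPlus := continuous_pi fun _ => continuous_apply _
  have hgm : ∀ᵐ x ∂μm, x 0 = j ∧ ∃ ω ∈ SFT ℓ W, projMinus ω = x := by
    rw [hμm, ae_restrict_iff' hmset, ae_map_iff measurable_projMinus.aemeasurable]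
    · filter_upwards [hSFT] with ω hω h
      exact ⟨h, ω, hω, rfl⟩
    · exact hmset.compl.union (hmset.inter (hcpt.image hcm).isClosed.measurableSet) |>.congr (by
        ext x; simp only [mem_union, mem_compl_iff, mem_inter_iff, mem_ofPred_eq, mem_image]; tauto)
  have hgp : ∀ᵐ x ∂μp, x 0 = j ∧ ∃ ω ∈ SFT ℓ W, projPlus ω = x := by
    rw [hμp, ae_restrict_iff' hmset, ae_map_iff measurable_projPlus.aemeasurable]
    · filter_upwards [hSFT] with ω hω h
      exact ⟨h, ω, hω, rfl⟩
    · exact hmset.compl.union (hmset.inter (hcpt.image hcp).isClosed.measurableSet) |>.congr (by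
        ext x; simp only [mem_union, mem_compl_iff, mem_inter_iff, mem_ofPred_eq, mem_image]; tauto)
  set Z : Set ((ℕ → ℕ) × (ℕ → ℕ)) := {z | hmi z.1 ≠ hpl z.2} with hZ
  have hZm : MeasurableSet Z :=
    (measurableSet_eq_fun (hmeas_mi.comp measurable_fst) (hmeas_pl.comp measurable_snd)).compl
  have h1 : (μm.prod μp).withDensity (fun x => ENNReal.ofReal (ψ x)) Z = 0 := by
    rw [← hmap, Measure.map_apply measurable_pairProj hZm]
    refine Measure.absolutelyContinuous_of_le Measure.restrict_le_self ?_
    rw [← compl_compl (pairProj ⁻¹' Z)]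
    change ∀ᵐ ω ∂μ, ω ∈ (pairProj ⁻¹' Z)ᶜ
    filter_upwards [hgpl, hgmi] with ω e1 e2
    simp only [hZ, mem_compl_iff, mem_preimage, mem_ofPred_eq, not_not, pairProj]
    exact e2.symm.trans e1
  rw [withDensity_apply_eq_zero' hψi.1.aemeasurable.ennreal_ofReal] at h1
  have h2 : ∀ᵐ z ∂(μm.prod μp), hmi z.1 = hpl z.2 := by
    have h3 : ∀ᵐ z ∂(μm.prod μp), z ∉ {x | ENNReal.ofReal (ψ x) ≠ 0} ∩ Z :=
      measure_eq_zero_iff_ae_notMem.1 h1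
    filter_upwards [h3, Measure.quasiMeasurePreserving_fst.ae hgm,
      Measure.quasiMeasurePreserving_snd.ae hgp] with z hz hx hy
    by_contra hne
    refine hz ⟨?_, hne⟩
    have h0 : z.1 0 = z.2 0 := hx.1.trans hy.1.symm
    have h4 := hψ _ (glue_mem_SFT h0 hx.2 hy.2)
    rw [pairProj, projPlus_glue, projMinus_glue h0] at h4
    simpa using h4
  have h5 : ∀ᵐ x ∂μm, ∀ᵐ y ∂μp, hmi x = hpl y := Measure.ae_ae_of_ae_prod h2
  by_cases h0 : μm = 0
  · refine ⟨0, ?_⟩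
    rw [hμm, Measure.restrict_eq_zero, Measure.map_apply measurable_projMinus hmset] at h0
    have : ∀ᵐ ω ∂μ, ω ∉ projMinus ⁻¹' {a | a 0 = j} := by rw [ae_iff]; simpa using h0
    filter_upwards [this] with ω hω h
    exact absurd (by simpa [projMinus] using h) hω
  · have : NeZero μm := ⟨h0⟩
    obtain ⟨x, hx⟩ := h5.exists
    refine ⟨hmi x, ?_⟩
    rw [hμp, ae_restrict_iff' hmset] at hx
    filter_upwards [ae_of_ae_map measurable_projPlus.aemeasurable hx, hgpl] with ω e1 e2 h
    rw [e2]
    exact (e1 (by simpa [projPlus] using h)).symm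

/-- Ergodicity and full support make the subshift topologically transitive. -/
lemma exists_shift_iterate_mem {ℓ : ℕ} {W : Set (ℕ × ℕ)} {μ : Measure (ℤ → ℕ)}
    [IsProbabilityMeasure μ] (hconc : μ (SFT ℓ W)ᶜ = 0) (herg : Ergodic shift μ)
    (hsupp : FullSupport ℓ W μ) {U V : Set (ℤ → ℕ)} (hU : IsOpen U) (hV : IsOpen V)
    (hU' : (U ∩ SFT ℓ W).Nonempty) (hV' : (V ∩ SFT ℓ W).Nonempty) (N : ℕ) :
    ∃ n ≥ N, ∃ ω ∈ SFT ℓ W, ω ∈ U ∧ shift^[n] ω ∈ V := by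
  set S : Set (ℤ → ℕ) := ⋃ n ≥ N, shift^[n] ⁻¹' V with hS
  have hSo : IsOpen S := isOpen_iUnion fun n => isOpen_iUnion fun _ =>
    hV.preimage (continuous_shift.iterate n)
  have hsub : shift ⁻¹' S ⊆ S := by
    intro ω hω
    simp only [hS, mem_preimage, mem_iUnion] at hω ⊢
    obtain ⟨n, hn, h⟩ := hω
    exact ⟨n + 1, by omega, by rwa [Function.iterate_succ_apply]⟩
  have hVS : μ V ≤ μ S := by
    rw [← (herg.toMeasurePreserving.iterate N).measure_preimage hV.measurableSet.nullMeasurableSet]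
    refine measure_mono fun ω hω => ?_
    simp only [hS, mem_iUnion]
    exact ⟨N, le_rfl, hω⟩
  rcases herg.ae_empty_or_univ_of_preimage_ae_le hSo.measurableSet.nullMeasurableSet
    (Eventually.of_forall hsub) with h | h
  · have := measure_congr h
    rw [measure_empty] at this
    exact absurd (hsupp V hV hV') (by simp [le_zero_iff.1 (this ▸ hVS)])
  · have h1 : ∀ᵐ ω ∂μ, ω ∈ S := by
      filter_upwards [h] with ω hω
      exact (iff_of_eq hω).2 trivial
    have h2 : ∃ᵐ ω ∂μ, ω ∈ U := by
      rw [frequently_ae_iff]; exact (hsupp U hU hU').ne'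
    have h3 : ∀ᵐ ω ∂μ, ω ∈ SFT ℓ W := hconc
    obtain ⟨ω, hωU, hωS, hω⟩ := (h2.and_eventually (h1.and h3)).exists
    simp only [hS, mem_iUnion] at hωS
    obtain ⟨n, hn, hV⟩ := hωS
    exact ⟨n, hn, ω, hω, hωU, hV⟩

end SymbolicDynamics

section StepCocycle

open scoped ENNReal
open ProbabilityTheory

/-- The transfer matrix attached to a transition from the letter `i` to the letter `j`. -/
noncomputable def stepMatrix (k : ℝ) (i j : ℕ) : Matrix (Fin 2) (Fin 2) ℝ :=
  √((j : ℝ) / (i : ℝ)) •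
    !![((j : ℝ) + (i : ℝ)) / (j : ℝ) * Real.cos k, -((i : ℝ) / (j : ℝ)); (1 : ℝ), 0]

lemma det_stepMatrix (k : ℝ) {i j : ℕ} (hi : 1 ≤ i) (hj : 1 ≤ j) : (stepMatrix k i j).det = 1 := by
  have hi' : (0 : ℝ) < i := by exact_mod_cast hi
  have hj' : (0 : ℝ) < j := by exact_mod_cast hj
  rw [stepMatrix, Matrix.det_smul, Matrix.det_fin_two_of, Fintype.card_fin,
    Real.sq_sqrt (by positivity)]
  field_simp
  ring

open Classical in
/-- The transfer matrices as elements of `SL(2,ℝ)`, trivial off the alphabet. -/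
noncomputable def stepSL (ℓ : ℕ) (k : ℝ) (i j : ℕ) : SL2 :=
  if h : (1 ≤ i ∧ i ≤ ℓ) ∧ 1 ≤ j ∧ j ≤ ℓ then ⟨stepMatrix k i j, det_stepMatrix k h.1.1 h.2.1⟩ else 1

/-- The transfer cocycle as an `SL(2,ℝ)`-valued map on sequences. -/
noncomputable def stepCocycle (ℓ : ℕ) (k : ℝ) (ω : ℤ → ℕ) : SL2 := stepSL ℓ k (ω 0) (ω 1)

variable {ℓ : ℕ} {W : Set (ℕ × ℕ)} {k : ℝ}

lemma coe_stepSL {i j : ℕ} (hi : 1 ≤ i ∧ i ≤ ℓ) (hj : 1 ≤ j ∧ j ≤ ℓ) :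
    (stepSL ℓ k i j).1 = stepMatrix k i j :=
  congrArg Subtype.val (dif_pos ⟨hi, hj⟩ : stepSL ℓ k i j = _)

lemma Acoc_eq_stepMatrix (k : ℝ) (ω : ℤ → ℕ) : Acoc k ω = stepMatrix k (ω (-1)) (ω 0) := rfl

lemma coe_stepCocycle {ω : ℤ → ℕ} (hω : ω ∈ SFT ℓ W) :
    (stepCocycle ℓ k ω).1 = Acoc k (shift ω) := by
  rw [stepCocycle, coe_stepSL (hω.1 0) (hω.1 1), Acoc_eq_stepMatrix]
  simp [shift]

lemma coe_cocycle_stepCocycle {ω : ℤ → ℕ} (hω : ω ∈ SFT ℓ W) (n : ℕ) :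
    (cocycle shift (stepCocycle ℓ k) n ω).1 = AIter k (shift ω) n := by
  induction n with
  | zero => rfl
  | succ n ih =>
    have h := coe_stepCocycle (k := k) (shift_iterate_mem_SFT hω n)
    rw [← Function.iterate_succ_apply' shift, Function.iterate_succ_apply] at h
    rw [AIter, ← ih, ← h]
    rfl

lemma exists_norm_stepSL_le (ℓ : ℕ) (k : ℝ) : ∃ K, ∀ i j, ‖act (stepSL ℓ k i j)‖ ≤ K := by
  refine ⟨∑ z ∈ Finset.range (ℓ + 1) ×ˢ Finset.range (ℓ + 1), ‖act (stepSL ℓ k z.1 z.2)‖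
    + ‖act 1‖, fun i j => ?_⟩
  by_cases h : (1 ≤ i ∧ i ≤ ℓ) ∧ 1 ≤ j ∧ j ≤ ℓ
  · have := Finset.single_le_sum (f := fun z : ℕ × ℕ => ‖act (stepSL ℓ k z.1 z.2)‖)
      (s := Finset.range (ℓ + 1) ×ˢ Finset.range (ℓ + 1)) (fun _ _ => norm_nonneg _)
      (a := (i, j)) (by simp; omega)
    linarith [norm_nonneg (act 1)]
  · have h1 : stepSL ℓ k i j = 1 := dif_neg h
    rw [h1]
    have : 0 ≤ ∑ z ∈ Finset.range (ℓ + 1) ×ˢ Finset.range (ℓ + 1), ‖act (stepSL ℓ k z.1 z.2)‖ :=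
      Finset.sum_nonneg fun _ _ => norm_nonneg _
    linarith

attribute [irreducible] stepSL

/-- The shift as a measurable equivalence. -/
def shiftEquiv : (ℤ → ℕ) ≃ᵐ (ℤ → ℕ) where
  toFun := shift
  invFun := unshift
  left_inv := unshift_shift
  right_inv := shift_unshift
  measurable_toFun := measurable_shift
  measurable_invFun := measurable_unshift

variable {μ : Measure (ℤ → ℕ)}

lemma measurePreserving_unshift (h : MeasurePreserving shift μ μ) :
    MeasurePreserving unshift μ μ :=
  MeasurePreserving.symm shiftEquiv h

lemma integral_log_norm_cocycle (hconc : μ (SFT ℓ W)ᶜ = 0) (h : MeasurePreserving shift μ μ)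
    (n : ℕ) : ∫ ω, log ‖act (cocycle shift (stepCocycle ℓ k) n ω)‖ ∂μ
      = ∫ ω, log ‖AIter k ω n‖ ∂μ := by
  have hSFT : ∀ᵐ ω ∂μ, ω ∈ SFT ℓ W := hconc
  rw [← h.integral_comp shiftEquiv.measurableEmbedding fun ω => log ‖AIter k ω n‖]
  refine integral_congr_ae ?_
  filter_upwards [hSFT] with ω hω
  rw [norm_act, coe_cocycle_stepCocycle hω]

lemma integral_log_norm_cocycle_inverse (h : MeasurePreserving shift μ μ) (n : ℕ) :
    ∫ ω, log ‖act (cocycle unshift (fun ω => (stepCocycle ℓ k (unshift ω))⁻¹) n ω)‖ ∂μ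
      = ∫ ω, log ‖act (cocycle shift (stepCocycle ℓ k) n ω)‖ ∂μ := by
  simp only [cocycle_inverse _ shift_unshift, norm_act_inv]
  have hemb : ∀ n : ℕ, MeasurableEmbedding unshift^[n] := fun n => by
    induction n with
    | zero => exact MeasurableEmbedding.id
    | succ n ih => rw [Function.iterate_succ]; exact ih.comp shiftEquiv.symm.measurableEmbedding
  exact ((measurePreserving_unshift h).iterate n).integral_comp (hemb n)
    fun ω => log ‖act (cocycle shift (stepCocycle ℓ k) n ω)‖

lemma comap_le_comap_of_eq_comp {X Y Z : Type*} {mY : MeasurableSpace Y} {mZ : MeasurableSpace Z}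
    {f : X → Y} {g : X → Z} {h : Z → Y} (hh : Measurable h) (hfg : ∀ x, f x = h (g x)) :
    mY.comap f ≤ mZ.comap g := by
  obtain rfl : f = h ∘ g := funext hfg
  rw [← MeasurableSpace.comap_comp]
  exact MeasurableSpace.comap_mono hh.comap_le

lemma measurable_comap_of_eq_comp {X Y Z : Type*} {mY : MeasurableSpace Y} {mZ : MeasurableSpace Z}
    {f : X → Y} {g : X → Z} {h : Z → Y} (hh : Measurable h) (hfg : ∀ x, f x = h (g x)) :
    Measurable[mZ.comap g] f :=
  measurable_iff_comap_le.2 (comap_le_comap_of_eq_comp hh hfg)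

lemma measurable_stepCocycle_plus (i j : Fin 2) :
    Measurable[MeasurableSpace.comap projPlus inferInstance]
      fun ω => (stepCocycle ℓ k ω).1 i j := by
  refine measurable_comap_of_eq_comp (h := fun a : ℕ → ℕ => (stepSL ℓ k (a 0) (a 1)).1 i j) ?_
    fun ω => rfl
  have h : Measurable fun a : ℕ → ℕ => (a 0, a 1) :=
    (measurable_pi_apply 0).prodMk (measurable_pi_apply 1)
  exact (measurable_of_countable fun z : ℕ × ℕ => (stepSL ℓ k z.1 z.2).1 i j).comp h

lemma measurable_stepCocycle_minus (i j : Fin 2) :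
    Measurable[MeasurableSpace.comap projMinus inferInstance]
      fun ω => ((stepCocycle ℓ k (unshift ω))⁻¹).1 i j := by
  let F : ℕ × ℕ → ℝ := fun z => ((stepSL ℓ k z.1 z.2)⁻¹).1 i j
  have h : Measurable fun a : ℕ → ℕ => F (a 1, a 0) :=
    (measurable_of_countable F).comp ((measurable_pi_apply 1).prodMk (measurable_pi_apply 0))
  have e : ∀ ω : ℤ → ℕ, ((stepCocycle ℓ k (unshift ω))⁻¹).1 i j
      = F (projMinus ω 1, projMinus ω 0) := by
    intro ω
    have h0 : projMinus ω 0 = unshift ω 1 := by simp [projMinus, unshift]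
    have h1 : projMinus ω 1 = unshift ω 0 := by simp [projMinus, unshift]
    rw [h0, h1, stepCocycle]
  exact measurable_comap_of_eq_comp h e

lemma continuous_skew_stepCocycle : Continuous fun z : (ℤ → ℕ) × UnitCircle =>
    (shift z.1, circleAct (stepCocycle ℓ k z.1) z.2) := by
  refine (continuous_shift.comp continuous_fst).prodMk ?_
  simp only [stepCocycle]
  have h : Continuous fun z : (ℕ × ℕ) × UnitCircle => circleAct (stepSL ℓ k z.1.1 z.1.2) z.2 :=
    continuous_prod_of_discrete_left.2 fun a => continuous_circleAct (stepSL ℓ k a.1 a.2)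
  have h' : Continuous fun z : (ℤ → ℕ) × UnitCircle => ((z.1 0, z.1 1), z.2) := by fun_prop
  have h2 := h.comp h'
  simpa only [Function.comp_def] using h2

lemma condExp_plus_fibre_average [IsProbabilityMeasure μ] (hT : MeasurePreserving shift μ μ)
    (hgrow : Tendsto (fun n : ℕ => 1 / (n : ℝ) *
      ∫ ω, log ‖act (cocycle shift (stepCocycle ℓ k) n ω)‖ ∂μ) atTop (𝓝 0))
    (ν : Kernel (ℤ → ℕ) UnitCircle) [IsMarkovKernel ν]
    (hν : ∀ᵐ ω ∂μ, (ν ω).map (circleAct (stepCocycle ℓ k ω)) = ν (shift ω))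
    {f : C(UnitCircle, ℝ)} (hf : ∀ ξ, |f ξ| ≤ 1) :
    μ[fun ω => ∫ ξ, f ξ ∂ν ω|MeasurableSpace.comap projPlus inferInstance]
      =ᵐ[μ] fun ω => ∫ ξ, f ξ ∂ν ω := by
  obtain ⟨K, hK⟩ := exists_norm_stepSL_le ℓ k
  refine condExp_fibre_average_ae_eq measurable_projPlus.comap_le hT measurable_unshift
    unshift_shift ?_ ?_ ?_ measurable_stepCocycle_plus (fun ω => hK _ _) hgrow ν hν hf
  · rw [measurable_iff_comap_le, MeasurableSpace.comap_comp]
    exact comap_le_comap_of_eq_comp (h := fun a n => a (n + 1))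
      (measurable_pi_lambda _ fun _ => measurable_pi_apply _) fun ω => by
        funext n; simp [projPlus, shift]
  · refine monotone_nat_of_le_succ fun n => ?_
    rw [MeasurableSpace.comap_comp, MeasurableSpace.comap_comp]
    exact comap_le_comap_of_eq_comp (h := fun a n => a (n + 1))
      (measurable_pi_lambda _ fun _ => measurable_pi_apply _) fun ω => by
        funext m
        simp only [Function.comp, projPlus, unshift_iterate_apply]
        congr 1; push_cast; ring
  · refine iSup_le fun m => ?_
    refine le_iSup_of_le m.natAbs ?_
    rw [MeasurableSpace.comap_comp]
    refine comap_le_comap_of_eq_comp (h := fun a : ℕ → ℕ => a (m + m.natAbs).toNat)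
      (measurable_pi_apply _) fun ω => ?_
    simp only [Function.comp, projPlus, unshift_iterate_apply]
    congr 1; omega

lemma condExp_minus_fibre_average [IsProbabilityMeasure μ] (hT : MeasurePreserving shift μ μ)
    (hgrow : Tendsto (fun n : ℕ => 1 / (n : ℝ) *
      ∫ ω, log ‖act (cocycle shift (stepCocycle ℓ k) n ω)‖ ∂μ) atTop (𝓝 0))
    (ν : Kernel (ℤ → ℕ) UnitCircle) [IsMarkovKernel ν]
    (hν : ∀ᵐ ω ∂μ, (ν ω).map (circleAct (stepCocycle ℓ k ω)) = ν (shift ω))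
    {f : C(UnitCircle, ℝ)} (hf : ∀ ξ, |f ξ| ≤ 1) :
    μ[fun ω => ∫ ξ, f ξ ∂ν ω|MeasurableSpace.comap projMinus inferInstance]
      =ᵐ[μ] fun ω => ∫ ξ, f ξ ∂ν ω := by
  obtain ⟨K, hK⟩ := exists_norm_stepSL_le ℓ k
  refine condExp_fibre_average_ae_eq (B := fun ω => (stepCocycle ℓ k (unshift ω))⁻¹)
    measurable_projMinus.comap_le (measurePreserving_unshift hT) measurable_shift
    shift_unshift ?_ ?_ ?_ measurable_stepCocycle_minus
    (fun ω => by rw [norm_act_inv]; exact hK _ _) ?_ ν ?_ hf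
  · rw [measurable_iff_comap_le, MeasurableSpace.comap_comp]
    exact comap_le_comap_of_eq_comp (h := fun a n => a (n + 1))
      (measurable_pi_lambda _ fun _ => measurable_pi_apply _) fun ω => by
        funext n
        simp only [Function.comp, projMinus, unshift]
        congr 1; push_cast; ring
  · refine monotone_nat_of_le_succ fun n => ?_
    rw [MeasurableSpace.comap_comp, MeasurableSpace.comap_comp]
    exact comap_le_comap_of_eq_comp (h := fun a n => a (n + 1))
      (measurable_pi_lambda _ fun _ => measurable_pi_apply _) fun ω => by
        funext m
        simp only [Function.comp, projMinus, shift_iterate_apply]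
        congr 1; push_cast; ring
  · refine iSup_le fun m => ?_
    refine le_iSup_of_le m.natAbs ?_
    rw [MeasurableSpace.comap_comp]
    refine comap_le_comap_of_eq_comp (h := fun a : ℕ → ℕ => a (m.natAbs - m).toNat)
      (measurable_pi_apply _) fun ω => ?_
    simp only [Function.comp, projMinus, shift_iterate_apply]
    congr 1; omega
  · simpa only [integral_log_norm_cocycle_inverse hT] using hgrow
  · filter_upwards [(measurePreserving_unshift hT).quasiMeasurePreserving.ae hν] with ω hω
    rw [shift_unshift] at hω
    rw [← hω, Measure.map_map (continuous_circleAct _).measurable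
      (continuous_circleAct _).measurable]
    have : circleAct (stepCocycle ℓ k (unshift ω))⁻¹ ∘ circleAct (stepCocycle ℓ k (unshift ω))
        = id := by
      funext ξ
      rw [Function.comp_apply, ← circleAct_mul, inv_mul_cancel, circleAct_one]; rfl
    rw [this, Measure.map_id]

lemma eq_of_integral_eq_of_dense {ρ₁ ρ₂ : Measure UnitCircle} [IsProbabilityMeasure ρ₁]
    [IsProbabilityMeasure ρ₂] {D : Set C(UnitCircle, ℝ)} (hD : Dense D)
    (h : ∀ f ∈ D, ∫ ξ, f ξ ∂ρ₁ = ∫ ξ, f ξ ∂ρ₂) : ρ₁ = ρ₂ := by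
  have hc : ∀ (ρ : Measure UnitCircle) [IsProbabilityMeasure ρ],
      Continuous fun f : C(UnitCircle, ℝ) => ∫ ξ, f ξ ∂ρ := by
    intro ρ _
    refine LipschitzWith.continuous (K := 1) (LipschitzWith.of_dist_le_mul fun f g => ?_)
    have hi : ∀ f : C(UnitCircle, ℝ), Integrable f ρ := fun f =>
      Integrable.of_bound f.continuous.aestronglyMeasurable ‖f‖
        (Eventually.of_forall f.norm_coe_le_norm)
    rw [dist_eq_norm, ← integral_sub (hi f) (hi g), NNReal.coe_one, one_mul, dist_eq_norm]
    have := norm_integral_le_of_norm_le_const (μ := ρ) (f := fun ξ => f ξ - g ξ) (C := ‖f - g‖)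
      (Eventually.of_forall fun ξ => (f - g).norm_coe_le_norm ξ)
    simpa using this
  have heq := Continuous.ext_on hD (hc ρ₁) (hc ρ₂) h
  exact ext_of_forall_integral_eq_of_IsFiniteMeasure fun f => congrFun heq f.toContinuousMap

/-- When the growth rate vanishes there is a family of probability measures on directions, indexed
by letters, that is equivariant under the transfer matrices. -/
lemma exists_equivariant_family [IsProbabilityMeasure μ] (hconc : μ (SFT ℓ W)ᶜ = 0)
    (hT : MeasurePreserving shift μ μ) (hlps : LocalProductStructure ℓ W μ)
    (hsupp : FullSupport ℓ W μ)
    (hgrow : Tendsto (fun n : ℕ => 1 / (n : ℝ) * ∫ ω, log ‖AIter k ω n‖ ∂μ) atTop (𝓝 0)) :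
    ∃ ρ : ℕ → Measure UnitCircle, (∀ j, IsProbabilityMeasure (ρ j)) ∧
      ∀ ω ∈ SFT ℓ W, (ρ (ω 0)).map (circleAct (stepCocycle ℓ k ω)) = ρ (ω 1) := by
  simp only [← integral_log_norm_cocycle (k := k) hconc hT] at hgrow
  have hSFT : ∀ᵐ ω ∂μ, ω ∈ SFT ℓ W := hconc
  obtain ⟨ν, hνm, hν⟩ := exists_invariant_kernel (B := stepCocycle ℓ k) hT measurable_unshift
    unshift_shift (fun i j => (measurable_stepCocycle_plus i j).mono
      measurable_projPlus.comap_le le_rfl) continuous_skew_stepCocycle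
  have hconst : ∀ f : C(UnitCircle, ℝ), ∀ j, ∃ c, ∀ᵐ ω ∂μ, ω 0 = j → ∫ ξ, f ξ ∂ν ω = c := by
    intro f j
    by_cases hj : 1 ≤ j ∧ j ≤ ℓ
    swap
    · refine ⟨0, ?_⟩
      filter_upwards [hSFT] with ω hω h
      exact absurd (h ▸ hω.1 0) hj
    set a : ℝ := (‖f‖ + 1)⁻¹ with ha
    have ha0 : 0 < a := by positivity
    have hf : ∀ ξ, |(a • f) ξ| ≤ 1 := by
      intro ξ
      have h1 := f.norm_coe_le_norm ξ
      rw [Real.norm_eq_abs] at h1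
      rw [ContinuousMap.smul_apply, smul_eq_mul, abs_mul, abs_of_pos ha0, ha,
        inv_mul_le_iff₀ (by positivity)]
      linarith
    have hp := condExp_plus_fibre_average hT hgrow ν hν hf
    have hm := condExp_minus_fibre_average hT hgrow ν hν hf
    obtain ⟨u, hu, hu'⟩ := (stronglyMeasurable_condExp (μ := μ)
      (m := MeasurableSpace.comap projPlus inferInstance)
      (f := fun ω => ∫ ξ, (a • f) ξ ∂ν ω)).measurable.exists_eq_measurable_comp
    obtain ⟨v, hv, hv'⟩ := (stronglyMeasurable_condExp (μ := μ)
      (m := MeasurableSpace.comap projMinus inferInstance)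
      (f := fun ω => ∫ ξ, (a • f) ξ ∂ν ω)).measurable.exists_eq_measurable_comp
    rw [hu'] at hp
    rw [hv'] at hm
    obtain ⟨c, hc⟩ := exists_ae_eq_const_of_localProductStructure hconc hlps hu hv hp.symm hm.symm
      hj.1 hj.2
    refine ⟨a⁻¹ * c, ?_⟩
    filter_upwards [hc] with ω hω h
    rw [← hω h]
    simp only [ContinuousMap.smul_apply, smul_eq_mul, integral_const_mul]
    field_simp
  obtain ⟨D, hDc, hD⟩ := TopologicalSpace.exists_countable_dense C(UnitCircle, ℝ)
  have hρ : ∀ j, ∃ ρ : Measure UnitCircle, IsProbabilityMeasure ρ ∧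
      ∀ᵐ ω ∂μ, ω 0 = j → ν ω = ρ := by
    intro j
    choose c hc using fun f => hconst f j
    have hall : ∀ᵐ ω ∂μ, ∀ f ∈ D, ω 0 = j → ∫ ξ, f ξ ∂ν ω = c f :=
      (ae_ball_iff hDc).2 fun f _ => hc f
    by_cases hne : ∃ ω₀ : ℤ → ℕ, ω₀ 0 = j ∧ ∀ f ∈ D, ∫ ξ, f ξ ∂ν ω₀ = c f
    · obtain ⟨ω₀, -, h0⟩ := hne
      refine ⟨ν ω₀, inferInstance, ?_⟩
      filter_upwards [hall] with ω hω h
      exact eq_of_integral_eq_of_dense hD fun f hf => (hω f hf h).trans (h0 f hf).symm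
    · refine ⟨ν 0, inferInstance, ?_⟩
      filter_upwards [hall] with ω hω h
      exact absurd ⟨ω, h, fun f hf => hω f hf h⟩ hne
  choose ρ hρm hρ using hρ
  refine ⟨ρ, hρm, fun ω hω => ?_⟩
  set U : Set (ℤ → ℕ) := {ω' | ω' 0 = ω 0} ∩ {ω' | ω' 1 = ω 1} with hU
  have hev : ∀ n : ℤ, IsOpen {ω' : ℤ → ℕ | ω' n = ω n} := fun n => by
    have hc : Continuous fun ω' : ℤ → ℕ => ω' n := continuous_apply n
    exact (isOpen_discrete {ω n}).preimage hc
  have hUo : IsOpen U := (hev 0).inter (hev 1)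
  have hfreq : ∃ᵐ ω' ∂μ, ω' ∈ U := by
    rw [frequently_ae_iff]; exact (hsupp U hUo ⟨ω, ⟨rfl, rfl⟩, hω⟩).ne'
  obtain ⟨ω', ⟨h0, h1⟩, e1, e2, e3⟩ := (hfreq.and_eventually ((hρ (ω 0)).and
    ((hT.quasiMeasurePreserving.ae (hρ (ω 1))).and hν))).exists
  have h0' : ω' 0 = ω 0 := h0
  have h1' : ω' 1 = ω 1 := h1
  rw [e1 h0', e2 (by simpa [shift] using h1')] at e3
  rwa [stepCocycle, h0', h1'] at e3

lemma map_circleAct_cocycle {ρ : ℕ → Measure UnitCircle}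
    (hρ : ∀ ω ∈ SFT ℓ W, (ρ (ω 0)).map (circleAct (stepCocycle ℓ k ω)) = ρ (ω 1))
    {ω : ℤ → ℕ} (hω : ω ∈ SFT ℓ W) (n : ℕ) :
    (ρ (ω 0)).map (circleAct (cocycle shift (stepCocycle ℓ k) n ω)) = ρ (ω n) := by
  induction n with
  | zero =>
    have : circleAct (cocycle shift (stepCocycle ℓ k) 0 ω) = id := by
      funext ξ; simp [cocycle]
    rw [this, Measure.map_id]; rfl
  | succ n ih =>
    have : circleAct (cocycle shift (stepCocycle ℓ k) (n + 1) ω)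
        = circleAct (stepCocycle ℓ k (shift^[n] ω)) ∘
          circleAct (cocycle shift (stepCocycle ℓ k) n ω) := by
      funext ξ; rw [cocycle, circleAct_mul]; rfl
    rw [this, ← Measure.map_map (continuous_circleAct _).measurable
      (continuous_circleAct _).measurable, ih]
    have h := hρ _ (shift_iterate_mem_SFT hω n)
    simp only [shift_iterate_apply, zero_add] at h
    rw [h]
    congr 2; push_cast; ring

end StepCocycle

section VanishingGrowth

variable {ℓ : ℕ} {W : Set (ℕ × ℕ)} {k : ℝ} {μ : Measure (ℤ → ℕ)}

lemma isOpen_eval_eq (n : ℤ) (a : ℕ) : IsOpen {ω : ℤ → ℕ | ω n = a} := by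
  have hc : Continuous fun ω : ℤ → ℕ => ω n := continuous_apply n
  exact (isOpen_discrete {a}).preimage hc

lemma apply_eq_of_shift_eq {r : ℤ → ℕ} (hr : shift r = r) (n : ℤ) : r n = r 0 := by
  have h : ∀ m, r (m + 1) = r m := fun m => congrFun hr m
  induction n using Int.induction_on with
  | zero => rfl
  | succ n ih => rw [h, ih]
  | pred n ih => rw [← ih, ← h (-n - 1), sub_add_cancel]

lemma trace_stepMatrix_self (k : ℝ) {a : ℕ} (ha : 1 ≤ a) :
    (stepMatrix k a a).trace = 2 * cos k := by
  have ha' : (a : ℝ) ≠ 0 := by positivity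
  rw [stepMatrix, Matrix.trace_smul, Matrix.trace_fin_two_of, div_self ha', Real.sqrt_one]
  field_simp
  simp only [smul_eq_mul]; ring

lemma abs_cos_lt_one {k : ℝ} (hk : k ∈ Ioo 0 π) : |cos k| < 1 := by
  have h := sin_pos_of_mem_Ioo hk
  rw [← sq_lt_one_iff_abs_lt_one]
  nlinarith [sin_sq_add_cos_sq k]

lemma cos_ne_zero_of_ne {k : ℝ} (hk : k ∈ Ioo 0 π) (hk2 : k ≠ π / 2) : cos k ≠ 0 := by
  intro h
  refine hk2 (injOn_cos ⟨hk.1.le, hk.2.le⟩ ⟨by positivity, by linarith [pi_pos]⟩ ?_)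
  rw [h, cos_pi_div_two]

/-- If the growth rate vanishes then no periodic orbit is hyperbolic. -/
lemma abs_trace_le_two_of_growth_zero [IsProbabilityMeasure μ] (hconc : μ (SFT ℓ W)ᶜ = 0)
    (herg : Ergodic shift μ) (hlps : LocalProductStructure ℓ W μ) (hsupp : FullSupport ℓ W μ)
    (hfix : ∃ p ∈ SFT ℓ W, shift p = p) (hk : k ∈ Ioo 0 π) (hk2 : k ≠ π / 2)
    (hgrow : Tendsto (fun n : ℕ => 1 / (n : ℝ) * ∫ ω, log ‖AIter k ω n‖ ∂μ) atTop (𝓝 0))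
    {p : ℤ → ℕ} (hp : p ∈ SFT ℓ W) {N : ℕ} (hN : shift^[N] p = p) :
    |(AIter k p N).trace| ≤ 2 := by
  by_contra! hcon
  obtain ⟨ρ, hρm, hρ⟩ := exists_equivariant_family (k := k) hconc herg.toMeasurePreserving hlps
    hsupp hgrow
  obtain ⟨r, hr, hrr⟩ := hfix
  set q := unshift p with hq
  have hqS : q ∈ SFT ℓ W := unshift_mem_SFT hp
  have hqN : q N = q 0 := by
    have := congrFun hN (-1)
    rw [shift_iterate_apply] at this
    simp only [hq, unshift]
    rw [zero_sub, ← this]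
    congr 1
  set g := cocycle shift (stepCocycle ℓ k) N q with hg
  have hgt : g.1.trace = (AIter k p N).trace := by
    rw [hg, coe_cocycle_stepCocycle hqS, hq, shift_unshift]
  have hgρ : (ρ (q 0)).map (circleAct g) = ρ (q 0) := by
    rw [hg, map_circleAct_cocycle hρ hqS, hqN]
  obtain ⟨n, -, ω, hω, h0, hn⟩ := exists_shift_iterate_mem hconc herg hsupp
    (isOpen_eval_eq 0 (q 0)) (isOpen_eval_eq 0 (r 0)) ⟨q, rfl, hqS⟩ ⟨r, rfl, hr⟩ 0
  have h0' : ω 0 = q 0 := h0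
  have hn' : ω n = r 0 := by
    have : shift^[n] ω 0 = r 0 := hn
    rwa [shift_iterate_apply, zero_add] at this
  set h := cocycle shift (stepCocycle ℓ k) n ω with hh
  have hhρ : (ρ (q 0)).map (circleAct h) = ρ (r 0) := by
    rw [← h0', hh, map_circleAct_cocycle hρ hω, hn']
  have hR : (ρ (r 0)).map (circleAct (stepCocycle ℓ k r)) = ρ (r 0) := by
    rw [hρ r hr, apply_eq_of_shift_eq hrr 1]
  have hRt : (stepCocycle ℓ k r).1.trace = 2 * cos k := by
    rw [stepCocycle, apply_eq_of_shift_eq hrr 1, coe_stepSL (hr.1 0) (hr.1 0),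
      trace_stepMatrix_self k (hr.1 0).1]
  have hct : (h * g * h⁻¹).1.trace = g.1.trace := by
    have e : (h * g * h⁻¹).1 = h.1 * g.1 * (h⁻¹).1 := rfl
    have e' : (h⁻¹).1 * h.1 = 1 := by
      have : h⁻¹ * h = 1 := inv_mul_cancel h
      exact congrArg Subtype.val this
    rw [e, Matrix.trace_mul_comm, ← Matrix.mul_assoc, e', Matrix.one_mul]
  have hconj : (ρ (r 0)).map (circleAct (h * g * h⁻¹)) = ρ (r 0) := by
    conv_lhs => rw [← hhρ]
    rw [Measure.map_map (continuous_circleAct _).measurable (continuous_circleAct _).measurable]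
    have e : circleAct (h * g * h⁻¹) ∘ circleAct h = circleAct h ∘ circleAct g := by
      funext ξ
      rw [Function.comp_apply, Function.comp_apply, ← circleAct_mul, ← circleAct_mul,
        inv_mul_cancel_right]
    rw [e, ← Measure.map_map (continuous_circleAct _).measurable
      (continuous_circleAct _).measurable, hgρ, hhρ]
  have hc := abs_cos_lt_one hk
  refine not_invariant_of_hyperbolic_of_elliptic (g := h * g * h⁻¹) (R := stepCocycle ℓ k r)
    (by rwa [hct, hgt]) ?_ ?_ (ρ (r 0)) hconj hR
  · rw [hRt, abs_mul, abs_two]; linarith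
  · rw [hRt]; exact mul_ne_zero two_ne_zero (cos_ne_zero_of_ne hk hk2)

end VanishingGrowth

section BoundedLoops

variable {ℓ : ℕ} {W : Set (ℕ × ℕ)} {k : ℝ} {μ : Measure (ℤ → ℕ)}

/-- Follow `x` up to time `n` and then `y` from time `0` on. -/
def splice (x : ℤ → ℕ) (n : ℕ) (y : ℤ → ℕ) : ℤ → ℕ := fun m => if m ≤ n then x m else y (m - n)

lemma splice_of_le (x : ℤ → ℕ) {n : ℕ} (y : ℤ → ℕ) {m : ℤ} (h : m ≤ n) : splice x n y m = x m :=
  if_pos h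

lemma splice_add {x : ℤ → ℕ} {n : ℕ} {y : ℤ → ℕ} (h : x n = y 0) (m : ℕ) :
    splice x n y (m + n) = y m := by
  rcases Nat.eq_zero_or_pos m with rfl | hm
  · simp [splice, h]
  · rw [splice, if_neg (by omega), add_sub_cancel_right]

lemma splice_mem_SFT {x : ℤ → ℕ} {n : ℕ} {y : ℤ → ℕ} (h : x n = y 0) (hx : x ∈ SFT ℓ W)
    (hy : y ∈ SFT ℓ W) : splice x n y ∈ SFT ℓ W := by
  constructor
  · intro m
    rw [splice]
    split_ifs
    · exact hx.1 m
    · exact hy.1 _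
  · intro m
    rcases lt_trichotomy m n with hm | rfl | hm
    · rw [splice_of_le _ _ hm.le, splice_of_le _ _ (by omega)]; exact hx.2 m
    · rw [splice_of_le _ _ le_rfl, h, splice, if_neg (by omega), add_sub_cancel_left]
      exact hy.2 0
    · rw [splice, if_neg (by omega), splice, if_neg (by omega)]
      have := hy.2 (m - n)
      rwa [show m - n + 1 = m + 1 - (n : ℤ) by ring] at this

lemma cocycle_stepCocycle_congr {ω ω' : ℤ → ℕ} {n : ℕ} (h : ∀ i : ℕ, i ≤ n → ω i = ω' i) :
    cocycle shift (stepCocycle ℓ k) n ω = cocycle shift (stepCocycle ℓ k) n ω' := by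
  induction n with
  | zero => rfl
  | succ n ih =>
    rw [cocycle, cocycle, ih fun i hi => h i (by omega), stepCocycle, stepCocycle]
    simp only [shift_iterate_apply]
    have h0 := h n (by omega)
    have h1 := h (n + 1) le_rfl
    push_cast at h1
    rw [zero_add, h0, add_comm 1, h1]

lemma cocycle_splice {x : ℤ → ℕ} {n : ℕ} {y : ℤ → ℕ} (h : x n = y 0) (m : ℕ) :
    cocycle shift (stepCocycle ℓ k) (m + n) (splice x n y)
      = cocycle shift (stepCocycle ℓ k) m y * cocycle shift (stepCocycle ℓ k) n x := by
  rw [cocycle_add]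
  congr 1
  · refine cocycle_stepCocycle_congr fun i _ => ?_
    rw [shift_iterate_apply, splice_add h]
  · exact cocycle_stepCocycle_congr fun i hi => splice_of_le _ _ (by exact_mod_cast hi)

/-- Every closed word is realised by a periodic point. -/
lemma abs_trace_loop_le
    (hper : ∀ p ∈ SFT ℓ W, ∀ n : ℕ, 1 ≤ n → shift^[n] p = p → |(AIter k p n).trace| ≤ 2)
    {ω : ℤ → ℕ} (hω : ω ∈ SFT ℓ W) {n : ℕ} (hn : 1 ≤ n) (h : ω n = ω 0) :
    |(cocycle shift (stepCocycle ℓ k) n ω).1.trace| ≤ 2 := by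
  set p : ℤ → ℕ := fun m => ω (m % n) with hp
  have hn0 : (0 : ℤ) < n := by exact_mod_cast hn
  have hpS : p ∈ SFT ℓ W := by
    refine ⟨fun m => hω.1 _, fun m => ?_⟩
    simp only [hp]
    have h1 := Int.emod_nonneg m hn0.ne'
    have h2 := Int.emod_lt_of_pos m hn0
    have h4 := hω.2 (m % n)
    rcases (show m % n + 1 < n ∨ m % n + 1 = n by omega) with h3 | h3
    · have : (m + 1) % n = m % n + 1 := by
        rw [← Int.emod_add_emod, Int.emod_eq_of_lt (by omega) h3]
      rwa [this]
    · have : (m + 1) % n = 0 := by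
        rw [← Int.emod_add_emod, h3, Int.emod_self]
      rw [this, ← h]
      rwa [h3] at h4
  have hpn : shift^[n] p = p := by
    funext m
    rw [shift_iterate_apply]
    simp [hp]
  have hpn' : shift^[n] (shift p) = shift p := by
    rw [← Function.iterate_succ_apply, Function.iterate_succ_apply', hpn]
  have hc : cocycle shift (stepCocycle ℓ k) n ω = cocycle shift (stepCocycle ℓ k) n p := by
    refine cocycle_stepCocycle_congr fun i hi => ?_
    simp only [hp]
    rcases hi.lt_or_eq with h1 | rfl
    · rw [Int.emod_eq_of_lt (by omega) (by omega)]
    · rw [Int.emod_self, h]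
  rw [hc, coe_cocycle_stepCocycle hpS]
  exact hper _ (shift_mem_SFT hpS) n hn hpn'

lemma norm_act_le_of_entries {g : SL2} {C : ℝ} (hC : 0 ≤ C) (h : ∀ i j, |g.1 i j| ≤ C) :
    ‖act g‖ ≤ 2 * C := by
  refine ContinuousLinearMap.opNorm_le_bound _ (by positivity) fun v => ?_
  have hsq : ‖act g v‖ ^ 2 ≤ (2 * C * ‖v‖) ^ 2 := by
    rw [mul_pow, EuclideanSpace.norm_sq_eq, EuclideanSpace.norm_sq_eq, Fin.sum_univ_two,
      Fin.sum_univ_two]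
    simp only [act_apply, Real.norm_eq_abs, sq_abs]
    have hs : ∀ i j, g.1 i j ^ 2 ≤ C ^ 2 := fun i j => sq_le_sq' (abs_le.1 (h i j)).1
      (abs_le.1 (h i j)).2
    have hrow : ∀ i, (g.1 i 0 * v 0 + g.1 i 1 * v 1) ^ 2
        ≤ 2 * C ^ 2 * (v 0 ^ 2 + v 1 ^ 2) := by
      intro i
      nlinarith [sq_nonneg (g.1 i 0 * v 0 - g.1 i 1 * v 1),
        mul_le_mul_of_nonneg_right (hs i 0) (sq_nonneg (v 0)),
        mul_le_mul_of_nonneg_right (hs i 1) (sq_nonneg (v 1))]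
    nlinarith [hrow 0, hrow 1]
  exact le_of_sq_le_sq hsq (by positivity)

/-- A unimodular matrix is bounded in terms of its trace and the trace of its product with a
fixed elliptic companion matrix. -/
lemma norm_act_le_of_trace_bounds {c : ℝ} (hc : |c| < 1) {R g : SL2}
    (hR : R.1 = !![2 * c, -1; 1, 0]) (h1 : |g.1.trace| ≤ 2) (h2 : |(R * g).1.trace| ≤ 2) :
    ‖act g‖ ≤ 2 * (2 + 3 * (4 / (1 - |c|))) := by
  set M := 4 / (1 - |c|) with hM
  have hc0 : 0 < 1 - |c| := by linarith
  have hM0 : 0 < M := by positivity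
  have hMc : M * (1 - |c|) = 4 := div_mul_cancel₀ _ hc0.ne'
  have e : (R * g).1 = !![2 * c, -1; 1, 0] * g.1 := by rw [← hR]; rfl
  have hS : (R * g).1.trace = 2 * c * g.1 0 0 - g.1 1 0 + g.1 0 1 := by
    rw [e, Matrix.trace_fin_two]
    simp [Matrix.mul_apply, Fin.sum_univ_two]
    ring
  rw [hS] at h2
  rw [trace_eq] at h1
  have hd := det_eq_one g
  set x := g.1 0 0 with hx
  set y := g.1 0 1 with hy
  set z := g.1 1 0 with hz
  set w := g.1 1 1 with hw
  have hq : x ^ 2 + 2 * c * (x * y) + y ^ 2 = x * (x + w) + y * (2 * c * x - z + y) - 1 := by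
    linear_combination -hd
  have hxy : 2 * |x| * |y| ≤ x ^ 2 + y ^ 2 := by
    rw [← sq_abs x, ← sq_abs y]; nlinarith [sq_nonneg (|x| - |y|)]
  have hlow : (1 - |c|) * (x ^ 2 + y ^ 2) ≤ x ^ 2 + 2 * c * (x * y) + y ^ 2 := by
    have h3 : -(|c| * (x ^ 2 + y ^ 2)) ≤ 2 * c * (x * y) := by
      have h4 : |2 * c * (x * y)| ≤ |c| * (x ^ 2 + y ^ 2) := by
        rw [abs_mul, abs_mul, abs_mul, abs_two]
        nlinarith [mul_le_mul_of_nonneg_left hxy (abs_nonneg c)]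
      linarith [(abs_le.1 h4).1]
    linarith
  have hup : x * (x + w) + y * (2 * c * x - z + y) ≤ 2 * |x| + 2 * |y| := by
    have h3 : x * (x + w) ≤ |x| * 2 := (le_abs_self _).trans (by
      rw [abs_mul]; exact mul_le_mul_of_nonneg_left h1 (abs_nonneg x))
    have h4 : y * (2 * c * x - z + y) ≤ |y| * 2 := (le_abs_self _).trans (by
      rw [abs_mul]; exact mul_le_mul_of_nonneg_left h2 (abs_nonneg y))
    linarith
  have hsum : x ^ 2 + y ^ 2 ≤ M ^ 2 := by
    have h5 : 4 * (x ^ 2 + y ^ 2) ≤ M * (2 * |x| + 2 * |y|) := by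
      have := mul_le_mul_of_nonneg_left (by linarith : (1 - |c|) * (x ^ 2 + y ^ 2)
        ≤ 2 * |x| + 2 * |y|) hM0.le
      rwa [← mul_assoc, hMc] at this
    have h6 : M * (2 * |x|) ≤ M ^ 2 + x ^ 2 := by rw [← sq_abs x]; nlinarith [sq_nonneg (M - |x|)]
    have h7 : M * (2 * |y|) ≤ M ^ 2 + y ^ 2 := by rw [← sq_abs y]; nlinarith [sq_nonneg (M - |y|)]
    nlinarith
  have hxM : |x| ≤ M := abs_le_of_sq_le_sq (by nlinarith [sq_nonneg y]) hM0.le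
  have hyM : |y| ≤ M := abs_le_of_sq_le_sq (by nlinarith [sq_nonneg x]) hM0.le
  have hwM : |w| ≤ 2 + M := by
    have := abs_sub (x + w) x
    rw [add_sub_cancel_left] at this; linarith
  have hcx : |c * x| ≤ M := by
    rw [abs_mul]; nlinarith [abs_nonneg x, abs_nonneg c]
  have hzM : |z| ≤ 2 + 3 * M := by
    rw [abs_le] at h2 hcx hyM ⊢
    constructor <;> linarith [h2.1, h2.2, hcx.1, hcx.2, hyM.1, hyM.2]
  refine norm_act_le_of_entries (by positivity) fun i j => ?_
  fin_cases i <;> fin_cases j <;> simp only [Fin.zero_eta, Fin.mk_one, ← hx, ← hy, ← hz, ← hw] <;>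
    linarith

lemma stepMatrix_self (k : ℝ) {a : ℕ} (ha : 1 ≤ a) :
    stepMatrix k a a = !![2 * cos k, -1; 1, 0] := by
  have ha' : (a : ℝ) ≠ 0 := by positivity
  rw [stepMatrix, div_self ha', Real.sqrt_one, one_smul]
  congr 3
  field_simp
  ring

/-- If no periodic orbit is hyperbolic then the transfer cocycle is bounded. -/
lemma exists_norm_cocycle_le_of_periodic [IsProbabilityMeasure μ] (hconc : μ (SFT ℓ W)ᶜ = 0)
    (herg : Ergodic shift μ) (hsupp : FullSupport ℓ W μ)
    (hfix : ∃ p ∈ SFT ℓ W, shift p = p) (hk : k ∈ Ioo 0 π)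
    (hper : ∀ p ∈ SFT ℓ W, ∀ n : ℕ, 1 ≤ n → shift^[n] p = p → |(AIter k p n).trace| ≤ 2) :
    ∃ C, ∀ ω ∈ SFT ℓ W, ∀ n, ‖act (cocycle shift (stepCocycle ℓ k) n ω)‖ ≤ C := by
  obtain ⟨r, hr, hrr⟩ := hfix
  have hr1 : r 1 = r 0 := apply_eq_of_shift_eq hrr 1
  obtain ⟨C, hC⟩ : ∃ C, ∀ ω ∈ SFT ℓ W, ∀ n : ℕ, 1 ≤ n → ω 0 = r 0 → ω n = r 0 →
      ‖act (cocycle shift (stepCocycle ℓ k) n ω)‖ ≤ C := by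
    refine ⟨_, fun ω hω n hn h0 h1 => norm_act_le_of_trace_bounds (abs_cos_lt_one hk)
      (R := stepCocycle ℓ k r) ?_ (abs_trace_loop_le hper hω hn (h1.trans h0.symm)) ?_⟩
    · rw [stepCocycle, hr1, coe_stepSL (hr.1 0) (hr.1 0), stepMatrix_self k (hr.1 0).1]
    · have e := cocycle_splice (ℓ := ℓ) (k := k) h1 1
      have e1 : cocycle shift (stepCocycle ℓ k) 1 r = stepCocycle ℓ k r := mul_one _
      rw [e1] at e
      rw [← e]
      refine abs_trace_loop_le hper (splice_mem_SFT h1 hω hr) (by omega) ?_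
      have h2 := splice_add h1 1
      push_cast at h2 ⊢
      rw [h2, splice_of_le _ _ (by positivity), h0, hr1]
  have hconn : ∀ i, ∃ d : ℝ, 0 ≤ d ∧ ∀ ω ∈ SFT ℓ W, ω 0 = i →
      (∃ u ∈ SFT ℓ W, ∃ n : ℕ, 1 ≤ n ∧ u 0 = r 0 ∧ u n = i ∧
        ‖act (cocycle shift (stepCocycle ℓ k) n u)‖ ≤ d) ∧
      ∃ v ∈ SFT ℓ W, ∃ n : ℕ, v 0 = i ∧ v n = r 0 ∧
        ‖act (cocycle shift (stepCocycle ℓ k) n v)‖ ≤ d := by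
    intro i
    by_cases hi : ∃ ω ∈ SFT ℓ W, ω 0 = i
    · obtain ⟨ω, hω, hωi⟩ := hi
      obtain ⟨n, hn, u, hu, hu0, hun⟩ := exists_shift_iterate_mem hconc herg hsupp
        (isOpen_eval_eq 0 (r 0)) (isOpen_eval_eq 0 i) ⟨r, rfl, hr⟩ ⟨ω, hωi, hω⟩ 1
      obtain ⟨m, -, v, hv, hv0, hvm⟩ := exists_shift_iterate_mem hconc herg hsupp
        (isOpen_eval_eq 0 i) (isOpen_eval_eq 0 (r 0)) ⟨ω, hωi, hω⟩ ⟨r, rfl, hr⟩ 0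
      have hun' : shift^[n] u 0 = i := hun
      have hvm' : shift^[m] v 0 = r 0 := hvm
      rw [shift_iterate_apply, zero_add] at hun' hvm'
      exact ⟨_, le_trans (norm_nonneg _) (le_max_left _ _), fun _ _ _ =>
        ⟨⟨u, hu, n, hn, hu0, hun', le_max_left _ _⟩, v, hv, m, hv0, hvm', le_max_right _ _⟩⟩
    · exact ⟨0, le_rfl, fun ω hω h => absurd ⟨ω, hω, h⟩ hi⟩
  choose d hd0 hd using hconn
  set D := ∑ i ∈ Finset.range (ℓ + 1), d i with hD
  have hdD : ∀ ω ∈ SFT ℓ W, ∀ n : ℤ, d (ω n) ≤ D := fun ω hω n =>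
    Finset.single_le_sum (fun i _ => hd0 i) (Finset.mem_range.2 (by have := (hω.1 n).2; omega))
  have hD0 : 0 ≤ D := Finset.sum_nonneg fun i _ => hd0 i
  refine ⟨D * C * D, fun ω hω n => ?_⟩
  obtain ⟨⟨u, hu, a, ha, hu0, hua, hun⟩, -⟩ := hd (ω 0) ω hω rfl
  obtain ⟨-, v, hv, b, hv0, hvb, hvn⟩ := hd (ω n) (shift^[n] ω) (shift_iterate_mem_SFT hω n)
    (by rw [shift_iterate_apply, zero_add])
  set x := splice u a ω with hx
  have hxS : x ∈ SFT ℓ W := splice_mem_SFT hua hu hω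
  have hxn : x ((n + a : ℕ) : ℤ) = v 0 := by
    push_cast
    rw [hx, splice_add hua, hv0]
  set y := splice x (n + a) v with hy
  have hyS : y ∈ SFT ℓ W := splice_mem_SFT hxn hxS hv
  have hprod : cocycle shift (stepCocycle ℓ k) (b + (n + a)) y
      = cocycle shift (stepCocycle ℓ k) b v * (cocycle shift (stepCocycle ℓ k) n ω
        * cocycle shift (stepCocycle ℓ k) a u) := by
    rw [hy, cocycle_splice hxn, hx, cocycle_splice hua]
  have hyC := hC y hyS (b + (n + a)) (by omega)
    (by rw [hy, splice_of_le _ _ (by positivity), hx, splice_of_le _ _ (by positivity), hu0])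
    (by
      have := splice_add hxn b
      push_cast at this ⊢
      rw [hy, this, hvb])
  rw [hprod] at hyC
  set V := cocycle shift (stepCocycle ℓ k) b v
  set Z := cocycle shift (stepCocycle ℓ k) n ω
  set U := cocycle shift (stepCocycle ℓ k) a u
  have hZ : Z = V⁻¹ * (V * (Z * U)) * U⁻¹ := by group
  rw [hZ]
  have hC0 : 0 ≤ C := (norm_nonneg _).trans hyC
  calc ‖act (V⁻¹ * (V * (Z * U)) * U⁻¹)‖
      ≤ ‖act V⁻¹‖ * ‖act (V * (Z * U))‖ * ‖act U⁻¹‖ :=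
        (norm_act_mul_le _ _).trans (mul_le_mul_of_nonneg_right (norm_act_mul_le _ _)
          (norm_nonneg _))
    _ ≤ D * C * D := by
        rw [norm_act_inv, norm_act_inv]
        gcongr
        · exact hvn.trans (hdD ω hω n)
        · exact hun.trans (hdD ω hω 0)

/-- If no periodic orbit is hyperbolic then the growth rate vanishes. -/
lemma tendsto_growth_zero_of_periodic [IsProbabilityMeasure μ] (hconc : μ (SFT ℓ W)ᶜ = 0)
    (herg : Ergodic shift μ) (hsupp : FullSupport ℓ W μ)
    (hfix : ∃ p ∈ SFT ℓ W, shift p = p) (hk : k ∈ Ioo 0 π)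
    (hper : ∀ p ∈ SFT ℓ W, ∀ n : ℕ, 1 ≤ n → shift^[n] p = p → |(AIter k p n).trace| ≤ 2) :
    Tendsto (fun n : ℕ => 1 / (n : ℝ) * ∫ ω, log ‖AIter k ω n‖ ∂μ) atTop (𝓝 0) := by
  simp only [← integral_log_norm_cocycle (k := k) hconc herg.toMeasurePreserving]
  obtain ⟨C, hC⟩ := exists_norm_cocycle_le_of_periodic hconc herg hsupp hfix hk hper
  have hSFT : ∀ᵐ ω ∂μ, ω ∈ SFT ℓ W := hconc
  have hbound : ∀ n : ℕ, |∫ ω, log ‖act (cocycle shift (stepCocycle ℓ k) n ω)‖ ∂μ| ≤ log C := by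
    intro n
    have := norm_integral_le_of_norm_le_const (μ := μ) (C := log C)
      (f := fun ω => log ‖act (cocycle shift (stepCocycle ℓ k) n ω)‖) (by
        filter_upwards [hSFT] with ω hω
        have h1 := one_le_norm_act (cocycle shift (stepCocycle ℓ k) n ω)
        rw [Real.norm_eq_abs, abs_of_nonneg (log_nonneg h1)]
        exact log_le_log (by linarith) (hC ω hω n))
    simpa using this
  refine squeeze_zero_norm (a := fun n : ℕ => 1 / (n : ℝ) * log C) (fun n => ?_) ?_
  · rw [norm_mul, Real.norm_eq_abs, Real.norm_eq_abs, abs_of_nonneg (by positivity)]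
    exact mul_le_mul_of_nonneg_left (hbound n) (by positivity)
  · simpa using tendsto_one_div_atTop_nhds_zero_nat.mul_const (log C)

end BoundedLoops

section TransferProducts

/-- A matrix in `SL(2,ℝ)` that is not hyperbolic has an orbit bounded away from zero and infinity. -/
lemma exists_bounded_orbit {g : SL2} (hg : |g.1.trace| ≤ 2) :
    ∃ v : Plane, ∃ c C : ℝ, 0 < c ∧ ∀ j : ℕ, c ≤ ‖(act g)^[j] v‖ ∧ ‖(act g)^[j] v‖ ≤ C := by
  rcases hg.lt_or_eq with hlt | heq
  · have hscale : ∀ v : Plane, v ≠ 0 → ∃ ξ : UnitCircle, (v = ‖v‖ • (ξ : Plane)) := fun v hv =>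
      ⟨⟨‖v‖⁻¹ • v, by simp [norm_smul, hv]⟩, by simp [smul_smul, hv]⟩
    have hne : (univ : Set UnitCircle).Nonempty :=
      ⟨⟨EuclideanSpace.single 0 1, by simp⟩, mem_univ _⟩
    have hcont : ContinuousOn (fun ξ : UnitCircle => |wedge ξ (act g ξ)|) univ :=
      (continuous_wedge_act g).abs.continuousOn
    obtain ⟨ξ₁, -, h1⟩ := isCompact_univ.exists_isMinOn hne hcont
    obtain ⟨ξ₂, -, h2⟩ := isCompact_univ.exists_isMaxOn hne hcont
    set a := |wedge ξ₁ (act g ξ₁)| with ha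
    set b := |wedge ξ₂ (act g ξ₂)| with hb
    have ha0 : 0 < a := abs_pos.2 (wedge_act_ne_zero hlt (coe_ne_zero ξ₁))
    have hab : a ≤ b := h1 (mem_univ ξ₂)
    have hb0 : 0 < b := ha0.trans_le hab
    refine ⟨EuclideanSpace.single 0 1, √(a / b), √(b / a), by positivity, fun j => ?_⟩
    set v : Plane := EuclideanSpace.single 0 1 with hv
    have hv1 : ‖v‖ = 1 := by simp [hv]
    have hv0 : v ≠ 0 := norm_ne_zero_iff.1 (by rw [hv1]; exact one_ne_zero)
    have hw0 : (act g)^[j] v ≠ 0 := by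
      induction j with
      | zero => exact hv0
      | succ j ih => rw [Function.iterate_succ_apply']; exact act_ne_zero g ih
    have hbd : ∀ w : Plane, w ≠ 0 →
        a * ‖w‖ ^ 2 ≤ |wedge w (act g w)| ∧ |wedge w (act g w)| ≤ b * ‖w‖ ^ 2 := fun w hw => by
      obtain ⟨ξ, hξ⟩ := hscale w hw
      have e : |wedge w (act g w)| = ‖w‖ ^ 2 * |wedge ξ (act g ξ)| := by
        conv_lhs => rw [hξ]
        rw [map_smul, wedge_smul_smul, abs_mul, abs_of_nonneg (sq_nonneg _)]
      have i1 : a ≤ |wedge ξ (act g ξ)| := h1 (mem_univ ξ)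
      have i2 : |wedge ξ (act g ξ)| ≤ b := h2 (mem_univ ξ)
      rw [e]
      constructor <;> nlinarith [sq_nonneg ‖w‖]
    have e1 := hbd v hv0
    have e2 := hbd _ hw0
    rw [wedge_act_iterate] at e2
    rw [hv1, one_pow, mul_one, mul_one] at e1
    constructor
    · refine Real.sqrt_le_iff.2 ⟨norm_nonneg _, ?_⟩
      rw [div_le_iff₀ hb0]; linarith [e1.1, e2.2]
    · refine Real.le_sqrt_of_sq_le ?_
      rw [le_div_iff₀ ha0]; linarith [e1.2, e2.1]
  · set t := g.1.trace with ht
    set s := t / 2 with hs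
    have hs1 : |s| = 1 := by rw [hs, abs_div, heq]; norm_num
    have hts : t = 2 * s := by rw [hs]; ring
    have hss : s * s = 1 := by rw [← abs_mul_abs_self, hs1, one_mul]
    suffices h : ∃ v : Plane, v ≠ 0 ∧ act g v = s • v by
      obtain ⟨v, hv0, hv⟩ := h
      refine ⟨v, ‖v‖, ‖v‖, norm_pos_iff.2 hv0, fun j => ?_⟩
      have : (act g)^[j] v = s ^ j • v := by
        induction j with
        | zero => simp
        | succ j ih => rw [Function.iterate_succ_apply', ih, map_smul, hv, smul_smul, pow_succ]
      rw [this, norm_smul, norm_pow, Real.norm_eq_abs, hs1, one_pow, one_mul]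
      exact ⟨le_rfl, le_rfl⟩
    set x : Plane := EuclideanSpace.single 0 1 with hx
    have hx0 : x ≠ 0 := norm_ne_zero_iff.1 (by simp [hx])
    by_cases h : act g x = s • x
    · exact ⟨x, hx0, h⟩
    · refine ⟨act g x - s • x, sub_ne_zero.2 h, ?_⟩
      rw [map_sub, map_smul, act_act_eq, ← ht, hts, smul_sub, smul_smul, hss]
      module

lemma iterate_add_one (n : ℕ) (m : ℤ) : (fun i : ℤ => i + 1)^[n] m = m + n := by
  induction n with
  | zero => simp
  | succ n ih => rw [Function.iterate_succ_apply', ih]; push_cast; ring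

/-- The product of `S m, …, S (m + n - 1)`, later factors on the left. -/
def chainProd (S : ℤ → SL2) (n : ℕ) (m : ℤ) : SL2 := cocycle (fun i : ℤ => i + 1) S n m

variable {S : ℤ → SL2} {N : ℕ}

@[simp] lemma chainProd_zero (S : ℤ → SL2) (m : ℤ) : chainProd S 0 m = 1 := rfl

lemma chainProd_succ (S : ℤ → SL2) (n : ℕ) (m : ℤ) :
    chainProd S (n + 1) m = S (m + n) * chainProd S n m := by
  rw [chainProd, cocycle, iterate_add_one]; rfl

lemma chainProd_add (S : ℤ → SL2) (i j : ℕ) (m : ℤ) :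
    chainProd S (i + j) m = chainProd S i (m + j) * chainProd S j m := by
  rw [chainProd, cocycle_add, iterate_add_one]; rfl

lemma chainProd_add_period (hS : ∀ m, S (m + N) = S m) (n : ℕ) (m : ℤ) :
    chainProd S n (m + N) = chainProd S n m := by
  induction n with
  | zero => rfl
  | succ n ih => rw [chainProd_succ, chainProd_succ, ih, add_right_comm, hS]

lemma trace_chainProd_period (hS : ∀ m, S (m + N) = S m) (m : ℤ) :
    (chainProd S N m).1.trace = (chainProd S N 0).1.trace := by
  have key : ∀ m, (chainProd S N (m + 1)).1.trace = (chainProd S N m).1.trace := fun m => by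
    have h1 := chainProd_succ S N m
    have h2 := chainProd_add S N 1 m
    have h3 : chainProd S 1 m = S m := by rw [chainProd_succ]; simp
    rw [h1, h3, hS, Nat.cast_one] at h2
    have h4 : chainProd S N (m + 1) = S m * chainProd S N m * (S m)⁻¹ := by
      rw [h2, mul_inv_cancel_right]
    have h5 : (S m)⁻¹ * (S m * chainProd S N m) = chainProd S N m := by group
    rw [h4, Matrix.SpecialLinearGroup.coe_mul, Matrix.trace_mul_comm,
      ← Matrix.SpecialLinearGroup.coe_mul, h5]
  induction m using Int.induction_on with
  | zero => rfl
  | succ i ih => rw [key, ih]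
  | pred i ih => rw [← ih, ← key (-(i : ℤ) - 1), sub_add_cancel]

lemma norm_act_chainProd_le {K : ℝ} (hK1 : 1 ≤ K) (hK : ∀ m, ‖act (S m)‖ ≤ K) (n : ℕ) (m : ℤ) :
    ‖act (chainProd S n m)‖ ≤ K ^ n := by
  induction n with
  | zero =>
    refine ContinuousLinearMap.opNorm_le_bound _ (by simp) fun v => by simp
  | succ n ih =>
    rw [chainProd_succ, pow_succ']
    exact (norm_act_mul_le _ _).trans
      (mul_le_mul (hK _) ih (norm_nonneg _) (by linarith))

/-- Duhamel estimate for an inhomogeneous chain. -/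
lemma norm_sub_act_chainProd_le {K : ℝ} (hK1 : 1 ≤ K) (hK : ∀ m, ‖act (S m)‖ ≤ K)
    {w : ℤ → Plane} {e : ℤ → ℝ} (hw : ∀ m, ‖w (m + 1) - act (S m) (w m)‖ ≤ e m) (n : ℕ) (m : ℤ) :
    ‖w (m + n) - act (chainProd S n m) (w m)‖ ≤ K ^ n * ∑ i ∈ Finset.range n, e (m + i) := by
  have he : ∀ m, 0 ≤ e m := fun m => (norm_nonneg _).trans (hw m)
  induction n with
  | zero => simp
  | succ n ih =>
    rw [chainProd_succ, act_mul, Finset.sum_range_succ]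
    have e1 : w (m + (n + 1 : ℕ)) - act (S (m + n)) (act (chainProd S n m) (w m))
        = (w (m + n + 1) - act (S (m + n)) (w (m + n)))
          + act (S (m + n)) (w (m + n) - act (chainProd S n m) (w m)) := by
      rw [map_sub, Nat.cast_succ, add_assoc]; abel
    rw [e1]
    refine (norm_add_le _ _).trans ?_
    have h1 := hw (m + n)
    have h2 : ‖act (S (m + n)) (w (m + n) - act (chainProd S n m) (w m))‖
        ≤ K * (K ^ n * ∑ i ∈ Finset.range n, e (m + i)) :=
      ((act _).le_opNorm _).trans (mul_le_mul (hK _) ih (norm_nonneg _) (by linarith))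
    have h3 : (1 : ℝ) ≤ K ^ (n + 1) := one_le_pow₀ hK1
    have h4 := he (m + n)
    rw [mul_add, pow_succ']
    rw [pow_succ'] at h3
    nlinarith

/-- Three-term estimate along a period, from the Cayley–Hamilton theorem. -/
lemma norm_three_term_le {K : ℝ} (hK1 : 1 ≤ K) (hK : ∀ m, ‖act (S m)‖ ≤ K)
    (hS : ∀ m, S (m + N) = S m) :
    ∃ C, 0 ≤ C ∧ ∀ {w : ℤ → Plane} {e : ℤ → ℝ},
      (∀ m, ‖w (m + 1) - act (S m) (w m)‖ ≤ e m) → ∀ m,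
      ‖w (m + N + N) - (chainProd S N 0).1.trace • w (m + N) + w m‖
        ≤ C * ∑ i ∈ Finset.range (N + N), e (m + i) := by
  set t := (chainProd S N 0).1.trace with ht
  refine ⟨(K ^ N + |t| + 1) * K ^ N, by positivity, fun {w e} hw m => ?_⟩
  have he : ∀ m, 0 ≤ e m := fun m => (norm_nonneg _).trans (hw m)
  set A := chainProd S N m with hA
  have hAt : A.1.trace = t := trace_chainProd_period hS m
  have h1 := norm_sub_act_chainProd_le hK1 hK hw N m
  have h2 := norm_sub_act_chainProd_le hK1 hK hw N (m + N)
  rw [chainProd_add_period hS] at h2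
  rw [← hA] at h1 h2
  set r := w (m + N) - act A (w m) with hr
  set r' := w (m + N + N) - act A (w (m + N)) with hr'
  have e1 : w (m + N + N) - t • w (m + N) + w m = act A r + r' - t • r := by
    have h3 : w (m + N) = r + act A (w m) := by rw [hr]; abel
    have h4 : w (m + N + N) = r' + act A (w (m + N)) := by rw [hr']; abel
    rw [h4, h3, map_add, act_act_eq, hAt]
    module
  rw [e1]
  have hsum : ∑ i ∈ Finset.range (N + N), e (m + i)
      = ∑ i ∈ Finset.range N, e (m + i) + ∑ i ∈ Finset.range N, e (m + N + i) := by
    rw [Finset.sum_range_add]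
    simp [add_assoc]
  rw [hsum]
  set s1 := ∑ i ∈ Finset.range N, e (m + i)
  set s2 := ∑ i ∈ Finset.range N, e (m + N + i)
  have hs1 : 0 ≤ s1 := Finset.sum_nonneg fun _ _ => he _
  have hs2 : 0 ≤ s2 := Finset.sum_nonneg fun _ _ => he _
  have h5 : ‖act A r‖ ≤ K ^ N * ‖r‖ := ((act A).le_opNorm r).trans
    (mul_le_mul_of_nonneg_right (norm_act_chainProd_le hK1 hK N m) (norm_nonneg _))
  have h6 : ‖act A r + r' - t • r‖ ≤ ‖act A r‖ + ‖r'‖ + |t| * ‖r‖ := by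
    refine (norm_sub_le _ _).trans (add_le_add (norm_add_le _ _) ?_)
    rw [norm_smul, Real.norm_eq_abs]
  have hKN : 0 ≤ K ^ N := by positivity
  have h7 : (K ^ N + |t|) * ‖r‖ ≤ (K ^ N + |t|) * (K ^ N * s1) :=
    mul_le_mul_of_nonneg_left h1 (by positivity)
  have h8 : 0 ≤ (K ^ N + |t|) * (K ^ N * s2) := by positivity
  have h9 : 0 ≤ K ^ N * s1 := by positivity
  nlinarith

end TransferProducts

section JacobiSpectrum

open scoped NNReal ENNReal InnerProductSpace

lemma exists_abs_translate (u : L2Z) (i : ℤ) :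
    ∃ v : L2Z, (∀ n, v n = |u (n + i)|) ∧ ‖v‖ = ‖u‖ := by
  have h2 : 0 < (2 : ℝ≥0∞).toReal := by norm_num
  have hs : Summable fun n : ℤ => ‖u n‖ ^ (2 : ℝ≥0∞).toReal := (memℓp_gen_iff h2).1 (lp.memℓp u)
  have hs' : Summable fun n : ℤ => ‖|u (n + i)|‖ ^ (2 : ℝ≥0∞).toReal := by
    simp only [norm_abs_eq_norm]
    exact (Equiv.addRight i).summable_iff.2 hs
  refine ⟨⟨fun n => |u (n + i)|, memℓp_gen hs'⟩, fun n => rfl, ?_⟩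
  rw [lp.norm_eq_tsum_rpow h2, lp.norm_eq_tsum_rpow h2]
  congr 1
  simp only [norm_abs_eq_norm]
  exact (Equiv.addRight i).tsum_eq fun n : ℤ => ‖u n‖ ^ (2 : ℝ≥0∞).toReal

/-- Bounded solutions of the eigenvalue equation on a half line which do not decay put the
energy into the spectrum. -/
lemma mem_spectrum_of_bounded_solution {p : ℤ → ℕ} {H : L2Z →L[ℝ] L2Z} (hH : IsJacobiOp p H)
    {E C δ : ℝ} {U : ℤ → ℝ} (hU : ∀ m, |U m| ≤ C)
    (heq : ∀ m : ℤ, 1 ≤ m → (p m : ℝ) / (p m + p (m - 1)) * U (m + 1)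
      + (p (m - 1) : ℝ) / (p m + p (m - 1)) * U (m - 1) = E * U m)
    (hδ : 0 < δ) (hlow : ∀ m : ℤ, 1 ≤ m → δ ≤ U m ^ 2 + U (m + 1) ^ 2) : E ∈ spectrum ℝ H := by
  intro hunit
  obtain ⟨-, K, hK⟩ := ContinuousLinearMap.bijective_iff_dense_range_and_antilipschitz _ |>.1
    (ContinuousLinearMap.isUnit_iff_bijective.1 hunit)
  set F : L2Z →L[ℝ] L2Z := algebraMap ℝ (L2Z →L[ℝ] L2Z) E - H with hF
  have hbd : ∀ u, ‖u‖ ≤ K * ‖F u‖ := fun u => by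
    simpa [dist_eq_norm] using hK.le_mul_dist u 0
  have hC : 0 ≤ C := (abs_nonneg _).trans (hU 0)
  set C₁ := |E| * C + 2 * C with hC₁
  have hC₁0 : 0 ≤ C₁ := by positivity
  let φ : ℕ → L2Z := fun n => ∑ m ∈ Finset.Icc (1 : ℤ) (2 * n), lp.single 2 m (U m)
  have hφ : ∀ (n : ℕ) (m : ℤ), φ n m = if m ∈ Finset.Icc (1 : ℤ) (2 * n) then U m else 0 := by
    intro n m
    simp only [φ, lp.coeFn_sum, lp.coeFn_single, Finset.sum_apply, Finset.sum_pi_single]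
  have hφn : ∀ n : ℕ, n * δ ≤ ‖φ n‖ ^ 2 := by
    intro n
    have h := lp.norm_sum_single (p := 2) (E := fun _ : ℤ => ℝ) (by norm_num) U
      (Finset.Icc (1 : ℤ) (2 * n))
    simp only [ENNReal.toReal_ofNat, Real.rpow_ofNat, Real.norm_eq_abs, sq_abs] at h
    rw [h]
    clear h
    induction n with
    | zero => simp
    | succ n ih =>
      have e : Finset.Icc (1 : ℤ) (2 * (n + 1 : ℕ))
          = insert (2 * (n : ℤ) + 1 + 1) (insert (2 * (n : ℤ) + 1) (Finset.Icc 1 (2 * (n : ℤ)))) := by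
        ext m
        simp only [Finset.mem_insert, Finset.mem_Icc]
        push_cast
        omega
      rw [e, Finset.sum_insert (by simp), Finset.sum_insert (by simp)]
      have := hlow (2 * (n : ℤ) + 1) (by omega)
      push_cast
      linarith
  have hFφ : ∀ n : ℕ, ‖F (φ n)‖ ≤ 4 * C₁ := by
    intro n
    have hval : ∀ m, F (φ n) m = E * φ n m - ((p m : ℝ) / (p m + p (m - 1)) * φ n (m + 1)
      + (p (m - 1) : ℝ) / (p m + p (m - 1)) * φ n (m - 1)) := fun m => by
      rw [← hH]; rfl
    have hφC : ∀ m, |φ n m| ≤ C := fun m => by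
      rw [hφ]; split_ifs
      · exact hU m
      · simpa using hC
    have hle : ∀ m, ‖F (φ n) m‖ ≤ C₁ := by
      intro m
      have a1 : |(p m : ℝ) / (p m + p (m - 1))| ≤ 1 := by
        rw [abs_of_nonneg (by positivity)]
        exact div_le_one_of_le₀ (by simp) (by positivity)
      have a2 : |(p (m - 1) : ℝ) / (p m + p (m - 1))| ≤ 1 := by
        rw [abs_of_nonneg (by positivity)]
        exact div_le_one_of_le₀ (by simp) (by positivity)
      rw [hval, Real.norm_eq_abs]
      refine (abs_sub _ _).trans ?_
      have b0 : |E * φ n m| ≤ |E| * C := by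
        rw [abs_mul]; exact mul_le_mul_of_nonneg_left (hφC m) (abs_nonneg _)
      have b1 : |(p m : ℝ) / (p m + p (m - 1)) * φ n (m + 1)| ≤ 1 * C := by
        rw [abs_mul]; exact mul_le_mul a1 (hφC _) (abs_nonneg _) zero_le_one
      have b2 : |(p (m - 1) : ℝ) / (p m + p (m - 1)) * φ n (m - 1)| ≤ 1 * C := by
        rw [abs_mul]; exact mul_le_mul a2 (hφC _) (abs_nonneg _) zero_le_one
      have b3 := abs_add_le ((p m : ℝ) / (p m + p (m - 1)) * φ n (m + 1))
        ((p (m - 1) : ℝ) / (p m + p (m - 1)) * φ n (m - 1))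
      rw [hC₁]
      linarith
    set s : Finset ℤ := {0, 1, 2 * (n : ℤ), 2 * (n : ℤ) + 1} with hs
    have hsupp : ∀ m, m ∉ s → F (φ n) m = 0 := by
      intro m hm
      simp only [hs, Finset.mem_insert, Finset.mem_singleton, not_or] at hm
      obtain ⟨h0, h1, h2, h3⟩ := hm
      rw [hval, hφ, hφ, hφ]
      simp only [Finset.mem_Icc]
      by_cases hin : 1 ≤ m ∧ m ≤ 2 * n
      · rw [if_pos hin, if_pos (by omega), if_pos (by omega), heq m hin.1, sub_self]
      · rw [if_neg hin, if_neg (by omega), if_neg (by omega)]; simp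
    have e : F (φ n) = ∑ m ∈ s, lp.single 2 m (F (φ n) m) := by
      ext m
      simp only [lp.coeFn_sum, lp.coeFn_single, Finset.sum_apply, Finset.sum_pi_single]
      split_ifs with hm
      · rfl
      · exact hsupp m hm
    rw [e]
    refine (norm_sum_le_of_le s (f := fun m => lp.single (E := fun _ : ℤ => ℝ) 2 m (F (φ n) m))
      (n := fun _ => C₁) fun m _ => ?_).trans ?_
    · rw [lp.norm_single (by norm_num)]
      exact hle m
    · rw [Finset.sum_const, nsmul_eq_mul]
      have : s.card ≤ 4 := Finset.card_le_four
      exact mul_le_mul_of_nonneg_right (by exact_mod_cast this) hC₁0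
  obtain ⟨n, hn⟩ := exists_nat_gt ((K * (4 * C₁)) ^ 2 / δ)
  rw [div_lt_iff₀ hδ] at hn
  have h1 : ‖φ n‖ ≤ K * (4 * C₁) :=
    (hbd _).trans (mul_le_mul_of_nonneg_left (hFφ n) K.2)
  have h2 : ‖φ n‖ ^ 2 ≤ (K * (4 * C₁)) ^ 2 := by gcongr
  linarith [hφn n]

/-- The operator becomes symmetric after weighting, so a lower bound already excludes the energy
from the spectrum. -/
lemma notMem_spectrum_of_bound {p : ℤ → ℕ} (hp : ∀ n, 1 ≤ p n) {H : L2Z →L[ℝ] L2Z}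
    (hH : IsJacobiOp p H) {E c : ℝ} (hc : 0 ≤ c) (hb : ∀ u : L2Z, ‖u‖ ≤ c * ‖H u - E • u‖) :
    E ∉ spectrum ℝ H := by
  have hp0 : ∀ n, (1 : ℝ) ≤ p n := fun n => by exact_mod_cast hp n
  rw [spectrum.notMem_iff, ContinuousLinearMap.isUnit_iff_bijective,
    ContinuousLinearMap.bijective_iff_dense_range_and_antilipschitz]
  set F : L2Z →L[ℝ] L2Z := algebraMap ℝ (L2Z →L[ℝ] L2Z) E - H with hF
  have hFu : ∀ u, F u = E • u - H u := fun u => rfl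
  refine ⟨?_, ⟨⟨c, hc⟩, F.antilipschitz_of_bound fun u => ?_⟩⟩
  · rw [Submodule.topologicalClosure_eq_top_iff, Submodule.eq_bot_iff]
    intro y hy
    have hy' : ∀ n : ℤ, E * y n = (p (n - 1) : ℝ) / (p (n - 1) + p (n - 1 - 1)) * y (n - 1)
        + (p n : ℝ) / (p (n + 1) + p n) * y (n + 1) := by
      intro n
      have h0 := hy (F (lp.single 2 n 1)) ⟨_, rfl⟩
      have e : F (lp.single 2 n 1) = lp.single 2 n E
          - (lp.single 2 (n - 1) ((p (n - 1) : ℝ) / (p (n - 1) + p (n - 1 - 1)))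
          + lp.single 2 (n + 1) ((p n : ℝ) / (p (n + 1) + p n))) := by
        ext m
        rw [hFu, lp.coeFn_sub, Pi.sub_apply, hH, lp.coeFn_sub, lp.coeFn_add, lp.coeFn_smul]
        simp only [Pi.sub_apply, Pi.add_apply, Pi.smul_apply, lp.single_apply, smul_eq_mul,
          Pi.single_apply]
        have c1 : m + 1 = n ↔ m = n - 1 := by omega
        have c2 : m - 1 = n ↔ m = n + 1 := by omega
        simp only [c1, c2]
        by_cases h1 : m = n - 1
        · subst h1
          simp [show (n : ℤ) - 1 ≠ n + 1 by omega]
        · by_cases h2 : m = n + 1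
          · subst h2
            simp [show (n : ℤ) + 1 ≠ n - 1 by omega]
          · simp [h1, h2]
      rw [e, inner_sub_left, inner_add_left, lp.inner_single_left, lp.inner_single_left,
        lp.inner_single_left] at h0
      simp only [RCLike.inner_apply, conj_trivial] at h0
      linarith
    have hle : ∀ n, ‖y n / (p n + p (n - 1))‖ ≤ ‖y n‖ := fun n => by
      rw [norm_div, Real.norm_of_nonneg (r := (p n : ℝ) + p (n - 1)) (by positivity)]
      exact div_le_self (norm_nonneg _) (by linarith [hp0 n, hp0 (n - 1)])
    let z : L2Z := ⟨fun n => y n / (p n + p (n - 1)), (lp.memℓp y).mono' fun n => hle n⟩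
    have hz : ∀ n, z n = y n / (p n + p (n - 1)) := fun n => rfl
    have hHz : H z - E • z = 0 := by
      ext n
      rw [lp.coeFn_sub, lp.coeFn_smul, Pi.sub_apply, Pi.smul_apply, hH, hz, hz, hz]
      have h := hy' n
      have d0 := hp0 n
      have d1 := hp0 (n - 1)
      have d2 := hp0 (n - 1 - 1)
      have d3 := hp0 (n + 1)
      rw [show n + 1 - 1 = n by ring, smul_eq_mul]
      have e1 : (p n : ℝ) / (p n + p (n - 1)) * (y (n + 1) / (p (n + 1) + p n))
          + (p (n - 1) : ℝ) / (p n + p (n - 1)) * (y (n - 1) / (p (n - 1) + p (n - 1 - 1)))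
          - E * (y n / (p n + p (n - 1)))
          = ((p (n - 1) : ℝ) / (p (n - 1) + p (n - 1 - 1)) * y (n - 1)
            + (p n : ℝ) / (p (n + 1) + p n) * y (n + 1) - E * y n) / (p n + p (n - 1)) := by
        ring
      rw [e1, h, sub_self, zero_div]
      rfl
    have hz0 : z = 0 := by
      have := hb z
      rw [hHz, norm_zero, mul_zero] at this
      exact norm_le_zero_iff.1 this
    ext n
    have h1 : z n = 0 := by rw [hz0]; rfl
    rw [hz, div_eq_zero_iff] at h1
    refine h1.resolve_right ?_
    linarith [hp0 n, hp0 (n - 1)]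
  · rw [hFu, norm_sub_rev]
    exact hb u

end JacobiSpectrum

section PeriodicSpectrum

variable {p : ℤ → ℕ} {k : ℝ} {N ℓ : ℕ}

/-- The transfer matrix over the site `m` of the sequence `p`. -/
noncomputable def siteSL (p : ℤ → ℕ) (hp : ∀ n, 1 ≤ p n) (k : ℝ) (m : ℤ) : SL2 :=
  ⟨stepMatrix k (p (m - 1)) (p m), det_stepMatrix k (hp _) (hp _)⟩

lemma coe_chainProd_siteSL (hp : ∀ n, 1 ≤ p n) (n : ℕ) :
    (chainProd (siteSL p hp k) n 0).1 = AIter k p n := by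
  induction n with
  | zero => rfl
  | succ n ih =>
    rw [chainProd_succ, AIter, ← ih, Acoc_eq_stepMatrix, shift_iterate_apply, shift_iterate_apply,
      Matrix.SpecialLinearGroup.coe_mul, zero_add,
      neg_add_eq_sub]
    rfl

lemma act_siteSL_zero (hp : ∀ n, 1 ≤ p n) (m : ℤ) (v : Plane) :
    act (siteSL p hp k m) v 0 = √((p m : ℝ) / p (m - 1))
      * (((p m : ℝ) + p (m - 1)) / p m * cos k * v 0 - (p (m - 1) : ℝ) / p m * v 1) := by
  rw [act_apply]
  simp [siteSL, stepMatrix]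
  ring

lemma act_siteSL_one (hp : ∀ n, 1 ≤ p n) (m : ℤ) (v : Plane) :
    act (siteSL p hp k m) v 1 = √((p m : ℝ) / p (m - 1)) * v 0 := by
  rw [act_apply]
  simp [siteSL, stepMatrix]

lemma exists_norm_siteSL_le (hp : ∀ n, 1 ≤ p n) (hpℓ : ∀ n, p n ≤ ℓ) :
    ∃ K, 1 ≤ K ∧ ∀ m, ‖act (siteSL p hp k m)‖ ≤ K := by
  obtain ⟨K, hK⟩ := exists_norm_stepSL_le ℓ k
  have h : ∀ m, ‖act (siteSL p hp k m)‖ ≤ K := fun m => by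
    have := hK (p (m - 1)) (p m)
    rw [norm_act, coe_stepSL ⟨hp _, hpℓ _⟩ ⟨hp _, hpℓ _⟩] at this
    rwa [norm_act]
  exact ⟨K, (one_le_norm_act _).trans (h 0), h⟩

lemma siteSL_add_period (hp : ∀ n, 1 ≤ p n) (hper : ∀ m, p (m + N) = p m) (m : ℤ) :
    siteSL p hp k (m + N) = siteSL p hp k m := by
  refine Subtype.ext ?_
  simp only [siteSL, hper, show m + N - 1 = m - 1 + (N : ℤ) by ring]

lemma cos_mem_spectrum_of_abs_trace_le (hp : ∀ n, 1 ≤ p n) (hpℓ : ∀ n, p n ≤ ℓ) (hN : 1 ≤ N)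
    (hper : ∀ m, p (m + N) = p m) {H : L2Z →L[ℝ] L2Z} (hH : IsJacobiOp p H)
    (ht : |(AIter k p N).trace| ≤ 2) : cos k ∈ spectrum ℝ H := by
  obtain ⟨K, hK1, hK⟩ := exists_norm_siteSL_le (k := k) hp hpℓ
  set S := siteSL p hp k with hSdef
  have hS : ∀ m, S (m + N) = S m := siteSL_add_period hp hper
  rw [← coe_chainProd_siteSL hp] at ht
  obtain ⟨v, c, C, hc, hv⟩ := exists_bounded_orbit ht
  have hp1 : ∀ n, (1 : ℝ) ≤ p n := fun n => by exact_mod_cast hp n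
  have hl : ∀ n, (p n : ℝ) ≤ ℓ := fun n => by exact_mod_cast hpℓ n
  have hℓ0 : (0 : ℝ) < ℓ := lt_of_lt_of_le (by linarith [hp1 0]) (hl 0)
  set w : ℕ → Plane := fun m => act (chainProd S m 0) v with hw
  have hwsucc : ∀ m, w (m + 1) = act (S m) (w m) := fun m => by
    simp only [hw]
    rw [chainProd_succ, zero_add, act_mul]
  have hmulN : ∀ j : ℕ, act (chainProd S (j * N) 0) v = (act (chainProd S N 0))^[j] v := by
    intro j
    induction j with
    | zero => simp
    | succ j ih =>
      have hshift : ∀ i : ℕ, chainProd S N (0 + ((i * N : ℕ) : ℤ)) = chainProd S N 0 := fun i => by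
        induction i with
        | zero => simp
        | succ i ihi =>
          rw [← ihi, ← chainProd_add_period hS N (0 + ((i * N : ℕ) : ℤ))]
          congr 1
          push_cast
          ring
      rw [add_mul, one_mul, add_comm, chainProd_add, act_mul, ih, hshift,
        Function.iterate_succ_apply']
  have hwbd : ∀ m, c / K ^ N ≤ ‖w m‖ ∧ ‖w m‖ ≤ K ^ N * C := by
    intro m
    have hm : m % N + m / N * N = m := by rw [mul_comm]; exact Nat.mod_add_div m N
    have e : w m = act (chainProd S (m % N) (0 + ((m / N * N : ℕ) : ℤ)))
        ((act (chainProd S N 0))^[m / N] v) := by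
      rw [← hmulN, ← act_mul, ← chainProd_add, hm]
    set g := chainProd S (m % N) (0 + ((m / N * N : ℕ) : ℤ)) with hg
    have hgK : ‖act g‖ ≤ K ^ N := (norm_act_chainProd_le hK1 hK _ _).trans
      (pow_le_pow_right₀ hK1 (Nat.mod_lt m hN).le)
    rw [e]
    obtain ⟨h1, h2⟩ := hv (m / N)
    constructor
    · rw [div_le_iff₀' (by positivity)]
      exact h1.trans ((norm_le_norm_act_mul g _).trans
        (mul_le_mul_of_nonneg_right hgK (norm_nonneg _)))
    · exact ((act g).le_opNorm _).trans (mul_le_mul hgK h2 (norm_nonneg _) (by positivity))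
  have hsq : ∀ m, ‖w m‖ ^ 2 = w m 0 ^ 2 + w m 1 ^ 2 := fun m => by
    rw [EuclideanSpace.real_norm_sq_eq, Fin.sum_univ_two]
  set U : ℤ → ℝ := fun m => w m.toNat 0 / √(p (m - 1)) with hU
  have hsqrt1 : ∀ n, (1 : ℝ) ≤ √(p n) := fun n => Real.one_le_sqrt.2 (hp1 n)
  have hUs : ∀ m : ℤ, 0 ≤ m → w (m.toNat + 1) 0 / √(p m) = U (m + 1) := fun m hm => by
    simp only [hU]
    rw [add_sub_cancel_right, show (m + 1).toNat = m.toNat + 1 by omega]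
  have hw1 : ∀ m : ℤ, 0 ≤ m → w (m.toNat + 1) 1 = √(p m) * U m := fun m hm => by
    have hc : ((m.toNat : ℕ) : ℤ) = m := Int.toNat_of_nonneg hm
    rw [hwsucc, act_siteSL_one, hc, Real.sqrt_div (by positivity)]
    simp only [hU]
    ring
  have hw0 : ∀ m : ℤ, 0 ≤ m → w m.toNat 0 = √(p (m - 1)) * U m := fun m hm => by
    have := hsqrt1 (m - 1)
    simp only [hU]
    field_simp
  refine mem_spectrum_of_bounded_solution hH (U := U) (C := K ^ N * C)
    (δ := (c / K ^ N) ^ 2 / ℓ) (fun m => ?_) (fun m hm => ?_) (by positivity) fun m hm => ?_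
  · simp only [hU]
    rw [abs_div, abs_of_pos (a := √(p (m - 1) : ℝ)) (by linarith [hsqrt1 (m - 1)])]
    refine (div_le_self (abs_nonneg _) (hsqrt1 _)).trans ?_
    refine le_trans ?_ (hwbd m.toNat).2
    exact PiLp.norm_apply_le (w m.toNat) 0
  · have hc : ((m.toNat : ℕ) : ℤ) = m := Int.toNat_of_nonneg (by omega)
    have h1 := hw1 (m - 1) (by omega)
    rw [show (m - 1).toNat + 1 = m.toNat by omega] at h1
    have h0 := hw0 m (by omega)
    have h2 := hw0 (m + 1) (by omega)
    rw [add_sub_cancel_right, show (m + 1).toNat = m.toNat + 1 by omega, hwsucc, act_siteSL_zero,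
      hc, h0, h1, Real.sqrt_div (by positivity)] at h2
    have a1 := hp1 m
    have a2 := hp1 (m - 1)
    have b1 := hsqrt1 m
    have b2 := hsqrt1 (m - 1)
    have h3 : U (m + 1) = ((p m : ℝ) + p (m - 1)) / p m * cos k * U m
        - (p (m - 1) : ℝ) / p m * U (m - 1) := by
      have hne : √(p m : ℝ) ≠ 0 := by linarith
      refine mul_left_cancel₀ hne ?_
      rw [← h2]
      field_simp
    rw [h3]
    field_simp
    ring
  · have h1 := hw1 m (by omega)
    have h2 := hw0 (m + 1) (by omega)
    rw [add_sub_cancel_right, show (m + 1).toNat = m.toNat + 1 by omega] at h2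
    have h3 := hsq (m.toNat + 1)
    rw [h1, h2, mul_pow, mul_pow, Real.sq_sqrt (by positivity)] at h3
    have h4 : (c / K ^ N) ^ 2 ≤ ‖w (m.toNat + 1)‖ ^ 2 := by
      have := (hwbd (m.toNat + 1)).1
      gcongr
    rw [div_le_iff₀' hℓ0]
    have h5 : (p m : ℝ) * (U m ^ 2 + U (m + 1) ^ 2) ≤ ℓ * (U m ^ 2 + U (m + 1) ^ 2) :=
      mul_le_mul_of_nonneg_right (hl m) (by positivity)
    linarith

lemma abs_trace_le_of_cos_mem_spectrum (hp : ∀ n, 1 ≤ p n) (hpℓ : ∀ n, p n ≤ ℓ)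
    (hper : ∀ m, p (m + N) = p m) {H : L2Z →L[ℝ] L2Z} (hH : IsJacobiOp p H)
    (hspec : cos k ∈ spectrum ℝ H) : |(AIter k p N).trace| ≤ 2 := by
  by_contra! ht
  obtain ⟨K, hK1, hK⟩ := exists_norm_siteSL_le (k := k) hp hpℓ
  set S := siteSL p hp k with hSdef
  have hS : ∀ m, S (m + N) = S m := siteSL_add_period hp hper
  rw [← coe_chainProd_siteSL hp] at ht
  obtain ⟨C, hC0, hC⟩ := norm_three_term_le hK1 hK hS
  set t := (chainProd S N 0).1.trace
  have hp1 : ∀ n, (1 : ℝ) ≤ p n := fun n => by exact_mod_cast hp n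
  have hl : ∀ n, (p n : ℝ) ≤ ℓ := fun n => by exact_mod_cast hpℓ n
  have hℓ0 : (0 : ℝ) < ℓ := lt_of_lt_of_le (by linarith [hp1 0]) (hl 0)
  have hsqrt1 : ∀ n, (1 : ℝ) ≤ √(p n) := fun n => Real.one_le_sqrt.2 (hp1 n)
  set D : ℝ := √ℓ * (ℓ + ℓ) with hD
  have hD0 : 0 ≤ D := by positivity
  set Q : ℝ := C * ((N + N : ℕ) * D) with hQ
  have hQ0 : 0 ≤ Q := by positivity
  refine notMem_spectrum_of_bound hp hH (c := Q / (|t| - 2))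
    (div_nonneg hQ0 (by linarith)) (fun u => ?_) hspec
  set f : L2Z := H u - cos k • u with hf
  have hfv : ∀ m, f m = (p m : ℝ) / (p m + p (m - 1)) * u (m + 1)
      + (p (m - 1) : ℝ) / (p m + p (m - 1)) * u (m - 1) - cos k * u m := fun m => by
    rw [← hH]; rfl
  set w : ℤ → Plane := fun m => WithLp.toLp 2 ![√(p (m - 1)) * u m, √(p (m - 1)) * u (m - 1)]
    with hw
  have hw0 : ∀ m, w m 0 = √(p (m - 1)) * u m := fun m => rfl
  have hw1 : ∀ m, w m 1 = √(p (m - 1)) * u (m - 1) := fun m => rfl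
  have hstep : ∀ m, ‖w (m + 1) - act (S m) (w m)‖ ≤ D * |f m| := by
    intro m
    have a1 := hp1 m
    have a2 := hp1 (m - 1)
    have b1 := hsqrt1 m
    have b2 := hsqrt1 (m - 1)
    have e1 : (w (m + 1) - act (S m) (w m)) 1 = 0 := by
      rw [PiLp.sub_apply, hw1, act_siteSL_one, hw0, add_sub_cancel_right,
        Real.sqrt_div (by positivity)]
      field_simp
      ring
    have e0 : (w (m + 1) - act (S m) (w m)) 0 = √(p m) * (((p m : ℝ) + p (m - 1)) / p m) * f m := by
      rw [PiLp.sub_apply, hw0, act_siteSL_zero, hw0, hw1, add_sub_cancel_right,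
        Real.sqrt_div (by positivity), hfv]
      field_simp
      ring
    rw [EuclideanSpace.norm_eq, Fin.sum_univ_two, e1, e0, norm_zero, zero_pow two_ne_zero, add_zero,
      Real.sqrt_sq (norm_nonneg _), norm_mul, Real.norm_eq_abs (f m)]
    refine mul_le_mul_of_nonneg_right ?_ (abs_nonneg _)
    rw [Real.norm_of_nonneg (by positivity), hD]
    refine mul_le_mul (Real.sqrt_le_sqrt (hl m)) ?_ (by positivity) (by positivity)
    exact (div_le_self (by positivity) a1).trans (add_le_add (hl _) (hl _))
  have hpt : ∀ m, |t| * |u (m + N)|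
      ≤ |u (m + (N + N : ℕ))| + |u m| + C * D * ∑ i ∈ Finset.range (N + N), |f (m + i)| := by
    intro m
    have h1 := hC hstep m
    have q1 : p (m + N - 1) = p (m - 1) := by rw [← hper (m - 1)]; congr 1; ring
    have q2 : p (m + N + N - 1) = p (m - 1) := by
      rw [← q1, ← hper (m + N - 1)]; congr 1; ring
    have h2 : |(w (m + N + N) - t • w (m + N) + w m) 0|
        ≤ ‖w (m + N + N) - t • w (m + N) + w m‖ :=
      PiLp.norm_apply_le (w (m + N + N) - t • w (m + N) + w m) 0
    have e : (w (m + N + N) - t • w (m + N) + w m) 0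
        = √(p (m - 1)) * (u (m + N + N) - t * u (m + N) + u m) := by
      rw [PiLp.add_apply, PiLp.sub_apply, PiLp.smul_apply, hw0, hw0, hw0, q1, q2, smul_eq_mul]
      ring
    rw [e, abs_mul, abs_of_pos (a := √(p (m - 1) : ℝ)) (by linarith [hsqrt1 (m - 1)])] at h2
    have h3 := mul_le_mul_of_nonneg_right (hsqrt1 (m - 1))
      (abs_nonneg (u (m + N + N) - t * u (m + N) + u m))
    rw [← Finset.mul_sum, ← mul_assoc] at h1
    have h4 : |t * u (m + N)| ≤ |u (m + N + N)| + |u m| + |u (m + N + N) - t * u (m + N) + u m| := by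
      have e4 : t * u (m + N)
          = u (m + N + N) + u m - (u (m + N + N) - t * u (m + N) + u m) := by ring
      conv_lhs => rw [e4]
      exact (abs_sub _ _).trans (add_le_add_left (abs_add_le _ _) _)
    rw [abs_mul] at h4
    rw [Nat.cast_add, ← add_assoc]
    linarith
  obtain ⟨a, ha, han⟩ := exists_abs_translate u N
  obtain ⟨b, hb, hbn⟩ := exists_abs_translate u (N + N : ℕ)
  obtain ⟨d, hd, hdn⟩ := exists_abs_translate u 0
  choose g hg hgn using exists_abs_translate f
  have hnorm : ‖|t| • a‖ ≤ ‖b + d + (C * D) • ∑ i ∈ Finset.range (N + N), g i‖ := by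
    refine lp.norm_mono two_ne_zero fun m => ?_
    have h0 : 0 ≤ ∑ i ∈ Finset.range (N + N), |f (m + i)| :=
      Finset.sum_nonneg fun _ _ => abs_nonneg _
    have e2 : (b + d + (C * D) • ∑ i ∈ Finset.range (N + N), g i : L2Z) m
        = |u (m + (N + N : ℕ))| + |u m| + C * D * ∑ i ∈ Finset.range (N + N), |f (m + i)| := by
      rw [lp.coeFn_add, lp.coeFn_add, lp.coeFn_smul, lp.coeFn_sum, Pi.add_apply, Pi.add_apply,
        Pi.smul_apply, Finset.sum_apply, hb, hd, add_zero, smul_eq_mul]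
      simp only [hg]
    rw [e2, lp.coeFn_smul, Pi.smul_apply, ha, smul_eq_mul,
      Real.norm_of_nonneg (by positivity), Real.norm_of_nonneg (by positivity)]
    exact hpt m
  have hsum : ‖∑ i ∈ Finset.range (N + N), g i‖ ≤ (N + N : ℕ) * ‖f‖ := by
    refine (norm_sum_le _ _).trans (le_of_eq ?_)
    simp [hgn]
  rw [norm_smul, Real.norm_eq_abs, abs_abs, han] at hnorm
  have h5 : ‖b + d + (C * D) • ∑ i ∈ Finset.range (N + N), g i‖
      ≤ ‖u‖ + ‖u‖ + C * D * ((N + N : ℕ) * ‖f‖) := by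
    refine (norm_add_le _ _).trans (add_le_add ((norm_add_le _ _).trans_eq (by rw [hbn, hdn])) ?_)
    rw [norm_smul, Real.norm_of_nonneg (by positivity)]
    exact mul_le_mul_of_nonneg_left hsum (by positivity)
  rw [div_mul_eq_mul_div, le_div_iff₀ (by linarith)]
  have h6 : C * D * ((N + N : ℕ) * ‖f‖) = Q * ‖f‖ := by rw [hQ]; ring
  linarith

end PeriodicSpectrum

/-- Suppose `μ` is a shift-ergodic Borel probability measure on `Ω` with a local
product structure and full support, and the shift has a fixed point in `Ω`.  Then
`{k ∈ (0,π) : k ≠ π/2, L(A^{(k)},μ) = 0}`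
`  = ⋂_{p ∈ Per(T)} {k ∈ (0,π) : k ≠ π/2, cos k ∈ σ(H̃_p)}`. -/
theorem statement6 (ℓ : ℕ) (hℓ : 1 < ℓ) (W : Set (ℕ × ℕ))
    (μ : Measure (ℤ → ℕ)) [IsProbabilityMeasure μ]
    (hconc : μ (SFT ℓ W)ᶜ = 0)
    (herg : Ergodic shift μ)
    (hlps : LocalProductStructure ℓ W μ)
    (hsupp : FullSupport ℓ W μ)
    (hfix : ∃ p ∈ SFT ℓ W, shift p = p)
    (H : (ℤ → ℕ) → (L2Z →L[ℝ] L2Z))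
    (hH : ∀ p, IsJacobiOp p (H p))
    (L : ℝ → ℝ)
    (hL : ∀ k : ℝ,
      Tendsto (fun n : ℕ => (1 / (n : ℝ)) * ∫ ω, Real.log ‖AIter k ω n‖ ∂μ)
        atTop (𝓝 (L k))) :
    {k ∈ Ioo (0 : ℝ) π | k ≠ π / 2 ∧ L k = 0} =
      ⋂ p ∈ {p ∈ SFT ℓ W | ∃ n : ℕ, 1 ≤ n ∧ shift^[n] p = p},
        {k ∈ Ioo (0 : ℝ) π | k ≠ π / 2 ∧ Real.cos k ∈ spectrum ℝ (H p)} := by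
  have hspec : ∀ {k : ℝ} {p : ℤ → ℕ} {n : ℕ}, p ∈ SFT ℓ W → 1 ≤ n → shift^[n] p = p →
      (Real.cos k ∈ spectrum ℝ (H p) ↔ |(AIter k p n).trace| ≤ 2) := by
    intro k p n hp hn hpn
    have hper : ∀ m, p (m + n) = p m := fun m => by
      rw [← shift_iterate_apply n p, hpn]
    exact ⟨abs_trace_le_of_cos_mem_spectrum (fun m => (hp.1 m).1) (fun m => (hp.1 m).2) hper (hH p),
      cos_mem_spectrum_of_abs_trace_le (fun m => (hp.1 m).1) (fun m => (hp.1 m).2) hn hper (hH p)⟩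
  ext k
  simp only [mem_iInter, and_imp, forall_exists_index, mem_ofPred_eq]
  constructor
  · rintro ⟨hk, hk2, hLk⟩ p hp n hn hpn
    refine ⟨hk, hk2, (hspec hp hn hpn).2 ?_⟩
    exact abs_trace_le_two_of_growth_zero hconc herg hlps hsupp hfix hk hk2 (hLk ▸ hL k) hp hpn
  · intro h
    obtain ⟨q, hq, hqfix⟩ := hfix
    obtain ⟨hk, hk2, -⟩ := h q hq 1 le_rfl hqfix
    refine ⟨hk, hk2, tendsto_nhds_unique (hL k) ?_⟩
    exact tendsto_growth_zero_of_periodic hconc herg hsupp ⟨q, hq, hqfix⟩ hk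
      fun p hp n hn hpn => (hspec hp hn hpn).1 (h p hp n hn hpn).2.2
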